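/- arXiv:1804.09527 — 3 statements merged into one kernel-verified Lean document; each statement's English description precedes it below -/
import Mathlib

section
/- Let R be a semilocal Dedekind domain with fraction field F. Let A be a hereditary R-order such that F ⊗_R A is a central simple F-algebra, and let A' be any R-order. If there exist an F-algebra isomorphism F ⊗_R A ≅ F ⊗_R A' and a faithfully flat étale R-algebra S together with an S-algebra isomorphism S ⊗_R A ≅ S ⊗_R A', then A and A' are isomorphic as R-algebras. -/
open scoped TensorProduct

universe u

/-!
Put `B = F ⊗[R] A`, and use the generic isomorphism to regard both `A` and `A'` as `R`-lattices
in `B`. It suffices to find a unit `c` of `B` with `c A' = A c`. As `R` is a semilocal principal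
ideal domain, it suffices to find such a unit over each localization `P` of `R` at a maximal ideal:
the local units are approximated simultaneously, by the Chinese remainder theorem.

By unramifiedness, a suitable localization of `S` is a discrete valuation ring `T` over `P` with the
same uniformizer `π`, and the theorem of Skolem and Noether turns the isomorphism over `S` into a
unit `b` over `Frac T` with `b A' = A b` over `T`. Let `J` and `J'` be the radicals of `A` and `A'`;
since `T` is unramified over `P`, their formation commutes with the extension from `P` to `T`. As
`A` is hereditary, `J` has an inverse `K`.

Over `T`, a two-sided ideal of `A` which commutes with `J` and contains a power of `π` is a power of
`J`: an idempotent modulo `J` generating such an ideal lifts to an element of `A` that is central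
modulo a high power of `π`, which by Artin–Rees is a scalar modulo `π`. Now a sum of finitely many
`K ^ i A A' J' ^ i`, which is defined over `P`, becomes over `T` such an ideal times `b`, up to a
power of `π`. Hence `A b` is the extension to `T` of a left `A`-lattice `I` over `P`. A Nakayama
argument, based on the injectivity of surjective endomorphisms of finite `T`-modules, yields
`I = A c` for a unit `c` of `B`. Then `c` is `b` up to a unit of `A` over `T`, so `c A' = A c` holds
over `T`, and therefore over `P`.
-/

namespace HereditaryOrder

open scoped Pointwise

universe v

section Lattices

variable {R B : Type*} [CommRing R] [Ring B] [Algebra R B]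

/-- The left quotient `{b | X b ⊆ Y}` of two lattices; for an order `A`, `leftQuotient X A` is the
`A`-dual of the left `A`-lattice `X`. -/
def leftQuotient (X Y : Submodule R B) : Submodule R B where
  carrier := {b | ∀ x ∈ X, x * b ∈ Y}
  add_mem' ha hb x hx := by rw [mul_add]; exact Y.add_mem (ha x hx) (hb x hx)
  zero_mem' x _ := by rw [mul_zero]; exact Y.zero_mem
  smul_mem' r b hb x hx := by rw [mul_smul_comm]; exact Y.smul_mem r (hb x hx)

theorem mul_leftQuotient_le (X Y : Submodule R B) : X * leftQuotient X Y ≤ Y :=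
  Submodule.mul_le.2 fun x hx _ hb => hb x hx

theorem le_leftQuotient_iff {X Y Z : Submodule R B} : Z ≤ leftQuotient X Y ↔ X * Z ≤ Y :=
  ⟨fun h => (mul_le_mul_right h X).trans (mul_leftQuotient_le X Y),
    fun h _ hz _ hx => h (Submodule.mul_mem_mul hx hz)⟩

theorem sub_mul_mem_mul {M J X : Submodule R B} {e y : B} (he : ∀ m ∈ M, m - e * m ∈ J)
    (hy : y ∈ M * X) : y - e * y ∈ J * X := by
  induction hy using Submodule.mul_induction_on' with
  | mem_mul_mem m hm x hx =>
    rw [← mul_assoc, ← sub_mul]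
    exact Submodule.mul_mem_mul (he m hm) hx
  | add x _ y _ hx hy =>
    rw [mul_add, add_sub_add_comm]
    exact add_mem hx hy

theorem smul_mem_of_mem_isUnit {r : R} (hr : IsUnit (algebraMap R B r)) {X : Submodule R B} {x : B}
    (hx : r • x ∈ r • X) : x ∈ X := by
  obtain ⟨y, hy, hyx⟩ := (Submodule.mem_smul_pointwise_iff_exists _ _ _).1 hx
  rw [Algebra.smul_def, Algebra.smul_def] at hyx
  rwa [← hr.mul_left_cancel hyx]

theorem le_of_one_mem {A X : Submodule R B} (hX : A * X ≤ X) (h1 : (1 : B) ∈ X) : A ≤ X :=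
  (le_mul_of_one_le_right' (Submodule.one_le.2 h1)).trans hX

theorem pow_succ_le {A X : Submodule R B} (hA : A * A ≤ A) (hX : X ≤ A) (n : ℕ) :
    X ^ (n + 1) ≤ A := by
  induction n with
  | zero => simpa using hX
  | succ n ih => exact pow_succ X (n + 1) ▸ (mul_le_mul' ih hX).trans hA

/-- The lattice `X` is a two-sided ideal of the order `A`. -/
structure IsTwoSidedIdeal (A X : Submodule R B) : Prop where
  le : X ≤ A
  order_mul_le : A * X ≤ X
  mul_order_le : X * A ≤ X

namespace IsTwoSidedIdeal

variable {A X Y : Submodule R B}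

theorem sup (hX : IsTwoSidedIdeal A X) (hY : IsTwoSidedIdeal A Y) : IsTwoSidedIdeal A (X ⊔ Y) where
  le := sup_le hX.le hY.le
  order_mul_le := by rw [Submodule.mul_sup]; exact sup_le_sup hX.order_mul_le hY.order_mul_le
  mul_order_le := by rw [Submodule.sup_mul]; exact sup_le_sup hX.mul_order_le hY.mul_order_le

theorem pow_le (hX : IsTwoSidedIdeal A X) (n : ℕ) : X ^ (n + 1) ≤ X :=
  pow_succ_le ((mul_le_mul_left hX.le X).trans hX.order_mul_le) le_rfl n

theorem pow (hX : IsTwoSidedIdeal A X) (n : ℕ) : IsTwoSidedIdeal A (X ^ (n + 1)) where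
  le := (hX.pow_le n).trans hX.le
  order_mul_le := by
    rw [pow_succ', ← mul_assoc]
    exact mul_le_mul_left hX.order_mul_le _
  mul_order_le := by
    rw [pow_succ, mul_assoc]
    exact mul_le_mul_right hX.mul_order_le _

theorem le_sup_pow (hX : IsTwoSidedIdeal A X) (hA : A * A = A) (hY : Y ≤ A) (h : A ≤ X ⊔ Y)
    (n : ℕ) : A ≤ X ⊔ Y ^ (n + 1) := by
  induction n with
  | zero => simpa using h
  | succ n ih =>
    calc A = A * A := hA.symm
      _ ≤ (X ⊔ Y ^ (n + 1)) * (X ⊔ Y) := mul_le_mul' ih h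
      _ = (X ⊔ Y ^ (n + 1)) * X ⊔ (X * Y ⊔ Y ^ (n + 1 + 1)) := by
        rw [Submodule.mul_sup (X ⊔ Y ^ (n + 1)), Submodule.sup_mul _ _ Y, ← pow_succ]
      _ ≤ X ⊔ Y ^ (n + 1 + 1) :=
        sup_le
          (((mul_le_mul_left (sup_le hX.le (pow_succ_le hA.le hY n)) X).trans
            hX.order_mul_le).trans le_sup_left)
          (sup_le_sup_right ((mul_le_mul_right hY X).trans hX.mul_order_le) _)

end IsTwoSidedIdeal

/-- `A` is an order, and `J` is an ideal of `A` which plays the role of the radical of `A` at `π`: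
it contains `π`, is nilpotent modulo `π`, and `A / J` is semisimple. Semisimplicity is encoded by
the existence of one-sided identity elements in one-sided ideals, modulo `J`. -/
structure IsOrderWithRadical (π : R) (A J : Submodule R B) : Prop extends
    IsTwoSidedIdeal A J where
  one_le : 1 ≤ A
  mul_le : A * A ≤ A
  smul_le : π • A ≤ J
  exists_pow_le : ∃ n : ℕ, J ^ (n + 1) ≤ π • A
  exists_right_identity : ∀ M ≤ A, A * M ≤ M → ∃ e ∈ M, ∀ m ∈ M, m - m * e ∈ J
  exists_left_identity : ∀ M ≤ A, M * A ≤ M → ∃ e ∈ M, ∀ m ∈ M, m - e * m ∈ J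

/-- `K` is a two-sided inverse of the ideal `J` of the order `A`. -/
structure IsInverse (A J K : Submodule R B) : Prop where
  mul_inv : J * K = A
  inv_mul : K * J = A
  order_mul : A * K = K
  mul_order : K * A = K

namespace IsOrderWithRadical

variable {π : R} {A J : Submodule R B} (h : IsOrderWithRadical π A J)
include h

theorem le_order_mul (X : Submodule R B) : X ≤ A * X := le_mul_of_one_le_left' h.one_le

theorem le_mul_order (X : Submodule R B) : X ≤ X * A := le_mul_of_one_le_right' h.one_le

theorem mul_self : A * A = A := le_antisymm h.mul_le (h.le_order_mul A)

theorem mul_radical : A * J = J := le_antisymm h.order_mul_le (h.le_order_mul J)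

theorem radical_mul : J * A = J := le_antisymm h.mul_order_le (h.le_mul_order J)

theorem mul_pow_succ (n : ℕ) : A * J ^ (n + 1) = J ^ (n + 1) := by
  rw [pow_succ', ← mul_assoc, h.mul_radical]

theorem pow_succ_mul (n : ℕ) : J ^ (n + 1) * A = J ^ (n + 1) := by
  rw [pow_succ, mul_assoc, h.radical_mul]

theorem pow_succ_le_pow_succ (n : ℕ) : J ^ (n + 1 + 1) ≤ J ^ (n + 1) := by
  rw [pow_succ J]
  exact (mul_le_mul_right h.le _).trans (h.pow_succ_mul n).le

theorem le_sup_smul {M : Submodule R B} (hM : IsTwoSidedIdeal A M) (hMJ : A ≤ M ⊔ J) :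
    A ≤ M ⊔ π • A := by
  obtain ⟨n, hn⟩ := h.exists_pow_le
  exact (hM.le_sup_pow h.mul_self h.le hMJ n).trans (sup_le_sup_left hn M)

-- The equation `I * J = J` propagates down the powers of `J` to give `π • A ≤ I * (π • A)`.
theorem le_of_mul_radical_eq (hπ : IsUnit (algebraMap R B π)) {I : Submodule R B} (hIA : I ≤ A)
    (hI : I * A = I) (hIJ : I * J = J) : A ≤ I := by
  obtain ⟨e, heI, he⟩ := h.exists_left_identity I hIA hI.le
  have hdescend : ∀ X X' : Submodule R B, X' ≤ X → J * X ≤ X' → X ≤ I * X → X' ≤ I * X' := by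
    intro X X' hX' hJX hX x hx
    have hJ : J * X ≤ I * X' := by
      rw [← hIJ, mul_assoc]
      exact mul_le_mul_right hJX I
    rw [← sub_add_cancel x (e * x)]
    exact add_mem (hJ (sub_mul_mem_mul he (hX (hX' hx)))) (Submodule.mul_mem_mul heI hx)
  have hpow : ∀ n : ℕ, J ^ (n + 1) ⊔ π • A ≤ I * (J ^ (n + 1) ⊔ π • A) := by
    intro n
    induction n with
    | zero => rw [zero_add, pow_one, sup_eq_left.2 h.smul_le, hIJ]
    | succ n ih =>
      refine hdescend _ _ (sup_le_sup_right (h.pow_succ_le_pow_succ n) _) ?_ ih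
      rw [Submodule.mul_sup, ← pow_succ', mul_smul_comm, h.radical_mul]
      exact sup_le_sup_left (smul_le_smul_left π h.le) _
  obtain ⟨n, hn⟩ := h.exists_pow_le
  have hπA := hpow n
  rw [sup_eq_right.2 hn, mul_smul_comm, hI] at hπA
  exact fun a ha => smul_mem_of_mem_isUnit hπ (hπA (Submodule.smul_mem_pointwise_smul _ _ _ ha))

-- The conductor `C = {b | O b ⊆ A}` satisfies `C + J = A`, so it is all of `A`.
theorem overorder_le
    (hproj : ∀ X ≤ A, A * X ≤ X → π • A ≤ X → 1 ≤ leftQuotient X A * X)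
    {O : Submodule R B} (hAO : A ≤ O) (hOO : O * O ≤ O) (hJO : J * O ≤ J) (hπO : π • O ≤ A) :
    O ≤ A := by
  have hA_O : A * O ≤ O := (mul_le_mul_left hAO O).trans hOO
  have hO_A : O * A ≤ O := (mul_le_mul_right hAO O).trans hOO
  set Q := leftQuotient (π • O) A
  have hOQ : O * (π • Q) ≤ A := by
    rw [mul_smul_comm, ← smul_mul_assoc]
    exact mul_leftQuotient_le _ _
  have h1 : (1 : B) ∈ (π • Q) * O := by
    rw [smul_mul_assoc, ← mul_smul_comm]
    refine Submodule.one_le.1 (hproj (π • O) hπO ?_ (smul_le_smul_left π hAO))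
    rw [mul_smul_comm]
    exact smul_le_smul_left π hA_O
  have hC : IsTwoSidedIdeal A (π • Q) := by
    refine ⟨(le_mul_of_one_le_left' (h.one_le.trans hAO)).trans hOQ, ?_, ?_⟩
    · rw [mul_smul_comm]
      refine smul_le_smul_left π (le_leftQuotient_iff.2 ?_)
      rw [← mul_assoc, smul_mul_assoc]
      exact (mul_le_mul_left (smul_le_smul_left π hO_A) Q).trans (mul_leftQuotient_le _ _)
    · rw [smul_mul_assoc]
      refine smul_le_smul_left π (le_leftQuotient_iff.2 ?_)
      rw [← mul_assoc]
      exact (mul_le_mul_left (mul_leftQuotient_le _ _) A).trans h.mul_le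
  have hCJ : A ≤ π • Q ⊔ J := by
    have hsup := hC.sup h.toIsTwoSidedIdeal
    obtain ⟨e, he, he'⟩ := h.exists_left_identity _ hsup.le hsup.mul_order_le
    have h1e : 1 - e ∈ J := by
      simpa using hJO (sub_mul_mem_mul (fun m hm => he' m (Submodule.mem_sup_left hm)) h1)
    exact le_of_one_mem hsup.order_mul_le
      (by simpa using add_mem he (Submodule.mem_sup_right h1e))
  calc O ≤ O * A := h.le_mul_order O
    _ ≤ O * (π • Q ⊔ π • A) := mul_le_mul_right (h.le_sup_smul hC hCJ) O
    _ = O * (π • Q) ⊔ π • (O * A) := by rw [Submodule.mul_sup, mul_smul_comm _ O A]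
    _ ≤ A := sup_le hOQ ((smul_le_smul_left π hO_A).trans hπO)

theorem exists_isInverse (hπ : IsUnit (algebraMap R B π))
    (hproj : ∀ X ≤ A, A * X ≤ X → π • A ≤ X → 1 ≤ leftQuotient X A * X) :
    ∃ K, IsInverse A J K := by
  set K := leftQuotient J A
  have hAK : A * K = K := by
    refine le_antisymm (le_leftQuotient_iff.2 ?_) (h.le_order_mul K)
    rw [← mul_assoc, h.radical_mul]
    exact mul_leftQuotient_le J A
  have hKA : K * A = K := by
    refine le_antisymm (le_leftQuotient_iff.2 ?_) (h.le_mul_order K)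
    rw [← mul_assoc]
    exact (mul_le_mul_left (mul_leftQuotient_le J A) A).trans h.mul_le
  have h1KJ : 1 ≤ K * J := hproj J h.le h.order_mul_le h.smul_le
  have hJK_le : J * K ≤ A := mul_leftQuotient_le J A
  have hJKJ : J * K * J = J := by
    refine le_antisymm ((mul_le_mul_left hJK_le J).trans h.order_mul_le) ?_
    rw [mul_assoc]
    exact le_mul_of_one_le_right' h1KJ
  have hJK : J * K = A :=
    le_antisymm hJK_le (h.le_of_mul_radical_eq hπ hJK_le (by rw [mul_assoc, hKA]) hJKJ)
  have hAKJ : A ≤ K * J := by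
    refine le_of_one_mem ?_ (Submodule.one_le.1 h1KJ)
    rw [← mul_assoc, hAK]
  refine ⟨K, hJK, le_antisymm (h.overorder_le hproj hAKJ ?_ ?_ ?_) hAKJ, hAK, hKA⟩
  · rw [mul_assoc, ← mul_assoc J, hJK, h.mul_radical]
  · rw [← mul_assoc, hJK, h.mul_radical]
  · calc π • (K * J) = (π • A) * (K * J) := by rw [smul_mul_assoc, ← mul_assoc, hAK]
      _ ≤ J * (K * J) := mul_le_mul_left h.smul_le _
      _ ≤ A := by rw [← mul_assoc, hJKJ]; exact h.le

end IsOrderWithRadical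

end Lattices

section TwoSidedIdeals

theorem pow_mul_pow_le_pow {α : Type*} [Monoid α] [Preorder α] [MulLeftMono α] [MulRightMono α]
    {a b j : α} (hj : Commute a j) (hab : a * b ≤ j) (n : ℕ) : a ^ n * b ^ n ≤ j ^ n := by
  induction n with
  | zero => simp
  | succ n ih =>
    calc a ^ (n + 1) * b ^ (n + 1) = a * (a ^ n * b ^ n) * b := by
          rw [pow_succ' a, pow_succ b]; simp only [mul_assoc]
      _ ≤ a * j ^ n * b := mul_le_mul_left (mul_le_mul_right ih a) b
      _ = j ^ n * (a * b) := by rw [(hj.pow_right n).eq, mul_assoc]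
      _ ≤ j ^ n * j := mul_le_mul_right hab _
      _ = j ^ (n + 1) := (pow_succ j n).symm

theorem pow_mul_pow_le_pow' {α : Type*} [Monoid α] [Preorder α] [MulLeftMono α] [MulRightMono α]
    {a b j : α} (hj : Commute a j) (hba : b * a ≤ j) (n : ℕ) : b ^ n * a ^ n ≤ j ^ n := by
  induction n with
  | zero => simp
  | succ n ih =>
    calc b ^ (n + 1) * a ^ (n + 1) = b * (b ^ n * a ^ n) * a := by
          rw [pow_succ' b, pow_succ a]; simp only [mul_assoc]
      _ ≤ b * j ^ n * a := mul_le_mul_left (mul_le_mul_right ih b) a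
      _ = b * a * j ^ n := by rw [mul_assoc, ← (hj.pow_right n).eq, mul_assoc]
      _ ≤ j * j ^ n := mul_le_mul_left hba _
      _ = j ^ (n + 1) := (pow_succ' j n).symm

variable {R B : Type*} [CommRing R] [Ring B] [Algebra R B]

theorem smul_pow_le {A : Submodule R B} (h1 : 1 ≤ A) (hA : A * A ≤ A) (r : R) (k : ℕ) :
    (r • A) ^ k ≤ r ^ k • A := by
  rw [smul_pow]
  refine smul_le_smul_left _ ?_
  cases k with
  | zero => simpa using h1
  | succ k => exact pow_succ_le hA le_rfl k

theorem IsTwoSidedIdeal.commutator_mem {A X Y Z : Submodule R B} (hX : IsTwoSidedIdeal A X)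
    (hXY : X * Y ≤ Z) (hYX : Y * X ≤ Z) {x y a : B} (hx : x ∈ X)
    (hy : y ∈ Y) (hxy : x + y = 1) (ha : a ∈ A) : x * a - a * x ∈ Z := by
  have hcomm : x * a - a * x = x * a * y - y * (a * x) := by
    rw [← eq_sub_iff_add_eq'] at hxy
    rw [hxy]
    noncomm_ring
  rw [hcomm]
  exact Z.sub_mem
    (hXY (Submodule.mul_mem_mul (hX.mul_order_le (Submodule.mul_mem_mul hx ha)) hy))
    (hYX (Submodule.mul_mem_mul hy (hX.order_mul_le (Submodule.mul_mem_mul ha hx))))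

theorem exists_comap_pow_smul_le [IsNoetherianRing R] {M N : Type*} [AddCommGroup M] [Module R M]
    [AddCommGroup N] [Module R N] [Module.Finite R N] (I : Ideal R) (d : M →ₗ[R] N) :
    ∃ k : ℕ, (I ^ k • ⊤ : Submodule R N).comap d ≤ LinearMap.ker d ⊔ I • ⊤ := by
  obtain ⟨k, hk⟩ := Ideal.exists_pow_inf_eq_pow_smul I (LinearMap.range d)
  refine ⟨k + 1, fun x hx => ?_⟩
  have hdx : d x ∈ (I • ⊤ : Submodule R M).map d := by
    rw [Submodule.map_smul'', Submodule.map_top]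
    have hmem : d x ∈ I ^ (k + 1) • ⊤ ⊓ LinearMap.range d := ⟨hx, x, rfl⟩
    rw [hk (k + 1) (Nat.le_succ k), Nat.add_sub_cancel_left, pow_one] at hmem
    exact Submodule.smul_mono le_rfl inf_le_right hmem
  obtain ⟨y, hy, hyx⟩ := hdx
  rw [← sub_add_cancel x y]
  exact Submodule.add_mem_sup (by rw [LinearMap.mem_ker, map_sub, hyx, sub_self]) hy

/-- Artin–Rees for the map taking `e` to its commutators with finitely many generators of `A`. -/
theorem exists_forall_commutator_mem_imp [IsNoetherianRing R] (π : R) {A : Submodule R B}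
    (hfg : A.FG) (hA : A * A ≤ A)
    (hcen : ∀ x ∈ A, x ∈ Set.centralizer (A : Set B) → x ∈ (1 : Submodule R B)) :
    ∃ k : ℕ, ∀ e ∈ A, (∀ a ∈ A, e * a - a * e ∈ π ^ k • A) → e ∈ (1 : Submodule R B) ⊔ π • A := by
  obtain ⟨S, hS⟩ := hfg
  have hSA : ∀ s ∈ S, s ∈ A := fun s hs => hS ▸ Submodule.subset_span hs
  have : Module.Finite R A := Module.Finite.of_fg ⟨S, hS⟩
  let d : A →ₗ[R] (S → A) := LinearMap.pi fun s =>
    ((LinearMap.mulRight R s.1 - LinearMap.mulLeft R s.1).domRestrict A).codRestrict A fun x =>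
      A.sub_mem (hA (Submodule.mul_mem_mul x.2 (hSA _ s.2)))
        (hA (Submodule.mul_mem_mul (hSA _ s.2) x.2))
  obtain ⟨k, hk⟩ := exists_comap_pow_smul_le (Ideal.span {π}) d
  simp only [Ideal.span_singleton_pow, Submodule.ideal_span_singleton_smul] at hk
  refine ⟨k, fun e he hcomm => ?_⟩
  have hde : d ⟨e, he⟩ ∈ π ^ k • (⊤ : Submodule R (S → A)) := by
    choose z hzA hz using fun s : S =>
      (Submodule.mem_smul_pointwise_iff_exists _ _ _).1 (hcomm s.1 (hSA _ s.2))
    exact ⟨fun s => ⟨z s, hzA s⟩, trivial, funext fun s => Subtype.ext (hz s)⟩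
  obtain ⟨z, hz, _, ⟨y, -, rfl⟩, hzy⟩ := Submodule.mem_sup.1 (hk hde)
  have hcent : (z : B) ∈ Set.centralizer (A : Set B) := by
    suffices h : A ≤ LinearMap.ker (LinearMap.mulRight R (z : B) - LinearMap.mulLeft R (z : B)) from
      fun a ha => sub_eq_zero.1 (h ha)
    refine hS.ge.trans (Submodule.span_le.2 fun s hs => ?_)
    exact sub_eq_zero.2 (sub_eq_zero.1 (congrArg Subtype.val (congrFun hz ⟨s, hs⟩))).symm
  rw [show e = z + π • (y : B) from (congrArg Subtype.val hzy).symm]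
  exact Submodule.add_mem_sup (hcen _ z.2 hcent) (Submodule.smul_mem_pointwise_smul _ _ _ y.2)

namespace IsOrderWithRadical

variable {π : R} {A J : Submodule R B} (h : IsOrderWithRadical π A J)
include h

theorem le_radical_of_pow_le {X : Submodule R B} (hX : X ≤ A) (hAX : A * X ≤ X) (n : ℕ)
    (hn : X ^ (n + 1) ≤ J) : X ≤ J := by
  obtain ⟨e, he, he'⟩ := h.exists_right_identity X hX hAX
  have hsq : X ≤ J ⊔ X * X := fun x hx => by
    rw [← sub_add_cancel x (x * e)]
    exact Submodule.add_mem_sup (he' x hx) (Submodule.mul_mem_mul hx he)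
  have hle : ∀ k : ℕ, X ≤ J ⊔ X ^ (k + 1) := by
    intro k
    induction k with
    | zero => simp
    | succ k ih =>
      refine hsq.trans (sup_le le_sup_left ((mul_le_mul_right ih X).trans ?_))
      rw [Submodule.mul_sup, ← pow_succ']
      exact sup_le_sup_right ((mul_le_mul_left hX J).trans h.order_mul_le) _
  exact (hle n).trans (sup_le le_rfl hn)

theorem exists_pow_le_pow_smul (k : ℕ) : ∃ n : ℕ, J ^ (n + 1) ≤ π ^ k • A := by
  obtain ⟨t, ht⟩ := h.exists_pow_le
  refine ⟨(t + 1) * k + t, ?_⟩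
  rw [add_assoc, ← mul_add_one, pow_mul]
  calc (J ^ (t + 1)) ^ (k + 1) ≤ (π • A) ^ (k + 1) := pow_le_pow_left' ht _
    _ ≤ π ^ (k + 1) • A := smul_pow_le h.one_le h.mul_le π _
    _ = π ^ k • (π • A) := by rw [smul_smul, pow_succ]
    _ ≤ π ^ k • A := smul_le_smul_left _ (h.smul_le.trans h.le)

theorem exists_complement {M : Submodule R B} (hM : IsTwoSidedIdeal A M) :
    ∃ N, IsTwoSidedIdeal A N ∧ J ≤ N ∧ M * N ≤ J ∧ N * M ≤ J ∧ A ≤ M ⊔ N := by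
  set N := leftQuotient M J ⊓ A
  have hMN : M * N ≤ J := le_leftQuotient_iff.1 inf_le_left
  have hN : IsTwoSidedIdeal A N := by
    refine ⟨inf_le_right, le_inf (le_leftQuotient_iff.2 ?_) ?_,
      le_inf (le_leftQuotient_iff.2 ?_) ?_⟩
    · rw [← mul_assoc]
      exact (mul_le_mul_left hM.mul_order_le N).trans hMN
    · exact (mul_le_mul_right inf_le_right A).trans h.mul_le
    · rw [← mul_assoc]
      exact (mul_le_mul_left hMN A).trans h.mul_order_le
    · exact (mul_le_mul_left inf_le_right A).trans h.mul_le
  refine ⟨N, hN, ?_, hMN, h.le_radical_of_pow_le ?_ ?_ 1 ?_, ?_⟩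
  · exact le_inf (le_leftQuotient_iff.2 ((mul_le_mul_left hM.le J).trans h.order_mul_le)) h.le
  · exact (mul_le_mul' hN.le hM.le).trans h.mul_le
  · rw [← mul_assoc]
    exact mul_le_mul_left hN.order_mul_le M
  · calc (N * M) ^ (1 + 1) = N * (M * N) * M := by
          rw [pow_two]; simp only [mul_assoc]
      _ ≤ A * J * A := mul_le_mul' (mul_le_mul' hN.le hMN) hM.le
      _ ≤ J := by rw [h.mul_radical, h.radical_mul]
  · obtain ⟨e, he, he'⟩ := h.exists_right_identity M hM.le hM.order_mul_le
    have h1A := Submodule.one_le.1 h.one_le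
    have h1e : 1 - e ∈ N :=
      ⟨fun m hm => by rw [mul_sub, mul_one]; exact he' m hm, A.sub_mem h1A (hM.le he)⟩
    refine le_of_one_mem ?_ (add_sub_cancel e 1 ▸ Submodule.add_mem_sup he h1e)
    rw [Submodule.mul_sup]
    exact sup_le_sup hM.order_mul_le hN.order_mul_le

/-- If `R` is local with maximal ideal `(π)` and the centre of `A` consists of scalars, then `M`
is trivial: the idempotent of `A / J` generating `M` lifts to an element of `A` which is central
modulo a high power of `π`, hence a scalar modulo `π`. -/
theorem le_radical_or_le [IsNoetherianRing R] (hloc : ∀ r : R, IsUnit r ∨ π ∣ r) (hA : A.FG)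
    (hcen : ∀ x ∈ A, x ∈ Set.centralizer (A : Set B) → x ∈ (1 : Submodule R B))
    {M : Submodule R B} (hM : IsTwoSidedIdeal A M) (hJM : J ≤ M) (hcomm : Commute M J) :
    M ≤ J ∨ A ≤ M := by
  obtain ⟨N, hN, hJN, hMN, hNM, hsup⟩ := h.exists_complement hM
  obtain ⟨k, hk⟩ := exists_forall_commutator_mem_imp π hA h.mul_le hcen
  obtain ⟨n, hn⟩ := h.exists_pow_le_pow_smul k
  obtain ⟨e, he, f, hf, hef⟩ := Submodule.mem_sup.1
    ((hM.pow n).le_sup_pow h.mul_self hN.le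
      ((hN.le_sup_pow h.mul_self hM.le (sup_comm M N ▸ hsup) n).trans_eq (sup_comm _ _)) n
      (Submodule.one_le.1 h.one_le))
  have hcommute : ∀ a ∈ A, e * a - a * e ∈ π ^ k • A := fun a ha =>
    hn ((hM.pow n).commutator_mem (pow_mul_pow_le_pow hcomm hMN _)
      (pow_mul_pow_le_pow' hcomm hNM _) he hf hef ha)
  obtain ⟨_, hx, y, hy, hr⟩ := Submodule.mem_sup.1
    (hk e (hM.le (hM.pow_le n he)) hcommute)
  obtain ⟨r, rfl⟩ := Submodule.mem_one.1 hx
  rcases hloc r with hu | ⟨r, rfl⟩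
  · right
    have hrM : algebraMap R B r ∈ M :=
      (Submodule.add_mem_iff_left M (hJM (h.smul_le hy))).1 (hr ▸ hM.pow_le n he :)
    rw [Algebra.algebraMap_eq_smul_one] at hrM
    exact le_of_one_mem hM.order_mul_le ((Submodule.smul_mem_iff_of_isUnit M hu).1 hrM)
  · left
    have hrJ : algebraMap R B (π * r) ∈ J := by
      rw [Algebra.algebraMap_eq_smul_one, mul_smul]
      exact h.smul_le (Submodule.smul_mem_pointwise_smul _ _ _
        (A.smul_mem r (Submodule.one_le.1 h.one_le)))
    have h1N : (1 : B) ∈ N := by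
      rw [← hef, ← hr]
      exact N.add_mem (hJN (J.add_mem hrJ (h.smul_le hy))) (hN.pow_le n hf)
    exact (le_mul_of_one_le_right' (Submodule.one_le.2 h1N)).trans hMN

theorem exists_eq_mul_pow [IsNoetherianRing R] (hloc : ∀ r : R, IsUnit r ∨ π ∣ r) (hA : A.FG)
    (hcen : ∀ x ∈ A, x ∈ Set.centralizer (A : Set B) → x ∈ (1 : Submodule R B))
    {K : Submodule R B} (hK : IsInverse A J K) (s : ℕ) {X : Submodule R B}
    (hX : IsTwoSidedIdeal A X) (hcomm : Commute X J) (hs : J ^ s ≤ X) : ∃ n, X = A * J ^ n := by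
  induction s generalizing X with
  | zero =>
    refine ⟨0, le_antisymm (by simpa using hX.le) ?_⟩
    rw [pow_zero] at hs ⊢
    exact (mul_le_mul_right hs A).trans hX.order_mul_le
  | succ s ih =>
    have hAX : A * X = X := le_antisymm hX.order_mul_le (h.le_order_mul X)
    rcases h.le_radical_or_le hloc hA hcen (hX.sup h.toIsTwoSidedIdeal) le_sup_right
      (by rw [commute_iff_eq, Submodule.mul_sup, Submodule.sup_mul, hcomm.eq]) with hXJ | hA_le
    · have hJKX : J * (K * X) = X := by rw [← mul_assoc, hK.mul_inv, hAX]
      have hKXJ : K * X * J = X := by rw [mul_assoc, hcomm.eq, ← mul_assoc, hK.inv_mul, hAX]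
      obtain ⟨n, hn⟩ := ih (X := K * X)
        ⟨(mul_le_mul_right (le_sup_left.trans hXJ) K).trans hK.inv_mul.le,
          by rw [← mul_assoc, hK.order_mul],
          by rw [mul_assoc]; exact mul_le_mul_right hX.mul_order_le K⟩
        (hKXJ.trans hJKX.symm) (by
          refine (h.le_order_mul _).trans ?_
          rw [← hK.inv_mul, mul_assoc, ← pow_succ']
          exact mul_le_mul_right hs K)
      refine ⟨n + 1, ?_⟩
      rw [h.mul_pow_succ, pow_succ', ← hJKX, hn, ← mul_assoc, h.radical_mul]
    · refine ⟨0, le_antisymm (by simpa using hX.le) ?_⟩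
      have hA_le' := hX.le_sup_pow h.mul_self h.le hA_le s
      simpa using hA_le'.trans (sup_le le_rfl hs)

end IsOrderWithRadical

end TwoSidedIdeals

section Conjugation

theorem exists_pow_smul_le {R M : Type*} [CommRing R] [AddCommGroup M] [Module R M] {π : R}
    {A X : Submodule R M} (hpow : ∀ y : M, ∃ n : ℕ, π ^ n • y ∈ A) (hX : X.FG) :
    ∃ n : ℕ, π ^ n • X ≤ A := by
  induction X, hX using Submodule.fg_induction with
  | singleton x =>
    obtain ⟨n, hn⟩ := hpow x
    refine ⟨n, ?_⟩
    rw [Submodule.smul_span, Set.smul_set_singleton, Submodule.span_singleton_le_iff_mem]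
    exact hn
  | sup X Y _ _ hX hY =>
    obtain ⟨m, hm⟩ := hX
    obtain ⟨n, hn⟩ := hY
    refine ⟨m + n, ?_⟩
    rw [Submodule.smul_sup']
    refine sup_le ?_ ?_
    · rw [add_comm, pow_add, mul_smul]
      exact (smul_le_smul_left _ hm).trans (Submodule.smul_le_self_of_tower _ A)
    · rw [pow_add, mul_smul]
      exact (smul_le_smul_left _ hn).trans (Submodule.smul_le_self_of_tower _ A)

variable {R B : Type*} [CommRing R] [Ring B] [Algebra R B]

theorem IsInverse.pow_mul_mul_pow {A J K : Submodule R B} (hK : IsInverse A J K) (n : ℕ) :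
    K ^ n * A * J ^ n = A := by
  induction n with
  | zero => simp
  | succ n ih =>
    calc K ^ (n + 1) * A * J ^ (n + 1) = K ^ n * (K * A * J) * J ^ n := by
          rw [pow_succ, pow_succ']; simp only [mul_assoc]
      _ = A := by rw [hK.mul_order, hK.inv_mul, ih]

namespace IsOrderWithRadical

variable {π : R} {A J : Submodule R B} (h : IsOrderWithRadical π A J)

include h in
theorem radical_mul_le_mul_radical {A' J' : Submodule R B} (h' : IsOrderWithRadical π A' J')
    {u : (Submodule R B)ˣ} (hu : SemiconjBy (u : Submodule R B) A' A) : J * u ≤ u * J' := by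
  have hA' : ↑u⁻¹ * A * ↑u = A' := by rw [mul_assoc, ← hu.eq, Units.inv_mul_cancel_left]
  have hle : ↑u⁻¹ * J * ↑u ≤ J' := by
    obtain ⟨n, hn⟩ := h.exists_pow_le
    refine h'.le_radical_of_pow_le ?_ ?_ n ?_
    · rw [← hA']
      exact mul_le_mul_left (mul_le_mul_right h.le _) _
    · calc A' * (↑u⁻¹ * J * ↑u) = ↑u⁻¹ * (A * (↑u * ↑u⁻¹) * J) * ↑u := by
            rw [← hA']; simp only [mul_assoc]
        _ ≤ ↑u⁻¹ * J * ↑u := by rw [Units.mul_inv, mul_one, h.mul_radical]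
    · calc (↑u⁻¹ * J * ↑u) ^ (n + 1) = ↑u⁻¹ * J ^ (n + 1) * ↑u := Units.conj_pow' u J _
        _ ≤ ↑u⁻¹ * (π • A) * ↑u := mul_le_mul_left (mul_le_mul_right hn _) _
        _ = π • A' := by rw [mul_smul_comm, smul_mul_assoc, hA']
        _ ≤ J' := h'.smul_le
  calc J * u = u * (↑u⁻¹ * J * ↑u) := by rw [mul_assoc ↑u⁻¹ J, Units.mul_inv_cancel_left]
    _ ≤ u * J' := mul_le_mul_right hle _

include h in
theorem semiconjBy_radical {A' J' : Submodule R B} (h' : IsOrderWithRadical π A' J')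
    {u : (Submodule R B)ˣ} (hu : SemiconjBy (u : Submodule R B) A' A) :
    SemiconjBy (u : Submodule R B) J' J := by
  refine le_antisymm ?_ (h.radical_mul_le_mul_radical h' hu)
  calc ↑u * J' = ↑u * (J' * ↑u⁻¹) * ↑u := by simp only [mul_assoc, Units.inv_mul, mul_one]
    _ ≤ ↑u * (↑u⁻¹ * J) * ↑u := mul_le_mul_left (mul_le_mul_right
        (h'.radical_mul_le_mul_radical h hu.units_inv_symm_left) _) _
    _ = J * ↑u := by rw [Units.mul_inv_cancel_left]

variable [IsNoetherianRing R] (hloc : ∀ r : R, IsUnit r ∨ π ∣ r) (hA : A.FG)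
  (hcen : ∀ x ∈ A, x ∈ Set.centralizer (A : Set B) → x ∈ (1 : Submodule R B))
  {K : Submodule R B} (hK : IsInverse A J K)
include h hloc hA hcen hK

theorem exists_smul_eq_pow : ∃ e : ℕ, π • A = J ^ (e + 1) := by
  obtain ⟨t, ht⟩ := h.exists_pow_le
  have hAA : IsTwoSidedIdeal A (π • A) := by
    refine ⟨h.smul_le.trans h.le, ?_, ?_⟩
    · rw [mul_smul_comm, h.mul_self]
    · rw [smul_mul_assoc, h.mul_self]
  obtain ⟨n, hn⟩ := h.exists_eq_mul_pow hloc hA hcen hK (t + 1) hAA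
    (by rw [commute_iff_eq, mul_smul_comm, smul_mul_assoc, h.mul_radical, h.radical_mul]) ht
  cases n with
  | zero =>
    rw [pow_zero, mul_one] at hn
    refine ⟨0, ?_⟩
    rw [hn, zero_add, pow_one]
    exact le_antisymm (hn ▸ h.smul_le) h.le
  | succ n => exact ⟨n, by rw [hn, h.mul_pow_succ]⟩

theorem exists_pow_smul_eq_mul_pow (hpow : ∀ y : B, ∃ n : ℕ, π ^ n • y ∈ A) {Y : Submodule R B}
    (hY : Y.FG) (hAY : A * Y ≤ Y) (hYA : Y * A ≤ Y) (hcomm : Commute Y J) {m : ℕ}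
    (hm : π ^ m • (1 : Submodule R B) ≤ Y) : ∃ N n : ℕ, π ^ N • Y = A * J ^ n := by
  obtain ⟨N, hN⟩ := exists_pow_smul_le hpow hY
  obtain ⟨s, hs⟩ := h.exists_pow_le_pow_smul (N + m)
  refine ⟨N, h.exists_eq_mul_pow hloc hA hcen hK (s + 1) ⟨hN, ?_, ?_⟩ ?_ ?_⟩
  · rw [mul_smul_comm]
    exact smul_le_smul_left _ hAY
  · rw [smul_mul_assoc]
    exact smul_le_smul_left _ hYA
  · rw [commute_iff_eq, mul_smul_comm, smul_mul_assoc, hcomm.eq]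
  · refine hs.trans ?_
    rw [pow_add, mul_smul]
    refine smul_le_smul_left _ (le_trans ?_ hAY)
    calc π ^ m • A = A * (π ^ m • 1) := by rw [mul_smul_comm, mul_one]
      _ ≤ A * Y := mul_le_mul_right hm A

end IsOrderWithRadical

end Conjugation

section CentralSimple

section CommRing

variable (F B : Type*) [CommRing F] [Ring B] [Algebra F B]

theorem exists_range_mulLeftRight_smul_eq (a b : B) :
    ∃ p : (AlgHom.mulLeftRight F B).range, ∀ x : B, p • x = a * x * b :=
  ⟨⟨_, a ⊗ₜ MulOpposite.op b, rfl⟩, fun x => AlgHom.mulLeftRight_apply F B a _ x⟩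

theorem isSimpleModule_range_mulLeftRight [IsSimpleRing B] :
    IsSimpleModule (AlgHom.mulLeftRight F B).range B := by
  rw [isSimpleModule_iff]
  refine { eq_bot_or_eq_top := fun N => or_iff_not_imp_left.2 fun hN => ?_ }
  obtain ⟨v, hvN, hv⟩ := N.exists_mem_ne_zero_of_ne_bot hN
  have smul_mem : ∀ a b : B, ∀ x ∈ N, a * x * b ∈ N := fun a b x hx => by
    obtain ⟨p, hp⟩ := exists_range_mulLeftRight_smul_eq F B a b
    exact hp x ▸ N.smul_mem p hx
  let I : TwoSidedIdeal B := .mk' N N.zero_mem N.add_mem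
    (fun {x} hx => by simpa using smul_mem (-1) 1 x hx)
    (fun {a x} hx => by simpa using smul_mem a 1 x hx)
    (fun {x b} hx => by simpa using smul_mem 1 b x hx)
  have one_mem : (1 : B) ∈ N :=
    (TwoSidedIdeal.mem_mk' ..).1
      (IsSimpleRing.one_mem_of_ne_zero_mem I hv ((TwoSidedIdeal.mem_mk' ..).2 hvN))
  exact eq_top_iff.2 fun x _ => by simpa using smul_mem x 1 1 one_mem

theorem exists_forall_eq_smul_of_end_range_mulLeftRight [Algebra.IsCentral F B]
    (g : Module.End (AlgHom.mulLeftRight F B).range B) : ∃ r : F, ∀ x, g x = r • x := by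
  have map_mul_mul : ∀ a x b, g (a * x * b) = a * g x * b := fun a x b => by
    obtain ⟨p, hp⟩ := exists_range_mulLeftRight_smul_eq F B a b
    rw [← hp, map_smul, hp]
  have map_mul_left : ∀ x, g x = x * g 1 := fun x => by simpa using map_mul_mul x 1 1
  have map_mul_right : ∀ x, g x = g 1 * x := fun x => by simpa using map_mul_mul 1 1 x
  obtain ⟨r, hr⟩ := Algebra.IsCentral.mem_center_iff F |>.1 <|
    Subalgebra.mem_center_iff.2 fun x => (map_mul_left x).symm.trans (map_mul_right x)
  exact ⟨r, fun x => by rw [map_mul_right, hr, Algebra.smul_def]⟩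

end CommRing

variable (F B : Type*) [Field F] [Ring B] [Algebra F B]

theorem mulLeftRight_surjective [FiniteDimensional F B] [Algebra.IsCentral F B]
    [IsSimpleRing B] : Function.Surjective (AlgHom.mulLeftRight F B) := by
  intro f
  have := isSimpleModule_range_mulLeftRight F B
  let f' : Module.End (Module.End (AlgHom.mulLeftRight F B).range B) B :=
    { f with
      map_smul' := fun g x => by
        obtain ⟨r, hr⟩ := exists_forall_eq_smul_of_end_range_mulLeftRight F B g
        simp [hr] }
  obtain ⟨s, hs⟩ := Module.Finite.fg_top (R := F) (M := B)
  obtain ⟨⟨_, q, rfl⟩, hq⟩ := jacobson_density (R := (AlgHom.mulLeftRight F B).range) f' s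
  exact ⟨q, LinearMap.ext_on hs fun x hx => (hq x hx).symm⟩

variable {F B}

theorem isAzumaya_of_surjective [FiniteDimensional F B] [Nontrivial B]
    (h : Function.Surjective (AlgHom.mulLeftRight F B)) : IsAzumaya F B where
  bij := by
    have hrank : Module.finrank F (B ⊗[F] Bᵐᵒᵖ) = Module.finrank F (Module.End F B) := by
      rw [Module.finrank_tensorProduct, Module.finrank_linearMap,
        (MulOpposite.opLinearEquiv F (M := B)).finrank_eq]
    exact ⟨(LinearMap.injective_iff_surjective_of_finrank_eq_finrank hrank
      (f := (AlgHom.mulLeftRight F B).toLinearMap)).2 h, h⟩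

variable (F B)

theorem isAzumaya_of_isCentral_of_isSimpleRing [FiniteDimensional F B] [Algebra.IsCentral F B]
    [IsSimpleRing B] : IsAzumaya F B :=
  isAzumaya_of_surjective (mulLeftRight_surjective F B)

theorem isAzumaya_baseChange (L : Type*) [Field L] [Algebra F L] [IsAzumaya F B] :
    IsAzumaya L (L ⊗[F] B) := by
  have : Nontrivial B := FaithfulSMul.algebraMap_injective F B |>.nontrivial
  have := Module.finitePresentation_of_finite F B
  refine isAzumaya_of_surjective fun f => ?_
  induction f using (Module.FinitePresentation.isBaseChange_map F B B L).inductionOn with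
  | zero => exact ⟨0, map_zero _⟩
  | tmul f =>
    obtain ⟨t, rfl⟩ := (IsAzumaya.AlgHom.mulLeftRight_bij F B).surjective f
    induction t using TensorProduct.induction_on with
    | zero => exact ⟨0, by simp⟩
    | tmul a b =>
      exact ⟨(1 ⊗ₜ a) ⊗ₜ MulOpposite.op (1 ⊗ₜ b.unop),
        TensorProduct.AlgebraTensorModule.curry_injective (by ext; simp)⟩
    | add s t hs ht =>
      obtain ⟨s', hs⟩ := hs
      obtain ⟨t', ht⟩ := ht
      exact ⟨s' + t', by rw [map_add, hs, ht, map_add, map_add]⟩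
  | smul l f hf =>
    obtain ⟨t, rfl⟩ := hf
    exact ⟨l • t, map_smul _ _ _⟩
  | add f g hf hg =>
    obtain ⟨s, rfl⟩ := hf
    obtain ⟨t, rfl⟩ := hg
    exact ⟨s + t, map_add _ _ _⟩

variable {F B}

/-- Skolem–Noether: `h` induces an automorphism of `End B`, which is conjugation by some `T`; as
this automorphism fixes the right multiplications, `T` is left multiplication by a unit. -/
theorem exists_unit_forall_mul_eq_mul [IsAzumaya F B] (h : B ≃ₐ[F] B) :
    ∃ u : Bˣ, ∀ y, h y * u = u * y := by
  let μ := AlgEquiv.ofBijective _ (IsAzumaya.AlgHom.mulLeftRight_bij F B)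
  obtain ⟨T, hT⟩ := AlgEquiv.eq_linearEquivConjAlgEquiv
    ((μ.symm.trans (Algebra.TensorProduct.congr h AlgEquiv.refl)).trans μ)
  have map_mul_mul : ∀ a x b, T (a * x * b) = h a * T x * b := fun a x b => by
    have := LinearMap.congr_fun (AlgEquiv.congr_fun hT (μ (a ⊗ₜ MulOpposite.op b))) (T x)
    simpa [μ, LinearEquiv.conjAlgEquiv_apply] using this.symm
  have eq_mul : ∀ x, T x = T 1 * x := fun x => by simpa using map_mul_mul 1 1 x
  have one_eq : T 1 * T.symm 1 = 1 := by rw [← eq_mul, T.apply_symm_apply]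
  have := IsArtinianRing.of_finite F B
  refine ⟨.mkOfMulEqOne _ _ one_eq, fun y => ?_⟩
  rw [Units.val_mkOfMulEqOne, ← eq_mul]
  simpa using (map_mul_mul y 1 1).symm

end CentralSimple

section SemisimpleQuotients

theorem exists_forall_map_eq_map_mul {A C : Type*} [Ring A] [Ring C] [IsSemisimpleRing C]
    {f : A →+* C} (hf : Function.Surjective f) (I : Ideal A) :
    ∃ e ∈ I, ∀ m ∈ I, f m = f (m * e) := by
  obtain ⟨c, hc, hI⟩ := IsSemisimpleRing.ideal_eq_span_idempotent (I.map f)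
  obtain ⟨e, he, rfl⟩ := (Ideal.mem_map_iff_of_surjective f hf).1
    (hI ▸ Ideal.mem_span_singleton_self c)
  refine ⟨e, he, fun m hm => ?_⟩
  obtain ⟨a, ha⟩ := Ideal.mem_span_singleton'.1 (hI ▸ Ideal.mem_map_of_mem f hm)
  rw [map_mul, ← ha, mul_assoc, hc.eq]

/-- `f` presents its target as a quotient of the `R`-algebra `A` modulo an ideal which contains `π`
and is nilpotent modulo `π`. When the target is semisimple, the kernel of `f` is the radical of `A`
at `π`. -/
structure IsRadicalQuotient {R A C : Type*} [CommRing R] [Ring A] [Algebra R A] [Ring C]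
    [Algebra R C] (π : R) (f : A →ₐ[R] C) : Prop where
  surjective : Function.Surjective f
  map_algebraMap : f (algebraMap R A π) = 0
  exists_ker_pow_le : ∃ n : ℕ,
    LinearMap.ker f.toLinearMap ^ (n + 1) ≤ π • (⊤ : Submodule R A)

theorem IsRadicalQuotient.comp_mk_jacobson {R A C : Type*} [CommRing R] [Ring A] [Algebra R A]
    [Ring C] [Algebra R C] [IsArtinianRing C] {π : R} {g : A →ₐ[R] C}
    (hg : Function.Surjective g) (hπ : g (algebraMap R A π) = 0)
    (hker : LinearMap.ker g.toLinearMap ≤ π • (⊤ : Submodule R A)) :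
    IsRadicalQuotient π ((Ideal.Quotient.mkₐ R (Ring.jacobson C)).comp g) where
  surjective := (Ideal.Quotient.mkₐ_surjective R _).comp hg
  map_algebraMap := by rw [AlgHom.comp_apply, hπ, map_zero]
  exists_ker_pow_le := by
    obtain ⟨n, hn⟩ := IsSemiprimaryRing.isNilpotent (R := C)
    set J := LinearMap.ker ((Ideal.Quotient.mkₐ R (Ring.jacobson C)).comp g).toLinearMap
    have hJ : ∀ x ∈ J, g x ∈ Ring.jacobson C := fun x hx => Ideal.Quotient.eq_zero_iff_mem.1 hx
    have map_mem : ∀ m, J ^ (m + 1) ≤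
        ((Ring.jacobson C ^ (m + 1)).restrictScalars R).comap g.toLinearMap := by
      intro m
      induction m with
      | zero =>
        intro x hx
        rw [zero_add, Submodule.pow_one] at hx
        simpa [Submodule.pow_one] using hJ x hx
      | succ m ih =>
        rw [pow_succ' J, Ideal.IsTwoSided.pow_succ]
        refine Submodule.mul_le.2 fun a ha b hb => ?_
        change g (a * b) ∈ Ring.jacobson C * Ring.jacobson C ^ (m + 1)
        rw [map_mul]
        exact Ideal.mul_mem_mul (hJ a ha) (ih hb)
    refine ⟨n, (map_mem n).trans fun x hx => hker ?_⟩
    rw [Ideal.IsTwoSided.pow_succ, hn] at hx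
    simpa using hx

theorem exists_isRadicalQuotient {R : Type u} (A : Type v) [CommRing R] [Ring A] [Algebra R A]
    [Module.Finite R A] {π : R} (hπ : (Ideal.span {π}).IsMaximal) :
    ∃ (C : Type (max u v)) (_ : Ring C) (_ : Algebra R C) (_ : IsSemisimpleRing C) (f : A →ₐ[R] C),
      IsRadicalQuotient π f := by
  let _ : Field (R ⧸ Ideal.span {π}) := Ideal.Quotient.field _
  have := IsArtinianRing.of_finite (R ⧸ Ideal.span {π}) ((R ⧸ Ideal.span {π}) ⊗[R] A)
  refine ⟨_, _, _, IsSemiprimaryRing.isSemisimpleRing, _,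
    IsRadicalQuotient.comp_mk_jacobson
      (g := (Algebra.TensorProduct.includeRight : A →ₐ[R] (R ⧸ Ideal.span {π}) ⊗[R] A))
      (Algebra.TensorProduct.includeRight_surjective _ Ideal.Quotient.mk_surjective) ?_ ?_⟩
  · have : algebraMap R (R ⧸ Ideal.span {π}) π = 0 :=
      Ideal.Quotient.eq_zero_iff_mem.2 (Ideal.mem_span_singleton_self π)
    rw [AlgHom.commutes, Algebra.TensorProduct.algebraMap_apply, this, TensorProduct.zero_tmul]
  · intro a ha
    have := congrArg (TensorProduct.quotTensorEquivQuotSMul A (Ideal.span {π})) ha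
    rwa [AlgHom.toLinearMap_apply, Algebra.TensorProduct.includeRight_apply, map_zero,
      ← map_one (Ideal.Quotient.mk (Ideal.span {π})),
      TensorProduct.quotTensorEquivQuotSMul_mk_tmul, one_smul,
      Submodule.Quotient.mk_eq_zero, Submodule.ideal_span_singleton_smul] at this

section Map

variable {R B A C : Type*} [CommRing R] [Ring B] [Algebra R B] [Ring A] [Algebra R A] [Ring C]
  [Algebra R C] {π : R} {f : A →ₐ[R] C} (j : A →ₐ[R] B)

theorem IsRadicalQuotient.isTwoSidedIdeal_map :
    IsTwoSidedIdeal (Submodule.map j.toLinearMap ⊤)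
      (Submodule.map j.toLinearMap (LinearMap.ker f.toLinearMap)) where
  le := Submodule.map_mono le_top
  order_mul_le := by
    rw [← Submodule.map_mul]
    refine Submodule.map_mono (Submodule.mul_le.2 fun a _ b hb => ?_)
    rw [LinearMap.mem_ker, AlgHom.toLinearMap_apply] at hb ⊢
    rw [map_mul, hb, mul_zero]
  mul_order_le := by
    rw [← Submodule.map_mul]
    refine Submodule.map_mono (Submodule.mul_le.2 fun a ha b _ => ?_)
    rw [LinearMap.mem_ker, AlgHom.toLinearMap_apply] at ha ⊢
    rw [map_mul, ha, zero_mul]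

theorem IsRadicalQuotient.isOrderWithRadical_map [IsSemisimpleRing C]
    (hf : IsRadicalQuotient π f) :
    IsOrderWithRadical π (Submodule.map j.toLinearMap ⊤)
      (Submodule.map j.toLinearMap (LinearMap.ker f.toLinearMap)) where
  toIsTwoSidedIdeal := isTwoSidedIdeal_map j
  one_le := Submodule.one_le.2 ⟨1, trivial, map_one j⟩
  mul_le := by rw [← Submodule.map_mul]; exact Submodule.map_mono le_top
  smul_le := by
    rw [← Submodule.map_pointwise_smul]
    refine Submodule.map_mono fun x hx => ?_
    obtain ⟨a, -, rfl⟩ := (Submodule.mem_smul_pointwise_iff_exists _ _ _).1 hx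
    rw [LinearMap.mem_ker, AlgHom.toLinearMap_apply, Algebra.smul_def, map_mul, hf.map_algebraMap,
      zero_mul]
  exists_pow_le := hf.exists_ker_pow_le.imp fun n hn => by
    rw [← Submodule.map_pow, ← Submodule.map_pointwise_smul]
    exact Submodule.map_mono hn
  exists_right_identity M hM hAM := by
    let I : Ideal A :=
      { M.toAddSubmonoid.comap j.toAddMonoidHom with
        smul_mem' := fun a m hm => by
          simpa using hAM (Submodule.mul_mem_mul ⟨a, trivial, rfl⟩ hm) }
    obtain ⟨e, he, hI⟩ := exists_forall_map_eq_map_mul (f := f.toRingHom) hf.surjective I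
    refine ⟨j e, he, fun m hm => ?_⟩
    obtain ⟨a, -, rfl⟩ := hM hm
    exact ⟨a - a * e, by simpa [sub_eq_zero] using hI a hm, by simp⟩
  exists_left_identity M hM hMA := by
    let I : Ideal Aᵐᵒᵖ :=
      { M.toAddSubmonoid.comap (j.toAddMonoidHom.comp
          (MulOpposite.opAddEquiv (α := A)).symm.toAddMonoidHom) with
        smul_mem' := fun a m hm => by
          simpa using hMA (Submodule.mul_mem_mul hm ⟨a.unop, trivial, rfl⟩) }
    obtain ⟨e, he, hI⟩ := exists_forall_map_eq_map_mul (f := RingHom.op f.toRingHom)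
      (MulOpposite.op_surjective.comp (hf.surjective.comp MulOpposite.unop_surjective)) I
    refine ⟨j e.unop, he, fun m hm => ?_⟩
    obtain ⟨a, -, rfl⟩ := hM hm
    exact ⟨a - e.unop * a,
      by simpa [sub_eq_zero] using congrArg MulOpposite.unop (hI (.op a) hm), by simp⟩

end Map

end SemisimpleQuotients

section Unramified

section Sandwich

variable (R T M : Type*) [CommRing R] [CommRing T] [Algebra R T] [AddCommGroup M] [Module R M]
  [Module T M] [IsScalarTower R T M]

/-- The action of `T ⊗[R] T` on the `R`-linear endomorphisms of a `T`-module, through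
`(s ⊗ t) • p = s ∘ p ∘ t`. -/
noncomputable def sandwich : T ⊗[R] T →ₐ[R] Module.End R (Module.End R M) :=
  (AlgHom.mulLeftRight R (Module.End R M)).comp <|
    Algebra.TensorProduct.map (Algebra.lsmul R R M)
      ((Algebra.lsmul R R M).toOpposite fun s t => by
        rw [Commute, SemiconjBy, ← map_mul, mul_comm, map_mul])

variable {R T M} (p : Module.End R M)

@[simp]
theorem sandwich_tmul (s t : T) (x : M) : sandwich R T M (s ⊗ₜ t) p x = s • p (t • x) := by
  simp [sandwich]

theorem sandwich_apply_mem {N : Submodule T M} (hp : ∀ x, p x ∈ N) (z : T ⊗[R] T) (x : M) :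
    sandwich R T M z p x ∈ N := by
  induction z using TensorProduct.induction_on with
  | zero => simp
  | tmul s t => simpa using N.smul_mem s (hp _)
  | add y z hy hz => simpa using N.add_mem hy hz

theorem sandwich_apply_of_mem {N : Submodule T M} (hp : ∀ x ∈ N, p x = x) (z : T ⊗[R] T) {x : M}
    (hx : x ∈ N) : sandwich R T M z p x = Algebra.TensorProduct.lmul' R z • x := by
  induction z using TensorProduct.induction_on with
  | zero => simp
  | tmul s t => simp [hp _ (N.smul_mem t hx), mul_smul]
  | add y z hy hz => simp [hy, hz, add_smul]

theorem sandwich_apply_map (c : Module.End T M) (hp : ∀ x, p (c x) = c (p x)) (z : T ⊗[R] T)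
    (x : M) : sandwich R T M z p (c x) = c (sandwich R T M z p x) := by
  induction z using TensorProduct.induction_on with
  | zero => simp
  | tmul s t => rw [sandwich_tmul, sandwich_tmul, ← map_smul c, hp, map_smul c]
  | add y z hy hz => simp [hy, hz]

theorem sandwich_elem_apply_smul [Algebra.FormallyUnramified R T] [Algebra.EssFiniteType R T]
    (s : T) (x : M) :
    sandwich R T M (Algebra.FormallyUnramified.elem R T) p (s • x) =
      s • sandwich R T M (Algebra.FormallyUnramified.elem R T) p x := by
  have := congrArg (fun z => sandwich R T M z p x)
    (Algebra.FormallyUnramified.one_tmul_mul_elem (R := R) s)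
  simp only [map_mul, Module.End.mul_apply] at this
  simpa using this

end Sandwich

theorem isSemisimpleRing_tensorProduct (R T C : Type*) [CommRing R] [CommRing T] [Algebra R T]
    [Ring C] [Algebra R C] [IsSemisimpleRing C] [Algebra.FormallyUnramified R T]
    [Algebra.EssFiniteType R T] : IsSemisimpleRing (T ⊗[R] C) := by
  let _ : Module C (T ⊗[R] C) :=
    Module.compHom _ (Algebra.TensorProduct.includeRight : C →ₐ[R] T ⊗[R] C).toRingHom
  have smul_eq (c : C) (x : T ⊗[R] C) : c • x = (1 ⊗ₜ[R] c) * x := rfl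
  have : IsScalarTower R C (T ⊗[R] C) := ⟨fun r c x => by simp [smul_eq]⟩
  refine (isSemisimpleModule_iff _ _).2 ⟨fun N => ?_⟩
  let N' : Submodule C (T ⊗[R] C) :=
    { N with smul_mem' := fun c x hx => N.smul_mem (1 ⊗ₜ[R] c) hx }
  obtain ⟨P, hP⟩ := exists_isCompl N'
  let p : Module.End R (T ⊗[R] C) := (N'.projection P hP).restrictScalars R
  let q := sandwich R T (T ⊗[R] C) (Algebra.FormallyUnramified.elem R T) p
  let NT : Submodule T (T ⊗[R] C) := N.restrictScalars T
  have q_smul (z x : T ⊗[R] C) : q (z • x) = z • q x := by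
    induction z using TensorProduct.induction_on with
    | zero => simp
    | add y z hy hz => rw [add_smul, add_smul, map_add, hy, hz]
    | tmul s c =>
      have smul_eq (x : T ⊗[R] C) :
          (s ⊗ₜ[R] c) • x = s • LinearMap.mulLeft T (1 ⊗ₜ[R] c : T ⊗[R] C) x := by
        simp [← smul_mul_assoc, TensorProduct.smul_tmul']
      rw [smul_eq, smul_eq, sandwich_elem_apply_smul, sandwich_apply_map]
      exact fun x => (N'.projection P hP).map_smul c x
  let g : T ⊗[R] C →ₗ[T ⊗[R] C] N :=
    LinearMap.codRestrict N ⟨⟨q, map_add q⟩, q_smul⟩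
      (sandwich_apply_mem (N := NT) p (Submodule.projection_apply_mem hP) _)
  refine ⟨_, LinearMap.isCompl_of_proj (f := g) fun x => Subtype.ext ?_⟩
  refine (sandwich_apply_of_mem (N := NT) p
    (fun x hx => Submodule.projection_apply_of_mem_left hP hx) _ x.2).trans ?_
  rw [Algebra.FormallyUnramified.lmul_elem, one_smul]

end Unramified

section Extension

variable {R : Type*} (T : Type*) {A B E : Type*} [CommRing R] [CommRing T] [Algebra R T]
  [Ring A] [Algebra R A] [Ring B] [Algebra R B] [Ring E] [Algebra R E] [Algebra T E]
  [IsScalarTower R T E] (ι : B →ₐ[R] E)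

/-- Extension of scalars for submodules: the `T`-submodule of `E` spanned by the image of an
`R`-submodule of `B`. It is bundled as a homomorphism of semirings because all the identities
between products of lattices have to be transported along it. -/
def extend : Submodule R B →+* Submodule T E where
  toFun X := Submodule.span T (X.map ι.toLinearMap)
  map_zero' := by simp
  map_one' := by
    rw [Submodule.map_one, Submodule.one_eq_span, Submodule.one_eq_span]
    simp [Submodule.span_span_of_tower]
  map_add' X Y := by
    rw [Submodule.add_eq_sup, Submodule.map_sup, Submodule.add_eq_sup, ← Submodule.span_union,
      ← Submodule.span_span_of_tower R T (_ ∪ _), Submodule.span_union, Submodule.span_eq,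
      Submodule.span_eq]
  map_mul' X Y := by
    rw [Submodule.map_mul, Submodule.mul_eq_span_mul_set, Submodule.span_span_of_tower,
      Submodule.span_mul_span]

variable {T ι}

theorem mem_extend {X : Submodule R B} {x : B} (hx : x ∈ X) : ι x ∈ extend T ι X :=
  Submodule.subset_span ⟨x, hx, rfl⟩

theorem extend_le_iff {X : Submodule R B} {Y : Submodule T E} :
    extend T ι X ≤ Y ↔ ∀ x ∈ X, ι x ∈ Y := by
  simp [extend, Submodule.span_le, Set.subset_def]

theorem extend_mono : Monotone (extend T ι) := fun _ _ h =>
  extend_le_iff.2 fun _ hx => mem_extend (h hx)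

theorem extend_smul (r : R) (X : Submodule R B) :
    extend T ι (r • X) = algebraMap R T r • extend T ι X := by
  refine le_antisymm (extend_le_iff.2 fun x hx => ?_) ?_
  · obtain ⟨y, hy, rfl⟩ := (Submodule.mem_smul_pointwise_iff_exists _ _ _).1 hx
    rw [map_smul, ← algebraMap_smul T]
    exact Submodule.smul_mem_pointwise_smul _ _ _ (mem_extend hy)
  · refine Submodule.map_le_iff_le_comap.2 (extend_le_iff.2 fun x hx => ?_)
    rw [Submodule.mem_comap, DistribSMul.toLinearMap_apply, algebraMap_smul, ← map_smul]
    exact mem_extend (Submodule.smul_mem_pointwise_smul _ _ _ hx)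

theorem extend_span (s : Set B) : extend T ι (Submodule.span R s) = Submodule.span T (ι '' s) := by
  change Submodule.span T ((Submodule.span R s).map ι.toLinearMap : Set E) = _
  rw [Submodule.map_span, Submodule.span_span_of_tower]
  rfl

theorem extend_span_singleton (x : B) :
    extend T ι (Submodule.span R {x}) = Submodule.span T {ι x} := by
  rw [extend_span, Set.image_singleton]

theorem fg_extend {X : Submodule R B} (hX : X.FG) : (extend T ι X).FG := by
  obtain ⟨s, hs⟩ := hX.map ι.toLinearMap
  refine ⟨s, ?_⟩
  rw [← Submodule.span_span_of_tower R, hs]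
  rfl

variable (T ι)

/-- The homomorphism `T ⊗[R] A → E` induced by algebra homomorphisms `A → B → E`. -/
noncomputable def tensorLift (k : A →ₐ[R] B) : T ⊗[R] A →ₐ[T] E :=
  Algebra.TensorProduct.lift (Algebra.ofId T E) (ι.comp k) fun t _ => Algebra.commutes t _

theorem tensorLift_tmul (k : A →ₐ[R] B) (t : T) (a : A) :
    tensorLift T ι k (t ⊗ₜ a) = t • ι (k a) := by
  rw [Algebra.smul_def]
  exact Algebra.TensorProduct.lift_tmul _ _ _ _ _

theorem map_tensorLift_baseChange (k : A →ₐ[R] B) (X : Submodule R A) :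
    (X.baseChange T).map (tensorLift T ι k).toLinearMap = extend T ι (X.map k.toLinearMap) := by
  have : tensorLift T ι k ∘ TensorProduct.mk R T A 1 = ι ∘ k := by
    ext a
    exact (tensorLift_tmul T ι k 1 a).trans (one_smul _ _)
  rw [Submodule.baseChange_eq_span, Submodule.map_span]
  rw [extend, RingHom.coe_mk, MonoidHom.coe_mk, OneHom.coe_mk, Submodule.map_coe,
    Submodule.map_coe, Submodule.map_coe, ← Set.image_comp, ← Set.image_comp]
  exact congrArg (fun g => Submodule.span T (g '' X)) this

theorem ker_map_id {C : Type*} [Ring C] [Algebra R C] {f : A →ₐ[R] C}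
    (hf : Function.Surjective f) :
    LinearMap.ker (Algebra.TensorProduct.map (AlgHom.id T T) f).toLinearMap =
      (LinearMap.ker f.toLinearMap).baseChange T := by
  ext x
  exact lTensor_exact T (LinearMap.exact_subtype_ker_map f.toLinearMap) hf x

theorem baseChange_eq_extend (X : Submodule R A) :
    X.baseChange T = extend T Algebra.TensorProduct.includeRight X := by
  rw [Submodule.baseChange_eq_span]
  rfl

theorem IsRadicalQuotient.baseChange {C : Type*} [Ring C] [Algebra R C] {π : R} {f : A →ₐ[R] C}
    (hf : IsRadicalQuotient π f) :
    IsRadicalQuotient (algebraMap R T π) (Algebra.TensorProduct.map (AlgHom.id T T) f) where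
  surjective := LinearMap.lTensor_surjective T (g := f.toLinearMap) hf.surjective
  map_algebraMap := by
    rw [← IsScalarTower.algebraMap_apply, Algebra.TensorProduct.algebraMap_apply',
      Algebra.TensorProduct.map_tmul, hf.map_algebraMap, TensorProduct.tmul_zero]
  exists_ker_pow_le := hf.exists_ker_pow_le.imp fun n hn => by
    rw [ker_map_id T hf.surjective, ← Submodule.baseChange_top, baseChange_eq_extend,
      baseChange_eq_extend, ← map_pow, ← extend_smul]
    exact extend_mono hn

theorem IsRadicalQuotient.isOrderWithRadical_extend {C : Type*} [Ring C] [Algebra R C]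
    [IsSemisimpleRing C] [Algebra.FormallyUnramified R T] [Algebra.EssFiniteType R T] {π : R}
    {f : A →ₐ[R] C} (hf : IsRadicalQuotient π f) (k : A →ₐ[R] B) :
    IsOrderWithRadical (algebraMap R T π) (extend T ι (Submodule.map k.toLinearMap ⊤))
      (extend T ι (Submodule.map k.toLinearMap (LinearMap.ker f.toLinearMap))) := by
  have := isSemisimpleRing_tensorProduct R T C
  rw [← map_tensorLift_baseChange, ← map_tensorLift_baseChange, Submodule.baseChange_top,
    ← ker_map_id T hf.surjective]
  exact (hf.baseChange T).isOrderWithRadical_map _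

end Extension

section TwistedSum

/-- The sum of the `K ^ i * M * J ^ i` for `i ≤ e`. When `M` is invariant under
`X ↦ K ^ (e + 1) * X * J ^ (e + 1)`, this is the smallest lattice above `M` which is invariant
under `X ↦ K * X * J`. -/
def twistedSum {α : Type*} [Semiring α] (K M J : α) (e : ℕ) : α :=
  ∑ i ∈ Finset.range (e + 1), K ^ i * M * J ^ i

variable {α : Type*} [Semiring α] {K M J : α} {e : ℕ}

theorem map_twistedSum {β : Type*} [Semiring β] (f : α →+* β) (K M J : α) (e : ℕ) :
    f (twistedSum K M J e) = twistedSum (f K) (f M) (f J) e := by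
  simp only [twistedSum, map_sum, map_mul, map_pow]

theorem mul_twistedSum_mul (h : K ^ (e + 1) * M * J ^ (e + 1) = M) :
    K * twistedSum K M J e * J = twistedSum K M J e := by
  have hshift : K * twistedSum K M J e * J =
      ∑ i ∈ Finset.range (e + 1), K ^ (i + 1) * M * J ^ (i + 1) := by
    rw [twistedSum, Finset.mul_sum, Finset.sum_mul]
    exact Finset.sum_congr rfl fun i _ => by rw [pow_succ' K, pow_succ J]; simp only [mul_assoc]
  rw [hshift, Finset.sum_range_succ, h, twistedSum, Finset.sum_range_succ']
  simp

theorem mul_twistedSum {A : α} (hK : A * K = K) (hM : A * M = M) :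
    A * twistedSum K M J e = twistedSum K M J e := by
  rw [twistedSum, Finset.mul_sum]
  refine Finset.sum_congr rfl fun i _ => ?_
  cases i with
  | zero => simp [hM]
  | succ i => rw [← mul_assoc, ← mul_assoc, pow_succ' K, ← mul_assoc, hK]

theorem twistedSum_mul {A : α} (hJ : J * A = J) (hM : M * A = M) :
    twistedSum K M J e * A = twistedSum K M J e := by
  rw [twistedSum, Finset.sum_mul]
  refine Finset.sum_congr rfl fun i _ => ?_
  cases i with
  | zero => simp [hM]
  | succ i => simp only [pow_succ J, mul_assoc, hJ]

variable {R B : Type*} [CommRing R] [Ring B] [Algebra R B]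

theorem le_twistedSum (K M J : Submodule R B) (e : ℕ) : M ≤ twistedSum K M J e := by
  calc M = K ^ 0 * M * J ^ 0 := by simp
    _ ≤ twistedSum K M J e := Finset.single_le_sum_of_canonicallyOrdered
      (f := fun i => K ^ i * M * J ^ i) (Finset.mem_range.2 e.succ_pos)

theorem fg_twistedSum {K M J : Submodule R B} (hK : K.FG) (hM : M.FG) (hJ : J.FG) (e : ℕ) :
    (twistedSum K M J e).FG :=
  Finset.sum_induction _ Submodule.FG (fun _ _ => Submodule.FG.sup) Submodule.fg_bot fun i _ =>
    ((hK.pow i).mul hM).mul (hJ.pow i)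

end TwistedSum

section LocalLattice

variable {R B : Type*} [CommRing R] [Ring B] [Algebra R B] {π : R} {A J K A' J' : Submodule R B}

theorem IsInverse.pow_mul_mul_pow_of_smul_eq (hK : IsInverse A J K)
    (h : IsOrderWithRadical π A J) {e : ℕ} (he : π • A = J ^ (e + 1))
    (he' : π • A' = J' ^ (e + 1)) :
    K ^ (e + 1) * (A * A') * J' ^ (e + 1) = A * (A' * A') := by
  calc K ^ (e + 1) * (A * A') * J' ^ (e + 1) = K ^ (e + 1) * (π • A) * (A' * A') := by
        simp only [← he', mul_smul_comm, smul_mul_assoc, mul_assoc]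
    _ = K ^ (e + 1) * A * J ^ (e + 1) * (A' * A') := by
        rw [he, mul_assoc (K ^ (e + 1)) A, h.mul_pow_succ]
    _ = A * (A' * A') := by rw [hK.pow_mul_mul_pow]

theorem IsInverse.semiconjBy_of_mul_mul_eq (hK : IsInverse A J K) {W : Submodule R B}
    (hAW : A * W = W) (hW : K * W * J' = W) : SemiconjBy W J' J := by
  calc W * J' = J * K * W * J' := by rw [hK.mul_inv, hAW]
    _ = J * (K * W * J') := by simp only [mul_assoc]
    _ = J * W := by rw [hW]

theorem smul_eq_pow_of_semiconjBy {u : (Submodule R B)ˣ}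
    (hu : SemiconjBy (u : Submodule R B) A' A) (huJ : SemiconjBy (u : Submodule R B) J' J) {n : ℕ}
    (hn : π • A = J ^ n) : π • A' = J' ^ n := by
  refine u.mul_right_inj.1 ?_
  rw [mul_smul_comm, hu.eq, ← smul_mul_assoc, hn, (huJ.pow_right n).eq]

namespace IsOrderWithRadical

variable (h : IsOrderWithRadical π A J) (h' : IsOrderWithRadical π A' J') (hK : IsInverse A J K)
include h h' hK

theorem exists_pow_smul_twistedSum_eq [IsNoetherianRing R] (hloc : ∀ r : R, IsUnit r ∨ π ∣ r)
    (hA : A.FG) (hA' : A'.FG) (hJ' : J'.FG) (hKfg : K.FG)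
    (hcen : ∀ x ∈ A, x ∈ Set.centralizer (A : Set B) → x ∈ (1 : Submodule R B))
    (hpow : ∀ y : B, ∃ n : ℕ, π ^ n • y ∈ A) {u : (Submodule R B)ˣ}
    (hu : SemiconjBy (u : Submodule R B) A' A) :
    ∃ N n e : ℕ, π ^ N • twistedSum K (A * A') J' e = A * J ^ n * u := by
  have huJ := h.semiconjBy_radical h' hu
  obtain ⟨e, he⟩ := h.exists_smul_eq_pow hloc hA hcen hK
  have he' : π • A' = J' ^ (e + 1) := smul_eq_pow_of_semiconjBy hu huJ he
  obtain ⟨W, hWdef⟩ : ∃ W, W = twistedSum K (A * A') J' e := ⟨_, rfl⟩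
  have hAW : A * W = W := by
    rw [hWdef, mul_twistedSum hK.order_mul (by rw [← mul_assoc, h.mul_self])]
  have hWA' : W * A' = W := by
    rw [hWdef, twistedSum_mul h'.radical_mul (by rw [mul_assoc, h'.mul_self])]
  have hW : SemiconjBy W J' J := hK.semiconjBy_of_mul_mul_eq hAW (by
    rw [hWdef, mul_twistedSum_mul]
    rw [hK.pow_mul_mul_pow_of_smul_eq h he he', h'.mul_self])
  have hAW_le : A ≤ W := hWdef ▸ (h'.le_mul_order A).trans (le_twistedSum K _ J' e)
  have hWfg : W.FG := hWdef ▸ fg_twistedSum hKfg (hA.mul hA') hJ' e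
  obtain ⟨m, hm⟩ := exists_pow_smul_le hpow (Submodule.fg_unit u)
  have hone : π ^ m • (1 : Submodule R B) ≤ W * ↑u⁻¹ := by
    calc π ^ m • (1 : Submodule R B) = π ^ m • (u : Submodule R B) * ↑u⁻¹ := by
          rw [smul_mul_assoc, u.mul_inv]
      _ ≤ W * ↑u⁻¹ := mul_le_mul_left (hm.trans hAW_le) _
  have hYA : W * ↑u⁻¹ * A = W * ↑u⁻¹ := by
    rw [mul_assoc, hu.units_inv_symm_left.eq, ← mul_assoc, hWA']
  obtain ⟨N, n, hN⟩ := h.exists_pow_smul_eq_mul_pow hloc hA hcen hK hpow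
    (hWfg.mul (Submodule.fg_unit u⁻¹)) (by rw [← mul_assoc, hAW]) hYA.le
    (hW.mul_left huJ.units_inv_symm_left) hone
  refine ⟨N, n, e, ?_⟩
  calc π ^ N • twistedSum K (A * A') J' e = π ^ N • (W * ↑u⁻¹) * u := by
        rw [smul_mul_assoc, mul_assoc, u.inv_mul, mul_one, hWdef]
    _ = A * J ^ n * u := by rw [hN]

end IsOrderWithRadical

/-- The lattice is `K ^ n` times a twisted sum of `A * A'`: by the local classification of the
lattices commuting with the radical, such a twisted sum becomes `A * J ^ n * u` over `T`. -/
theorem exists_extend_eq_mul {T E : Type*} [CommRing T] [Algebra R T] [Ring E] [Algebra R E]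
    [Algebra T E] [IsScalarTower R T E] {ι : B →ₐ[R] E} [IsNoetherianRing T]
    (h : IsOrderWithRadical (algebraMap R T π) (extend T ι A) (extend T ι J))
    (h' : IsOrderWithRadical (algebraMap R T π) (extend T ι A') (extend T ι J'))
    (hK : IsInverse (extend T ι A) (extend T ι J) (extend T ι K))
    (hloc : ∀ r : T, IsUnit r ∨ algebraMap R T π ∣ r) (hAA : A * A ≤ A) (hA : A.FG) (hA' : A'.FG)
    (hJ' : J'.FG) (hKfg : K.FG)
    (hcen : ∀ x ∈ extend T ι A, x ∈ Set.centralizer (extend T ι A : Set E) →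
      x ∈ (1 : Submodule T E))
    (hpow : ∀ y : E, ∃ n : ℕ, algebraMap R T π ^ n • y ∈ extend T ι A) {u : (Submodule T E)ˣ}
    (hu : SemiconjBy (u : Submodule T E) (extend T ι A') (extend T ι A)) :
    ∃ I : Submodule R B, I.FG ∧ A * I ≤ I ∧ extend T ι I = extend T ι A * u := by
  obtain ⟨N, n, e, hN⟩ := h.exists_pow_smul_twistedSum_eq h' hK hloc (fg_extend hA)
    (fg_extend hA') (fg_extend hJ') (fg_extend hKfg) hcen hpow hu
  refine ⟨A * K ^ n * π ^ N • twistedSum K (A * A') J' e, ?_, ?_, ?_⟩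
  · exact (hA.mul (hKfg.pow n)).mul
      ((fg_twistedSum hKfg (hA.mul hA') hJ' e).map (DistribSMul.toLinearMap R B (π ^ N)))
  · simp only [← mul_assoc]
    exact mul_le_mul_left (mul_le_mul_left hAA _) _
  · rw [map_mul, extend_smul, map_twistedSum, map_mul, map_mul, map_pow, map_pow, hN,
      ← mul_assoc, ← mul_assoc, mul_assoc (extend T ι A), mul_assoc (extend T ι A),
      hK.pow_mul_mul_pow, h.mul_self]

end LocalLattice

section Generator

theorem mem_of_map_mem_of_le_map_sup {T E : Type*} [CommRing T] [AddCommGroup E] [Module T E]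
    {N J : Submodule T E} (hN : N.FG) {ρ : E →ₗ[T] E} (hNρ : N ≤ N.comap ρ) (hJρ : J ≤ J.comap ρ)
    (h : N ≤ N.map ρ ⊔ J) {x : E} (hx : x ∈ N) (hρx : ρ x ∈ J) : x ∈ J := by
  have : Module.Finite T (N.map J.mkQ) := Module.Finite.iff_fg.2 (hN.map _)
  have hmaps : ∀ y ∈ N.map J.mkQ, J.mapQ J ρ hJρ y ∈ N.map J.mkQ := by
    rintro _ ⟨y, hy, rfl⟩
    exact ⟨ρ y, hNρ hy, rfl⟩
  have hsurj : Function.Surjective ((J.mapQ J ρ hJρ).restrict hmaps) := by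
    rintro ⟨_, y, hy, rfl⟩
    obtain ⟨_, ⟨z, hz, rfl⟩, j, hj, rfl⟩ := Submodule.mem_sup.1 (h hy)
    refine ⟨⟨J.mkQ z, z, hz, rfl⟩, Subtype.ext ?_⟩
    simpa using hj
  have hinj := OrzechProperty.injective_of_surjective_endomorphism _ hsurj
  have hx0 : (⟨J.mkQ x, x, hx, rfl⟩ : N.map J.mkQ) = 0 :=
    hinj (Subtype.ext (by simpa using hρx))
  simpa using congrArg Subtype.val hx0

variable {R B : Type*} [CommRing R] [Ring B] [Algebra R B] {π : R} {A J K I : Submodule R B}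

theorem exists_mem_forall_not_lt [IsNoetherianRing R] (hI : I.FG) {f : B → Submodule R B}
    (hf : ∀ c ∈ I, f c ≤ I) : ∃ c ∈ I, ∀ c' ∈ I, ¬ f c < f c' := by
  have : IsNoetherian R I := isNoetherian_of_fg_of_noetherian I hI
  have : WellFoundedGT (Set.Iic I) := (Submodule.mapIic I).symm.toOrderEmbedding.wellFoundedGT
  obtain ⟨_, ⟨c, rfl⟩, hc⟩ := (wellFounded_gt (α := Set.Iic I)).has_min
    (Set.range fun c : I => (⟨f c, hf c c.2⟩ : Set.Iic I)) ⟨_, ⟨0, rfl⟩⟩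
  exact ⟨c, c.2, fun c' hc' hlt => hc _ ⟨⟨c', hc'⟩, rfl⟩ hlt⟩

/-- An element `c` of `I` for which `A * c + J * I` is maximal; `e` generates modulo `J` the left
ideal of all `a ∈ A` with `a * c ∈ J * I`. Replacing `c` by `c + e * n` shows `e * I` to be
contained in `e * A * c + J * I`. -/
theorem IsOrderWithRadical.exists_generator_and_idempotent [IsNoetherianRing R]
    (h : IsOrderWithRadical π A J) (hI : I.FG) (hAI : A * I ≤ I) :
    ∃ c ∈ I, ∃ e ∈ A, e * c ∈ J * I ∧ (∀ a ∈ A, a * c ∈ J * I → a - a * e ∈ J) ∧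
      Submodule.span R {e} * I ≤ Submodule.span R {e} * A * Submodule.span R {c} ⊔ J * I := by
  have hJI : J * I ≤ I := (mul_le_mul_left h.le I).trans hAI
  have hAJI : A * (J * I) ≤ J * I := by rw [← mul_assoc, h.mul_radical]
  obtain ⟨c, hc, hmax⟩ := exists_mem_forall_not_lt hI
    (f := fun c => A * Submodule.span R {c} ⊔ J * I) fun c hc =>
      sup_le ((mul_le_mul_right (by simpa using hc) A).trans hAI) hJI
  obtain ⟨e, ⟨he, hec : e * c ∈ J * I⟩, hright⟩ := h.exists_right_identity
    (A ⊓ (J * I).comap (LinearMap.mulRight R c)) inf_le_left (le_inf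
      ((mul_le_mul_right inf_le_left A).trans h.mul_le)
      (Submodule.mul_le.2 fun a ha m hm => by
        simpa [mul_assoc] using hAJI (Submodule.mul_mem_mul ha hm.2)))
  have hee : e - e * e ∈ J := hright e ⟨he, hec⟩
  refine ⟨c, hc, e, he, hec, fun a ha hac => hright a ⟨ha, hac⟩, fun x hx => ?_⟩
  obtain ⟨n, hn, rfl⟩ := Submodule.mem_span_singleton_mul.1 hx
  have hen : e * n ∈ I := hAI (Submodule.mul_mem_mul he hn)
  have h1 : (1 : B) ∈ A := Submodule.one_le.1 h.one_le
  have hle : A * Submodule.span R {c} ⊔ J * I ≤ A * Submodule.span R {c + e * n} ⊔ J * I := by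
    have hmem : c ∈ A * Submodule.span R {c + e * n} ⊔ J * I := by
      convert Submodule.add_mem_sup
        (Submodule.mul_mem_mul (sub_mem h1 he) (Submodule.mem_span_singleton_self (c + e * n)))
        (sub_mem hec (Submodule.mul_mem_mul hee hn)) using 1
      noncomm_ring
    refine sup_le ((mul_le_mul_right ((Submodule.span_singleton_le_iff_mem _ _).2 hmem) A).trans ?_)
      le_sup_right
    rw [Submodule.mul_sup, ← mul_assoc, h.mul_self]
    exact sup_le_sup_left hAJI _
  have hmem := (hle.eq_of_not_lt (hmax _ (add_mem hc hen))).ge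
    (Submodule.mem_sup_left (h.le_order_mul _ (Submodule.mem_span_singleton_self _)))
  obtain ⟨_, hac, j, hj, hsum⟩ := Submodule.mem_sup.1 hmem
  obtain ⟨a, ha, rfl⟩ := Submodule.mem_mul_span_singleton.1 hac
  have hsub : e * n = e * (a - 1) * c + ((e - e * e) * n + e * j) := by
    calc e * n = e * (a - 1) * c + (e * n + e * c - e * (a * c)) := by noncomm_ring
      _ = _ := by rw [eq_sub_of_add_eq hsum]; noncomm_ring
  rw [hsub]
  exact Submodule.add_mem_sup
    (Submodule.mul_mem_mul (Submodule.mul_mem_mul (Submodule.mem_span_singleton_self e)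
      (sub_mem ha h1)) (Submodule.mem_span_singleton_self c))
    (add_mem (Submodule.mul_mem_mul hee hn) (hAJI (Submodule.mul_mem_mul he hj)))

variable {T E : Type*} [CommRing T] [Algebra R T] [Ring E] [Algebra R E] [Algebra T E]
  [IsScalarTower R T E] {ι : B →ₐ[R] E}

/-- Over `T` the lattice `I` is free, generated by `b`, and right multiplication by `c * b⁻¹` is a
surjective, hence injective, endomorphism of the image of `e * A` modulo the radical. -/
theorem IsOrderWithRadical.exists_generator_mod_radical [IsNoetherianRing R]
    (h : IsOrderWithRadical π A J) (hA : A.FG) (hI : I.FG) (hAI : A * I ≤ I)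
    (hJ : ∀ x, ι x ∈ extend T ι J → x ∈ J) {b : Eˣ}
    (hb : extend T ι I = extend T ι A * Submodule.span T {(b : E)}) :
    ∃ c ∈ I, ∀ a ∈ A, a * c ∈ J * I → a ∈ J := by
  obtain ⟨c, hc, e, -, hec, hright, hgen⟩ := h.exists_generator_and_idempotent hI hAI
  have hJb {x : E} (hx : x ∈ extend T ι (J * I)) : x * ↑b⁻¹ ∈ extend T ι J := by
    rw [map_mul, hb, ← mul_assoc, ← map_mul, h.radical_mul] at hx
    obtain ⟨y, hy, rfl⟩ := Submodule.mem_mul_span_singleton.1 hx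
    rwa [Units.mul_inv_cancel_right]
  have hc' : ι c * ↑b⁻¹ ∈ extend T ι A := by
    have := mem_extend (T := T) (ι := ι) hc
    rw [hb] at this
    obtain ⟨y, hy, hyc⟩ := Submodule.mem_mul_span_singleton.1 this
    rwa [← hyc, Units.mul_inv_cancel_right]
  suffices he : e ∈ J from ⟨c, hc, fun a ha hac => by
    simpa using add_mem (hright a ha hac) (h.order_mul_le (Submodule.mul_mem_mul ha he))⟩
  have hstable {X : Submodule R B} (hX : X * A = X) :
      extend T ι X ≤ (extend T ι X).comap (LinearMap.mulRight T (ι c * ↑b⁻¹)) := fun x hx => by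
    have := Submodule.mul_mem_mul hx hc'
    rwa [← map_mul, hX] at this
  have heA : Submodule.span R {e} * A * A = Submodule.span R {e} * A := by
    rw [mul_assoc, h.mul_self]
  refine hJ e (mem_of_map_mem_of_le_map_sup (N := extend T ι (Submodule.span R {e} * A))
    (fg_extend ((Submodule.fg_span_singleton e).mul hA)) (hstable heA) (hstable h.radical_mul)
    (fun x hx => ?_) (mem_extend ?_) ?_)
  · have hxb : x * b ∈ extend T ι (Submodule.span R {e} * I) := by
      rw [map_mul, hb, ← mul_assoc, ← map_mul]
      exact Submodule.mem_mul_span_singleton.2 ⟨x, hx, rfl⟩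
    have := extend_mono hgen hxb
    rw [← Submodule.add_eq_sup, map_add, map_mul _ _ (Submodule.span R {c}),
      extend_span_singleton] at this
    obtain ⟨_, hyc, j, hj, hsum⟩ := Submodule.mem_sup.1 this
    obtain ⟨y, hy, rfl⟩ := Submodule.mem_mul_span_singleton.1 hyc
    refine Submodule.mem_sup.2 ⟨_, ⟨y, hy, rfl⟩, _, hJb hj, ?_⟩
    rw [LinearMap.mulRight_apply, ← mul_assoc, ← add_mul, hsum, Units.mul_inv_cancel_right]
  · exact Submodule.mem_span_singleton_mul.2 ⟨1, Submodule.one_le.1 h.one_le, mul_one e⟩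
  · rw [LinearMap.mulRight_apply, ← mul_assoc, ← map_mul]
    exact hJb (mem_extend hec)

theorem IsOrderWithRadical.mem_mul_pow_of_mul_mem (h : IsOrderWithRadical π A J)
    (hK : IsInverse A J K) (hAI : A * I ≤ I) {c : B} (hc : ∀ a ∈ A, a * c ∈ J * I → a ∈ J) (n : ℕ) :
    ∀ a ∈ A, a * c ∈ J ^ n * I → a ∈ A * J ^ n := by
  have hK' : IsInverse A K J := ⟨hK.inv_mul, hK.mul_inv, h.mul_radical, h.radical_mul⟩
  induction n with
  | zero => exact fun a ha _ => by simpa using ha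
  | succ n ih =>
    intro a ha hac
    have hJI : J ^ (n + 1) * I ≤ J ^ n * I := by
      rw [pow_succ, mul_assoc]
      exact mul_le_mul_right ((mul_le_mul_left h.le I).trans hAI) _
    have hKJ : K ^ n * (J ^ (n + 1) * I) = J * I := by
      rw [← h.mul_pow_succ, pow_succ]
      simp only [← mul_assoc]
      rw [hK.pow_mul_mul_pow, h.mul_radical]
    have hKa : K ^ n * Submodule.span R {a} ≤ J := Submodule.mul_le.2 fun k hk x hx => by
      obtain ⟨r, rfl⟩ := Submodule.mem_span_singleton.1 hx
      rw [mul_smul_comm]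
      refine J.smul_mem r (hc _ ?_ ?_)
      · rw [← hK.pow_mul_mul_pow n, mul_assoc]
        exact Submodule.mul_mem_mul hk (ih a ha (hJI hac))
      · rw [← hKJ, mul_assoc]
        exact Submodule.mul_mem_mul hk hac
    have hle : Submodule.span R {a} ≤ A * J ^ (n + 1) := by
      calc Submodule.span R {a} ≤ A * Submodule.span R {a} := h.le_order_mul _
        _ = J ^ n * A * (K ^ n * Submodule.span R {a}) := by rw [← mul_assoc, hK'.pow_mul_mul_pow]
        _ ≤ J ^ n * A * J := mul_le_mul_right hKa _
        _ = J ^ (n + 1) := by rw [mul_assoc, h.mul_radical, pow_succ]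
        _ ≤ A * J ^ (n + 1) := h.le_order_mul _
    exact hle (Submodule.mem_span_singleton_self a)

theorem mem_of_pow_smul_mem (hπ : IsUnit (algebraMap R B π)) {c : B}
    (hc : ∀ a ∈ A, a * c ∈ π • I → a ∈ π • A) (k : ℕ) :
    ∀ y : B, π ^ k • y ∈ A → y * c ∈ I → y ∈ A := by
  induction k with
  | zero => exact fun y hy _ => by simpa using hy
  | succ k ih =>
    intro y hy hyc
    refine ih y ?_ hyc
    rw [pow_succ', mul_smul] at hy
    have := hc _ hy (by
      rw [smul_mul_assoc, smul_mul_assoc]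
      exact Submodule.smul_mem_pointwise_smul _ _ _ (I.smul_mem _ hyc))
    obtain ⟨z, hz, hzy⟩ := (Submodule.mem_smul_pointwise_iff_exists _ _ _).1 this
    rw [Algebra.smul_def, Algebra.smul_def π] at hzy
    rwa [← hπ.mul_left_cancel hzy]

theorem isUnit_of_forall_mul_mem_smul [IsNoetherianRing R] [IsArtinianRing B]
    (hπ : IsUnit (algebraMap R B π)) (hjac : π ∈ Ideal.jacobson (⊥ : Ideal R)) (hA : A.FG)
    (hpow : ∀ y : B, ∃ n : ℕ, π ^ n • y ∈ A) {c : B}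
    (hc : ∀ a ∈ A, a * c ∈ π • I → a ∈ π • A) : IsUnit c := by
  have hsmul {n : ℕ} {y : B} : π ^ n • y = 0 ↔ y = 0 := by
    rw [Algebra.smul_def, map_pow, (hπ.pow n).mul_right_eq_zero]
  have hbot : A ⊓ LinearMap.ker (LinearMap.mulRight R c) = ⊥ := by
    refine Submodule.eq_bot_of_le_smul_of_le_jacobson_bot (Ideal.span {π}) _
      (Submodule.FG.of_le hA inf_le_left) ?_ ((Ideal.span_singleton_le_iff_mem _).2 hjac)
    rintro a ⟨ha, hac : a * c = 0⟩
    obtain ⟨a', ha', rfl⟩ :=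
      (Submodule.mem_smul_pointwise_iff_exists _ _ _).1 (hc a ha (hac ▸ zero_mem _))
    rw [smul_mul_assoc, ← pow_one π, hsmul] at hac
    exact Submodule.smul_mem_smul (Ideal.mem_span_singleton_self π) ⟨ha', hac⟩
  refine IsArtinianRing.isUnit_iff_isRightRegular.2
    (isRightRegular_iff_mem_nonZeroDivisorsRight.2 fun y hy => ?_)
  obtain ⟨n, hn⟩ := hpow y
  have hmem : π ^ n • y ∈ A ⊓ LinearMap.ker (LinearMap.mulRight R c) :=
    ⟨hn, by simp [hy]⟩
  rwa [hbot, Submodule.mem_bot, hsmul] at hmem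

theorem IsOrderWithRadical.exists_eq_mul_span [IsNoetherianRing R] [IsArtinianRing B]
    (h : IsOrderWithRadical π A J) (hK : IsInverse A J K) {e : ℕ} (he : π • A = J ^ (e + 1))
    (hπ : IsUnit (algebraMap R B π)) (hjac : π ∈ Ideal.jacobson (⊥ : Ideal R)) (hA : A.FG)
    (hpow : ∀ y : B, ∃ n : ℕ, π ^ n • y ∈ A) (hI : I.FG) (hAI : A * I ≤ I)
    (hJ : ∀ x, ι x ∈ extend T ι J → x ∈ J) {b : Eˣ}
    (hb : extend T ι I = extend T ι A * Submodule.span T {(b : E)}) :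
    ∃ c : Bˣ, I = A * Submodule.span R {(c : B)} := by
  obtain ⟨c, hcI, hc⟩ := h.exists_generator_mod_radical hA hI hAI hJ hb
  have hcπ : ∀ a ∈ A, a * c ∈ π • I → a ∈ π • A := fun a ha hac => by
    rw [he, ← h.mul_pow_succ]
    refine h.mem_mul_pow_of_mul_mem hK hAI hc _ a ha ?_
    rw [← he, smul_mul_assoc]
    exact smul_le_smul_left _ ((le_mul_of_one_le_left' h.one_le : I ≤ A * I)) hac
  obtain ⟨c, rfl⟩ := isUnit_of_forall_mul_mem_smul hπ hjac hA hpow hcπ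
  refine ⟨c, le_antisymm (fun x hx => ?_)
    ((mul_le_mul_right ((Submodule.span_singleton_le_iff_mem _ _).2 hcI) A).trans hAI)⟩
  obtain ⟨k, hk⟩ := hpow (x * ↑c⁻¹)
  exact Submodule.mem_mul_span_singleton.2 ⟨x * ↑c⁻¹,
    mem_of_pow_smul_mem hπ hcπ k _ hk (by rwa [Units.inv_mul_cancel_right]),
    Units.inv_mul_cancel_right _ _⟩

theorem semiconjBy_of_mul_eq_mul {M : Type*} [Monoid M] [PartialOrder M] [MulLeftMono M]
    [MulRightMono M] {a a' : M} {u v : Mˣ} (h1 : 1 ≤ a) (haa : a * a ≤ a) (hv : a * v = a * u)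
    (hu : SemiconjBy (u : M) a' a) : SemiconjBy (v : M) a' a := by
  obtain ⟨w, rfl⟩ : ∃ w, v = w * u := ⟨v * u⁻¹, by simp⟩
  have hw : a * w = a := by
    simpa [← mul_assoc] using hv
  have hw' : a * ↑w⁻¹ = a := by
    rw [Units.mul_inv_eq_iff_eq_mul, hw]
  have hle {w : Mˣ} (hw : a * w = a) : w * a ≤ a := by
    calc w * a ≤ a * w * a := mul_le_mul_left (le_mul_of_one_le_left' h1) a
      _ ≤ a := by rwa [hw]
  have hwa : w * a = a := le_antisymm (hle hw) (by
    calc a = w * (↑w⁻¹ * a) := by rw [Units.mul_inv_cancel_left]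
      _ ≤ w * a := mul_le_mul_right (hle hw') _)
  rw [SemiconjBy, Units.val_mul, mul_assoc, hu.eq, ← mul_assoc, hwa, ← mul_assoc, hw]

end Generator

section LocalConjugacy

variable {R B : Type*} [CommRing R] [Ring B] [Algebra R B] {π : R} {A J K A' J' : Submodule R B}

theorem IsInverse.fg [IsNoetherianRing R] (hK : IsInverse A J K) (hπ : IsUnit (algebraMap R B π))
    (hA : A.FG) (hJ : π • A ≤ J) : K.FG := by
  have hinj : Function.Injective (DistribSMul.toLinearMap R B π) := fun x y hxy => by
    simpa [Algebra.smul_def, hπ.mul_right_inj] using hxy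
  refine Submodule.fg_of_fg_map_injective _ hinj (Submodule.FG.of_le hA ?_)
  change π • K ≤ A
  calc π • K = π • A * K := by rw [smul_mul_assoc, hK.order_mul]
    _ ≤ J * K := mul_le_mul_left hJ K
    _ = A := hK.mul_inv

variable {T E : Type*} [CommRing T] [Algebra R T] [Ring E] [Algebra R E] [Algebra T E]
  [IsScalarTower R T E] {ι : B →ₐ[R] E}

theorem IsInverse.extend (hK : IsInverse A J K) :
    IsInverse (extend T ι A) (extend T ι J) (extend T ι K) := by
  constructor <;> rw [← map_mul]
  exacts [congrArg _ hK.mul_inv, congrArg _ hK.inv_mul, congrArg _ hK.order_mul,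
    congrArg _ hK.mul_order]

end LocalConjugacy

section LatticeDescent

theorem exists_algebraMap_eq_of_algebraMap_eq {R T F L : Type*} [CommRing R] [IsDomain R]
    [ValuationRing R] [CommRing T] [Algebra R T] [IsLocalHom (algebraMap R T)] [Field F]
    [Algebra R F] [IsFractionRing R F] [Field L] [Algebra F L] [Algebra R L] [Algebra T L]
    [IsScalarTower R F L] [IsScalarTower R T L] [FaithfulSMul T L] {x : F} {t : T}
    (h : algebraMap T L t = algebraMap F L x) : ∃ r, algebraMap R F r = x := by
  obtain hx | ⟨s, hs⟩ := ValuationRing.isInteger_or_isInteger R x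
  · exact hx
  obtain rfl | hx0 := eq_or_ne x 0
  · exact ⟨0, map_zero _⟩
  have hst : algebraMap R T s * t = 1 := FaithfulSMul.algebraMap_injective T L (by
    rw [map_mul, ← IsScalarTower.algebraMap_apply, IsScalarTower.algebraMap_apply R F L, hs, h,
      ← map_mul, inv_mul_cancel₀ hx0, map_one, map_one])
  obtain ⟨s, rfl⟩ := isUnit_of_map_unit (algebraMap R T) s (IsUnit.of_mul_eq_one _ hst)
  refine ⟨↑s⁻¹, ?_⟩
  rw [map_units_inv, hs, inv_inv]

theorem exists_pow_smul_mem {R F V : Type*} [CommRing R] [IsDomain R] [IsDiscreteValuationRing R]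
    [Field F] [Algebra R F] [IsFractionRing R F] [AddCommGroup V] [Module R V] [Module F V]
    [IsScalarTower R F V] (X : Submodule R V) [X.IsLattice F] {π : R} (hπ : Irreducible π)
    (y : V) : ∃ n : ℕ, π ^ n • y ∈ X := by
  have hy : y ∈ Submodule.span F (X : Set V) := by
    rw [Submodule.IsLattice.span_eq_top]
    trivial
  obtain ⟨x, hx, z, rfl⟩ := (IsLocalization.mem_span_iff (nonZeroDivisors R)).1 hy
  obtain ⟨n, w, hw⟩ :=
    IsDiscreteValuationRing.eq_unit_mul_pow_irreducible (nonZeroDivisors.ne_zero z.2) hπ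
  refine ⟨n, ?_⟩
  have : π ^ n • IsLocalization.mk' F 1 z = algebraMap R F ↑w⁻¹ := by
    rw [Algebra.smul_def, ← IsLocalization.mk'_eq_mul_mk'_one, IsLocalization.mk'_eq_iff_eq_mul, hw,
      ← map_mul, Units.inv_mul_cancel_left]
  rw [← smul_assoc, this, algebraMap_smul]
  exact X.smul_mem _ (by simpa using hx)

theorem mem_one_of_mem_centralizer {R F B : Type*} [CommRing R] [IsIntegrallyClosed R]
    [Field F] [Algebra R F] [IsFractionRing R F] [Ring B] [Algebra R B] [Algebra F B]
    [IsScalarTower R F B] [Nontrivial B] [Algebra.IsCentral F B] {A : Submodule R B}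
    [A.IsLattice F] (h1 : 1 ≤ A) (hAA : A * A ≤ A) {x : B} (hxA : x ∈ A)
    (hx : x ∈ Set.centralizer (A : Set B)) : x ∈ (1 : Submodule R B) := by
  have hspan : Submodule.span F (A : Set B) ≤ (Subalgebra.centralizer F {x}).toSubmodule :=
    Submodule.span_le.2 fun a ha =>
      (Subalgebra.mem_centralizer_iff F).2 (by simpa using (hx a ha).symm)
  have hcenter : x ∈ Subalgebra.center F B := Subalgebra.mem_center_iff.2 fun y => by
    have hy : y ∈ Subalgebra.centralizer F {x} := hspan (by
      rw [Submodule.IsLattice.span_eq_top]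
      trivial)
    exact ((Subalgebra.mem_centralizer_iff F).1 hy x rfl).symm
  obtain ⟨f, rfl⟩ := (Algebra.IsCentral.mem_center_iff F).1 hcenter
  have hf : IsIntegral R (algebraMap F B f) := IsIntegral.of_mem_of_fg
    (A.toSubalgebra (Submodule.one_le.1 h1) fun _ _ hx hy => hAA (Submodule.mul_mem_mul hx hy))
    (Submodule.IsLattice.fg : A.FG) _ hxA
  obtain ⟨r, rfl⟩ := IsIntegrallyClosed.isIntegral_iff.1
    ((isIntegral_algebraMap_iff (algebraMap F B).injective).1 hf)
  exact Submodule.mem_one.2 ⟨r, IsScalarTower.algebraMap_apply R F B r⟩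

theorem mem_of_mem_extend {R T F L B : Type*} [CommRing R] [IsDomain R]
    [IsDiscreteValuationRing R] [CommRing T] [IsDomain T] [Algebra R T]
    [IsLocalHom (algebraMap R T)] [Field F] [Algebra R F] [IsFractionRing R F] [Field L]
    [Algebra F L] [Algebra R L] [Algebra T L] [IsScalarTower R F L] [IsScalarTower R T L]
    [FaithfulSMul T L] [Ring B] [Algebra R B]
    [Algebra F B] [IsScalarTower R F B] (X : Submodule R B) [X.IsLattice F] {x : B}
    (hx : (Algebra.TensorProduct.includeRight.restrictScalars R : B →ₐ[R] L ⊗[F] B) x ∈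
      extend T (Algebra.TensorProduct.includeRight.restrictScalars R) X) : x ∈ X := by
  have : Module.Free R X := Submodule.IsLattice.free F X
  let b := Module.Free.chooseBasis R X
  have hb : Submodule.span R (Set.range (b.extendOfIsLattice F)) = X := by
    have : ⇑(b.extendOfIsLattice F) = X.subtype ∘ b :=
      funext fun i => b.extendOfIsLattice_apply F i
    rw [this, Set.range_comp, Submodule.span_image, b.span_eq, Submodule.map_subtype_top]
  have hbX : extend T (Algebra.TensorProduct.includeRight.restrictScalars R) X =
      Submodule.span T (Set.range (Algebra.TensorProduct.basis L (b.extendOfIsLattice F))) := by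
    refine (congrArg _ hb.symm).trans ?_
    rw [extend_span, ← Set.range_comp]
    congr 2
    ext i
    simp
  rw [hbX, Module.Basis.mem_span_iff_repr_mem] at hx
  rw [← hb, Module.Basis.mem_span_iff_repr_mem]
  intro i
  obtain ⟨t, ht⟩ := hx i
  exact exists_algebraMap_eq_of_algebraMap_eq (L := L) (t := t) (by simpa using ht)

theorem isLattice_of_smul_le {R F V : Type*} [CommRing R] [IsNoetherianRing R] [CommRing F]
    [Algebra R F] [AddCommGroup V] [Module R V] [Module F V] [IsScalarTower R F V]
    {X Y : Submodule R V} [X.IsLattice F] {r : R} (hr : IsUnit (algebraMap R F r))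
    (hY : r • X ≤ Y) (hYX : Y ≤ X) : Y.IsLattice F where
  fg := Submodule.FG.of_le (Submodule.IsLattice.fg : X.FG) hYX
  span_eq_top := by
    rw [eq_top_iff, ← Submodule.IsLattice.span_eq_top (A := F) (M := X), Submodule.span_le]
    intro x hx
    rw [SetLike.mem_coe, ← Submodule.smul_mem_iff_of_isUnit _ hr, algebraMap_smul]
    exact Submodule.subset_span (hY (Submodule.smul_mem_pointwise_smul _ _ _ hx))

section Tower

variable {R T T' B E : Type*} [CommRing R] [CommRing T] [CommRing T'] [Algebra R T] [Algebra R T']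
  [Ring B] [Algebra R B] [Ring E] [Algebra R E] [Algebra T E] [Algebra T' E] [IsScalarTower R T E]
  [IsScalarTower R T' E] [Algebra T T'] [IsScalarTower T T' E]

theorem span_extend {ι : B →ₐ[R] E} (X : Submodule R B) :
    Submodule.span T' (extend T ι X : Set E) = extend T' ι X :=
  Submodule.span_span_of_tower T T' _

theorem extend_id [Algebra T B] [IsScalarTower R T B] (X : Submodule R B) :
    extend T (AlgHom.id R B) X = Submodule.span T (X : Set B) :=
  congrArg (Submodule.span T) (Set.image_id (X : Set B))

theorem extend_extend_id [Algebra T B] [IsScalarTower R T B] {ι : B →ₐ[T] E} (X : Submodule R B) :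
    extend T' ι (extend T (AlgHom.id R B) X) = extend T' (ι.restrictScalars R) X := by
  rw [extend_id, extend_span]
  rfl

end Tower

section Descent

variable {R T F L B : Type*} [CommRing R] [CommRing T] [Algebra R T] [Field F] [Field L]
  [Algebra F L] [Algebra R F] [Algebra R L] [Algebra T L] [IsScalarTower R F L]
  [IsScalarTower R T L] [Ring B] [Algebra R B] [Algebra F B] [IsScalarTower R F B]

instance isLattice_extend (X : Submodule R B) [X.IsLattice F] :
    (extend T (Algebra.TensorProduct.includeRight.restrictScalars R : B →ₐ[R] L ⊗[F] B)
      X).IsLattice L where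
  fg := fg_extend Submodule.IsLattice.fg
  span_eq_top := by
    rw [span_extend, ← extend_extend_id (T := F), extend_id, Submodule.IsLattice.span_eq_top,
      ← baseChange_eq_extend, Submodule.baseChange_top]

end Descent

end LatticeDescent

section LocalDescent

theorem isUnit_or_dvd_of_irreducible {R : Type*} [CommRing R] [IsDomain R]
    [IsDiscreteValuationRing R] {π : R} (hπ : Irreducible π) (r : R) : IsUnit r ∨ π ∣ r := by
  rw [← Ideal.mem_span_singleton, ← hπ.maximalIdeal_eq, IsLocalRing.mem_maximalIdeal]
  exact em _

theorem isLocalHom_of_irreducible {R T : Type*} [CommRing R] [IsDomain R]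
    [IsDiscreteValuationRing R] [CommRing T] [Algebra R T] {π : R} (hπ : Irreducible π)
    (hπT : Irreducible (algebraMap R T π)) : IsLocalHom (algebraMap R T) where
  map_nonunit r hr := (isUnit_or_dvd_of_irreducible hπ r).resolve_right fun h =>
    hπT.not_isUnit (isUnit_of_dvd_unit (map_dvd _ h) hr)

variable {R T F L B : Type*} [CommRing R] [IsDomain R] [IsDiscreteValuationRing R] [CommRing T]
  [IsDomain T] [Algebra R T] [Field F] [Algebra R F] [IsFractionRing R F] [Field L] [Algebra F L]
  [Algebra R L] [Algebra T L] [IsScalarTower R F L] [IsScalarTower R T L] [Ring B] [Algebra R B]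
  [Algebra F B] [IsScalarTower R F B]

theorem semiconjBy_of_semiconjBy_extend [IsLocalHom (algebraMap R T)] [FaithfulSMul T L]
    {A A' : Submodule R B} [A.IsLattice F] [A'.IsLattice F] {c : Bˣ}
    (h : SemiconjBy
      (extend T (Algebra.TensorProduct.includeRight.restrictScalars R : B →ₐ[R] L ⊗[F] B)
        (Submodule.span R {(c : B)}))
      (extend T (Algebra.TensorProduct.includeRight.restrictScalars R) A')
      (extend T (Algebra.TensorProduct.includeRight.restrictScalars R) A)) :
    SemiconjBy (Submodule.span R {(c : B)}) A' A := by
  obtain ⟨ι, hι⟩ : ∃ ι : B →ₐ[R] L ⊗[F] B,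
    ι = Algebra.TensorProduct.includeRight.restrictScalars R := ⟨_, rfl⟩
  rw [← hι] at h
  have hAι {x : B} (hx : ι x ∈ extend T ι A) : x ∈ A := mem_of_mem_extend A (by rwa [hι] at hx)
  have hAι' {x : B} (hx : ι x ∈ extend T ι A') : x ∈ A' := mem_of_mem_extend A' (by rwa [hι] at hx)
  have hι1 : ι ↑c * ι ↑c⁻¹ = 1 := by rw [← map_mul, Units.mul_inv, map_one]
  have hι2 : ι ↑c⁻¹ * ι ↑c = 1 := by rw [← map_mul, Units.inv_mul, map_one]
  rw [extend_span_singleton] at h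
  refine le_antisymm (fun x hx => ?_) fun x hx => ?_
  · obtain ⟨a, ha, rfl⟩ := Submodule.mem_span_singleton_mul.1 hx
    obtain ⟨z, hz, hza⟩ := Submodule.mem_mul_span_singleton.1
      (h.eq.le (Submodule.mem_span_singleton_mul.2 ⟨ι a, mem_extend ha, rfl⟩))
    refine Submodule.mem_mul_span_singleton.2 ⟨c * a * ↑c⁻¹, hAι ?_, by simp⟩
    rwa [map_mul, map_mul, ← hza, mul_assoc, hι1, mul_one]
  · obtain ⟨a, ha, rfl⟩ := Submodule.mem_mul_span_singleton.1 hx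
    obtain ⟨z, hz, hza⟩ := Submodule.mem_span_singleton_mul.1
      (h.eq.ge (Submodule.mem_mul_span_singleton.2 ⟨ι a, mem_extend ha, rfl⟩))
    refine Submodule.mem_span_singleton_mul.2 ⟨↑c⁻¹ * (a * c), hAι' ?_, by simp⟩
    rwa [map_mul, map_mul, ← hza, ← mul_assoc, hι2, one_mul]

variable [IsDiscreteValuationRing T] [IsFractionRing T L] [IsAzumaya F B] {π : R}
  (hπ : Irreducible π) (hπT : Irreducible (algebraMap R T π)) {A J K A' J' : Submodule R B}
  [A.IsLattice F] [A'.IsLattice F] {ι : B →ₐ[R] L ⊗[F] B}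
  (hι : ι = Algebra.TensorProduct.includeRight.restrictScalars R)
  (hA : IsOrderWithRadical π A J) (hA' : IsOrderWithRadical π A' J') (hK : IsInverse A J K)
  (hT : IsOrderWithRadical (algebraMap R T π) (extend T ι A) (extend T ι J))
  (hT' : IsOrderWithRadical (algebraMap R T π) (extend T ι A') (extend T ι J'))
  {b : (L ⊗[F] B)ˣ}
  (hb : SemiconjBy (Submodule.span T {(b : L ⊗[F] B)}) (extend T ι A') (extend T ι A))
include hπ hπT hι hA hA' hK hT hT' hb

theorem exists_extend_mul_span_eq :
    ∃ c : Bˣ, extend T ι A * Submodule.span T {ι c} =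
      extend T ι A * Submodule.span T {(b : L ⊗[F] B)} := by
  have hπF : IsUnit (algebraMap R F π) := IsUnit.mk0 _ (by simpa using hπ.ne_zero)
  have hπB : IsUnit (algebraMap R B π) := by
    rw [IsScalarTower.algebraMap_apply R F B]
    exact hπF.map _
  have : IsAzumaya L (L ⊗[F] B) := isAzumaya_baseChange F B L
  have : Nontrivial B := (FaithfulSMul.algebraMap_injective F B).nontrivial
  have : IsArtinianRing B := .of_finite F B
  have : IsLocalHom (algebraMap R T) := isLocalHom_of_irreducible hπ hπT
  have : J.IsLattice F := isLattice_of_smul_le hπF hA.smul_le hA.le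
  have : J'.IsLattice F := isLattice_of_smul_le hπF hA'.smul_le hA'.le
  have : (extend T ι A).IsLattice L := hι ▸ isLattice_extend A
  have hAfg : A.FG := Submodule.IsLattice.fg
  obtain ⟨u, hu⟩ : ∃ u : (Submodule T (L ⊗[F] B))ˣ, (u : Submodule T (L ⊗[F] B)) =
    Submodule.span T {(b : L ⊗[F] B)} := ⟨Units.map (Submodule.spanSingleton T).toMonoidHom b, rfl⟩
  rw [← hu] at hb
  obtain ⟨I, hI, hAI, hIu⟩ := exists_extend_eq_mul hT hT' hK.extend
    (isUnit_or_dvd_of_irreducible hπT) hA.mul_self.le hAfg Submodule.IsLattice.fg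
    Submodule.IsLattice.fg (hK.fg hπB hAfg hA.smul_le)
    (fun _ hxA hx => mem_one_of_mem_centralizer (F := L) hT.one_le hT.mul_le hxA hx)
    (exists_pow_smul_mem (F := L) _ hπT) hb
  obtain ⟨e, he⟩ := hA.exists_smul_eq_pow (isUnit_or_dvd_of_irreducible hπ) hAfg
    (fun _ hxA hx => mem_one_of_mem_centralizer (F := F) hA.one_le hA.mul_le hxA hx) hK
  have hjac : π ∈ Ideal.jacobson (⊥ : Ideal R) := by
    rw [IsLocalRing.jacobson_eq_maximalIdeal _ bot_ne_top]
    exact hπ.not_isUnit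
  have hJ (x : B) (hx : ι x ∈ extend T ι J) : x ∈ J :=
    mem_of_mem_extend (L := L) (T := T) J (by rwa [hι] at hx)
  obtain ⟨c, rfl⟩ := hA.exists_eq_mul_span (b := b) hK he hπB hjac hAfg
    (exists_pow_smul_mem (F := F) A hπ) hI hAI hJ (by rw [hIu, hu])
  exact ⟨c, by rw [← extend_span_singleton, ← map_mul, hIu, hu]⟩

theorem exists_semiconjBy_of_semiconjBy_extend :
    ∃ c : Bˣ, SemiconjBy (Submodule.span R {(c : B)}) A' A := by
  obtain ⟨c, hc⟩ := exists_extend_mul_span_eq hπ hπT hι hA hA' hK hT hT' hb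
  have : IsLocalHom (algebraMap R T) := isLocalHom_of_irreducible hπ hπT
  refine ⟨c, semiconjBy_of_semiconjBy_extend (T := T) (F := F) (L := L) ?_⟩
  rw [← hι, extend_span_singleton]
  exact semiconjBy_of_mul_eq_mul
    (u := Units.map (Submodule.spanSingleton T).toMonoidHom b)
    (v := Units.map ((Submodule.spanSingleton T).toMonoidHom.comp (ι : B →* L ⊗[F] B)) c)
    hT.one_le hT.mul_le hc hb

end LocalDescent

section Gluing

theorem exists_forall_sub_mem {ι R M : Type*} [Finite ι] [CommRing R] [AddCommGroup M] [Module R M]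
    {π : ι → R} (hπ : Pairwise (Function.onFun IsCoprime π)) (X : ι → Submodule R M)
    (hX : ∀ i y, ∃ n : ℕ, π i ^ n • y ∈ X i) (c : ι → M) : ∃ x, ∀ i, x - c i ∈ X i := by
  classical
  have := Fintype.ofFinite ι
  choose n hn using fun i j => hX i (c j)
  have hcop : Pairwise (Function.onFun IsCoprime fun i => Ideal.span {π i ^ ∑ j, n i j}) :=
    fun i j hij => by
      rw [Function.onFun, Ideal.isCoprime_span_singleton_iff]
      exact (hπ hij).pow
  choose ε hε using fun j => Ideal.exists_forall_sub_mem_ideal hcop (Pi.single j (1 : R))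
  refine ⟨∑ j, ε j • c j, fun i => ?_⟩
  have h : ∑ j, ε j • c j - c i = ∑ j, (ε j - (Pi.single j 1 : ι → R) i) • c j := by
    simp [sub_smul, Finset.sum_sub_distrib, Pi.single_apply]
  rw [h]
  refine sum_mem fun j _ => ?_
  obtain ⟨r, hr⟩ := Ideal.mem_span_singleton.1 (hε j i)
  rw [hr, ← Finset.sum_erase_add _ _ (Finset.mem_univ j), pow_add, mul_right_comm, mul_smul]
  exact Submodule.smul_mem _ _ (hn i j)

theorem exists_unit_mul_span_eq {R B : Type*} [CommRing R] [Ring B] [Algebra R B]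
    [IsDedekindFiniteMonoid B] {π : R} (hπ : π ∈ Ideal.jacobson (⊥ : Ideal R)) {A : Submodule R B}
    (hA : A.FG) (h1 : 1 ≤ A) (hAA : A * A ≤ A) {c : Bˣ} {x : B}
    (hx : x - c ∈ π • (A * Submodule.span R {(c : B)})) :
    ∃ u : Bˣ, (u : B) = x ∧ A * Submodule.span R {(u : B)} = A * Submodule.span R {(c : B)} := by
  obtain ⟨X, hX⟩ : ∃ X, X = A * Submodule.span R {(c : B)} := ⟨_, rfl⟩
  rw [← hX] at hx
  have hAX : A * X ≤ X := by
    rw [hX, ← mul_assoc]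
    exact mul_le_mul_left hAA _
  have hle : X ≤ A * Submodule.span R {x} := by
    refine Submodule.le_of_le_smul_of_le_jacobson_bot (I := Ideal.span {π})
      (hX ▸ hA.mul (Submodule.fg_span_singleton _))
      ((Ideal.span_singleton_le_iff_mem _).2 hπ) ?_
    rw [Submodule.ideal_span_singleton_smul]
    intro y hy
    obtain ⟨a, ha, rfl⟩ := Submodule.mem_mul_span_singleton.1 (hX ▸ hy)
    have hax : a * (x - c) ∈ π • X :=
      (mul_smul_comm π A X ▸ smul_mono_right π hAX) (Submodule.mul_mem_mul ha hx)
    rw [← sub_sub_cancel (a * x) (a * c), ← mul_sub]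
    exact sub_mem (Submodule.mem_sup_left (Submodule.mem_mul_span_singleton.2 ⟨a, ha, rfl⟩))
      (Submodule.mem_sup_right hax)
  have hcX : (c : B) ∈ X :=
    hX ▸ Submodule.mem_mul_span_singleton.2 ⟨1, Submodule.one_le.1 h1, one_mul _⟩
  have hxX : x ∈ X := by
    rw [← sub_add_cancel x c]
    exact add_mem (Submodule.smul_le_self_of_tower π X hx) hcX
  obtain ⟨a, -, ha⟩ := Submodule.mem_mul_span_singleton.1 (hle hcX)
  obtain ⟨u, rfl⟩ : IsUnit x := IsUnit.of_mul_eq_one_right (↑c⁻¹ * a) (by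
    rw [mul_assoc, ha, Units.inv_mul])
  refine ⟨u, rfl, hX ▸ le_antisymm ?_ hle⟩
  exact (mul_le_mul_right ((Submodule.span_singleton_le_iff_mem _ _).2 hxX) A).trans hAX

variable {R B : Type*} [CommRing R] [Ring B] [Algebra R B]
  (Rp : MaximalSpectrum R → Type*) [∀ p, CommRing (Rp p)] [∀ p, Algebra R (Rp p)]
  [∀ p : MaximalSpectrum R, IsLocalization.AtPrime (Rp p) p.asIdeal] [∀ p, Algebra (Rp p) B]
  [∀ p, IsScalarTower R (Rp p) B]

include Rp

theorem le_of_forall_extend_le {X Y : Submodule R B}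
    (h : ∀ p, extend (Rp p) (AlgHom.id R B) X ≤ extend (Rp p) (AlgHom.id R B) Y) : X ≤ Y := by
  intro x hx
  suffices hY : Y.comap (LinearMap.toSpanSingleton R B x) = ⊤ by
    simpa using hY.ge (Submodule.mem_top (x := (1 : R)))
  by_contra hY
  obtain ⟨p, hle⟩ : ∃ p : MaximalSpectrum R, _ ≤ p.asIdeal :=
    let ⟨m, hm, hle⟩ := Ideal.exists_le_maximal _ hY
    ⟨⟨m, hm⟩, hle⟩
  have hxY := h p (mem_extend hx)
  rw [extend_id, IsLocalization.mem_span_iff p.asIdeal.primeCompl, Submodule.span_eq] at hxY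
  obtain ⟨y, hy, z, hz⟩ := hxY
  refine z.2 (hle ?_)
  have hzy : (z : R) • x = y := by
    rw [AlgHom.id_apply] at hz
    rw [hz, ← algebraMap_smul (Rp p), smul_smul, ← IsLocalization.mk'_eq_mul_mk'_one]
    simp
  simpa [hzy] using hy

theorem semiconjBy_of_forall_extend {c : B} {A A' : Submodule R B}
    (h : ∀ p, SemiconjBy (Submodule.span (Rp p) {c})
      (extend (Rp p) (AlgHom.id R B) A') (extend (Rp p) (AlgHom.id R B) A)) :
    SemiconjBy (Submodule.span R {c}) A' A := by
  have h' (p) : extend (Rp p) (AlgHom.id R B) (Submodule.span R {c} * A') =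
      extend (Rp p) (AlgHom.id R B) (A * Submodule.span R {c}) := by
    rw [map_mul, map_mul, extend_span_singleton]
    exact h p
  exact le_antisymm (le_of_forall_extend_le Rp fun p => (h' p).le)
    (le_of_forall_extend_le Rp fun p => (h' p).ge)

theorem algebraMap_mem_jacobson_bot {π : R} (p : MaximalSpectrum R)
    (hπ : p.asIdeal = Ideal.span {π}) :
    algebraMap R (Rp p) π ∈ Ideal.jacobson (⊥ : Ideal (Rp p)) := by
  have := IsLocalization.AtPrime.isLocalRing (Rp p) p.asIdeal
  rw [IsLocalRing.jacobson_eq_maximalIdeal _ bot_ne_top,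
    IsLocalization.AtPrime.to_map_mem_maximal_iff (Rp p) p.asIdeal, hπ]
  exact Ideal.mem_span_singleton_self π

theorem exists_semiconjBy_of_forall_extend [IsDedekindFiniteMonoid B] [Nontrivial R]
    [Finite (MaximalSpectrum R)] {π : MaximalSpectrum R → R}
    (hπ : ∀ p, p.asIdeal = Ideal.span {π p}) {A A' : Submodule R B} (hA : A.FG) (h1 : 1 ≤ A)
    (hAA : A * A ≤ A)
    (hpow : ∀ p y, ∃ n : ℕ, π p ^ n • y ∈ extend (Rp p) (AlgHom.id R B) A)
    (h : ∀ p, ∃ c : Bˣ, SemiconjBy (Submodule.span (Rp p) {(c : B)})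
      (extend (Rp p) (AlgHom.id R B) A') (extend (Rp p) (AlgHom.id R B) A)) :
    ∃ c : Bˣ, SemiconjBy (Submodule.span R {(c : B)}) A' A := by
  choose c hc using h
  have hcop : Pairwise (Function.onFun IsCoprime π) := fun p q hpq => by
    rw [Function.onFun, ← Ideal.isCoprime_span_singleton_iff, ← hπ, ← hπ]
    exact Ideal.isCoprime_of_isMaximal fun h => hpq (MaximalSpectrum.ext h)
  obtain ⟨x, hx⟩ := exists_forall_sub_mem hcop (fun p => (algebraMap R (Rp p) (π p) •
      (extend (Rp p) (AlgHom.id R B) A * Submodule.span (Rp p) {(c p : B)})).restrictScalars R)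
    (fun p y => by
      obtain ⟨n, hn⟩ := hpow p (y * ↑(c p)⁻¹)
      refine ⟨n + 1, ?_⟩
      rw [pow_succ', mul_smul, ← algebraMap_smul (Rp p) (π p), Submodule.restrictScalars_mem]
      exact Submodule.smul_mem_pointwise_smul _ _ _
        (Submodule.mem_mul_span_singleton.2 ⟨_, hn, by simp⟩)) fun p => c p
  have hle (p) : 1 ≤ extend (Rp p) (AlgHom.id R B) A :=
    (map_one (extend (Rp p) (AlgHom.id R B))).ge.trans (extend_mono h1)
  have hmul (p) : extend (Rp p) (AlgHom.id R B) A * extend (Rp p) (AlgHom.id R B) A ≤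
      extend (Rp p) (AlgHom.id R B) A :=
    (map_mul (extend (Rp p) (AlgHom.id R B)) A A).ge.trans (extend_mono hAA)
  choose u hux hu using fun p => exists_unit_mul_span_eq
    (algebraMap_mem_jacobson_bot Rp p (hπ p)) (fg_extend hA) (hle p) (hmul p) (hx p)
  obtain ⟨v, rfl⟩ : IsUnit x := hux (Classical.arbitrary _) ▸ (u _).isUnit
  refine ⟨v, semiconjBy_of_forall_extend Rp fun p => ?_⟩
  simp only [hux] at hu
  exact semiconjBy_of_mul_eq_mul
    (u := Units.map (Submodule.spanSingleton (Rp p)).toMonoidHom (c p))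
    (v := Units.map (Submodule.spanSingleton (Rp p)).toMonoidHom v) (hle p) (hmul p) (hu p) (hc p)

end Gluing

section UnramifiedLocalization

section PrincipalMaximalIdeal

variable {T : Type*} [CommRing T] [IsLocalRing T] [IsNoetherianRing T] {π : T}
  (hπ : IsLocalRing.maximalIdeal T = Ideal.span {π})
include hπ

theorem exists_eq_pow_mul_unit {x : T} (hx : x ≠ 0) : ∃ (n : ℕ) (u : Tˣ), x = π ^ n * u := by
  have hfin : FiniteMultiplicity π x := by
    by_contra h
    rw [FiniteMultiplicity.not_iff_forall] at h
    refine hx ?_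
    rw [← Ideal.mem_bot, ← Ideal.iInf_pow_eq_bot_of_isLocalRing (IsLocalRing.maximalIdeal T)
      Ideal.IsPrime.ne_top', Ideal.mem_iInf]
    intro n
    rw [hπ, Ideal.span_singleton_pow, Ideal.mem_span_singleton]
    exact h n
  obtain ⟨y, hxy, hy⟩ := hfin.exists_eq_pow_mul_and_not_dvd
  rw [← Ideal.mem_span_singleton, ← hπ, IsLocalRing.notMem_maximalIdeal] at hy
  exact ⟨_, hy.unit, hxy⟩

theorem isDomain_of_maximalIdeal_eq_span (hreg : IsLeftRegular π) : IsDomain T := by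
  have : NoZeroDivisors T := ⟨fun {x y} hxy => or_iff_not_imp_left.2 fun hx => by
    obtain ⟨n, u, rfl⟩ := exists_eq_pow_mul_unit hπ hx
    rw [mul_assoc] at hxy
    exact u.mul_right_eq_zero.1 ((hreg.pow n).mul_left_eq_zero_iff.1 hxy)⟩
  exact NoZeroDivisors.to_isDomain T

theorem isDiscreteValuationRing_of_maximalIdeal_eq_span [IsDomain T] (hπ0 : π ≠ 0) :
    IsDiscreteValuationRing T :=
  .ofHasUnitMulPowIrreducibleFactorization
    ⟨π, IsDiscreteValuationRing.irreducible_of_span_eq_maximalIdeal π hπ0 hπ, fun {_} hx =>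
      let ⟨n, u, h⟩ := exists_eq_pow_mul_unit hπ hx
      ⟨n, u, h.symm⟩⟩

end PrincipalMaximalIdeal

variable {R S : Type*} [CommRing R] [CommRing S] [Algebra R S] {π : R}

theorem exists_liesOver_span [Module.FaithfullyFlat R S] (hπ : (Ideal.span {π}).IsPrime) :
    ∃ q : Ideal S, q.IsPrime ∧ q.LiesOver (Ideal.span {π}) := by
  obtain ⟨⟨q, hq⟩, h⟩ :=
    PrimeSpectrum.comap_surjective_of_faithfullyFlat (A := R) (B := S) ⟨_, hπ⟩
  exact ⟨q, hq, ⟨(congrArg PrimeSpectrum.asIdeal h).symm⟩⟩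

theorem maximalIdeal_eq_span_of_liesOver [Algebra.FormallyUnramified R S]
    [Algebra.EssFiniteType R S] [(Ideal.span {π}).IsPrime] (q : Ideal S) [q.IsPrime]
    [q.LiesOver (Ideal.span {π})] :
    IsLocalRing.maximalIdeal (Localization.AtPrime q) =
      Ideal.span {algebraMap R (Localization.AtPrime q) π} := by
  have : Algebra.FormallyUnramified S (Localization.AtPrime q) :=
    .of_isLocalization q.primeCompl
  have hur : Algebra.FormallyUnramified R (Localization.AtPrime q) := .comp R S _
  let := Localization.AtPrime.algebraOfLiesOver (Ideal.span {π}) q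
  rw [← ((Algebra.isUnramifiedAt_iff_map_eq R (Ideal.span {π}) q).1 hur).2, Ideal.map_span,
    Set.image_singleton]

theorem exists_isDiscreteValuationRing_localization [IsNoetherianRing R]
    [Algebra.FormallyUnramified R S] [Algebra.EssFiniteType R S] [Module.FaithfullyFlat R S]
    (hπ : Prime π) (hreg : IsLeftRegular π) :
    ∃ (q : Ideal S) (_ : q.IsPrime) (_ : IsDomain (Localization.AtPrime q)),
      IsDiscreteValuationRing (Localization.AtPrime q) ∧
        Irreducible (algebraMap R (Localization.AtPrime q) π) := by
  have hprime : (Ideal.span {π}).IsPrime := (Ideal.span_singleton_prime hπ.ne_zero).2 hπ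
  obtain ⟨q, hq, hover⟩ := exists_liesOver_span (S := S) hprime
  have hmax := maximalIdeal_eq_span_of_liesOver (π := π) q
  have : IsNoetherianRing S := Algebra.EssFiniteType.isNoetherianRing R S
  have : IsNoetherianRing (Localization.AtPrime q) :=
    IsLocalization.isNoetherianRing q.primeCompl _ inferInstance
  have : Module.Flat S (Localization.AtPrime q) := IsLocalization.flat _ q.primeCompl
  have : Module.Flat R (Localization.AtPrime q) := .trans R S _
  have hregT : IsLeftRegular (algebraMap R (Localization.AtPrime q) π) := fun x y hxy =>
    hreg.isSMulRegular.of_flat (S := Localization.AtPrime q) hxy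
  have := isDomain_of_maximalIdeal_eq_span hmax hregT
  have hπ0 := hregT.ne_zero
  exact ⟨q, hq, this, isDiscreteValuationRing_of_maximalIdeal_eq_span hmax hπ0,
    IsDiscreteValuationRing.irreducible_of_span_eq_maximalIdeal _ hπ0 hmax⟩

end UnramifiedLocalization

section Embedding

theorem exists_sum_mul_eq_of_projective {A : Type*} [Ring A] (I : Submodule A A)
    [Module.Projective A I] {z : A} (hzI : z ∈ I) (hz : z ∈ Set.center A) :
    ∃ f : I →₀ A, (f.sum fun y a => a * y) = z ∧ ∀ y, ∀ x ∈ I, z ∣ x * f y := by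
  obtain ⟨s, hs⟩ := Module.projective_def'.1 (inferInstance : Module.Projective A I)
  refine ⟨s ⟨z, hzI⟩, ?_, fun y x hx => ⟨s ⟨x, hx⟩ y, ?_⟩⟩
  · simpa [Finsupp.linearCombination_apply, Finsupp.sum] using
      congrArg Subtype.val (LinearMap.congr_fun hs ⟨z, hzI⟩)
  · have hsmul : x • (⟨z, hzI⟩ : I) = z • ⟨x, hx⟩ := Subtype.ext (hz.comm x).symm
    rw [← smul_eq_mul, ← Finsupp.smul_apply, ← map_smul, hsmul, map_smul, Finsupp.smul_apply,
      smul_eq_mul]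

variable {R A B : Type*} [CommRing R] [Ring A] [Algebra R A] [Ring B] [Algebra R B]

theorem one_le_leftQuotient_mul (hA : ∀ I : Submodule A A, Module.Projective A I) (k : A →ₐ[R] B)
    {π : R} (hπ : IsUnit (algebraMap R B π)) {X : Submodule R B}
    (hX : X ≤ Submodule.map k.toLinearMap ⊤) (hAX : Submodule.map k.toLinearMap ⊤ * X ≤ X)
    (hπX : π • Submodule.map k.toLinearMap ⊤ ≤ X) :
    1 ≤ leftQuotient X (Submodule.map k.toLinearMap ⊤) * X := by
  obtain ⟨p, hp⟩ := hπ
  let Y : Submodule A A :=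
    { X.toAddSubmonoid.comap k.toAddMonoidHom with
      smul_mem' a y hy := by
        change k (a * y) ∈ X
        rw [map_mul]
        exact hAX (Submodule.mul_mem_mul (Submodule.mem_map_of_mem trivial) hy) }
  have hπY : algebraMap R A π ∈ Y := by
    refine hπX ((Submodule.mem_smul_pointwise_iff_exists _ _ _).2
      ⟨1, Submodule.mem_map.2 ⟨1, trivial, map_one k⟩, ?_⟩)
    rw [Algebra.smul_def, mul_one]
    exact (k.commutes π).symm
  have := hA Y
  obtain ⟨f, hf, hdvd⟩ := exists_sum_mul_eq_of_projective Y hπY (Set.algebraMap_mem_center π)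
  have hsum : (1 : B) = ∑ y ∈ f.support, ↑p⁻¹ * k (f y) * k y := by
    rw [← Units.inv_mul p, hp, ← k.commutes, ← hf, Finsupp.sum, map_sum, Finset.mul_sum]
    simp only [map_mul, mul_assoc]
  rw [Submodule.one_le, hsum]
  refine sum_mem fun y _ => Submodule.mul_mem_mul (fun x hx => ?_) y.2
  obtain ⟨a, -, rfl⟩ := hX hx
  obtain ⟨d, hd⟩ := hdvd y a hx
  have hcomm : Commute (k a) ↑p⁻¹ :=
    Commute.units_inv_right (hp ▸ (Algebra.commutes π (k a)).symm)
  refine ⟨d, trivial, ?_⟩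
  change k d = k a * (↑p⁻¹ * k (f y))
  rw [← mul_assoc, hcomm.eq, mul_assoc, ← map_mul, hd, map_mul, k.commutes, ← hp,
    Units.inv_mul_cancel_left]

theorem nonempty_algEquiv_of_semiconjBy {A' : Type*} [Ring A'] [Algebra R A'] {k : A →ₐ[R] B}
    {k' : A' →ₐ[R] B} (hk : Function.Injective k) (hk' : Function.Injective k') {c : Bˣ}
    (hc : SemiconjBy (Submodule.span R {(c : B)}) (Submodule.map k'.toLinearMap ⊤)
      (Submodule.map k.toLinearMap ⊤)) : Nonempty (A ≃ₐ[R] A') := by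
  let g : B ≃ₐ[R] B := MulSemiringAction.toAlgEquiv R B (ConjAct.toConjAct c)
  have hrange : (g.toAlgHom.comp k').range = k.range := by
    ext x
    constructor
    · rintro ⟨a, rfl⟩
      obtain ⟨_, ⟨b, -, rfl⟩, hb⟩ := Submodule.mem_mul_span_singleton.1
        (hc.eq.le (Submodule.mem_span_singleton_mul.2 ⟨k' a, ⟨a, trivial, rfl⟩, rfl⟩))
      exact ⟨b, (Units.eq_mul_inv_iff_mul_eq c).2 hb⟩
    · rintro ⟨a, rfl⟩
      obtain ⟨_, ⟨b, -, rfl⟩, hb⟩ := Submodule.mem_span_singleton_mul.1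
        (hc.eq.ge (Submodule.mem_mul_span_singleton.2 ⟨k a, ⟨a, trivial, rfl⟩, rfl⟩))
      exact ⟨b, (Units.mul_inv_eq_iff_eq_mul c).2 hb⟩
  exact ⟨(AlgEquiv.ofInjective k hk).trans <| (Subalgebra.equivOfEq _ _ hrange.symm).trans
    (AlgEquiv.ofInjective (g.toAlgHom.comp k') (g.injective.comp hk')).symm⟩

end Embedding

section GenericConjugacy

variable {R S F L A A' : Type*} [CommRing R] [CommRing S] [Algebra R S] [Field F] [Algebra R F]
  [Field L] [Algebra R L] [Algebra S L] [Algebra F L] [IsScalarTower R S L] [IsScalarTower R F L]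
  [Ring A] [Algebra R A] [Ring A'] [Algebra R A']

variable (R S L A) in
/-- The identification of iterated base changes; the Mathlib version is restricted to commutative
algebras `A`. -/
noncomputable def cancelBaseChange : L ⊗[S] (S ⊗[R] A) ≃ₐ[L] L ⊗[R] A :=
  .symm <| .ofLinearEquiv (TensorProduct.AlgebraTensorModule.cancelBaseChange R S L L A).symm
    (by simp [Algebra.TensorProduct.one_def]) <|
    LinearMap.map_mul_of_map_mul_tmul fun _ _ _ _ => by simp

theorem cancelBaseChange_tmul (l : L) (s : S) (a : A) :
    cancelBaseChange R S L A (l ⊗ₜ (s ⊗ₜ a)) = (s • l) ⊗ₜ a :=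
  TensorProduct.AlgebraTensorModule.cancelBaseChange_tmul R S L l a s

theorem exists_algEquiv_tensorLift_eq_one_tmul {ι : F ⊗[R] A →ₐ[R] L ⊗[F] (F ⊗[R] A)}
    (hι : ι = Algebra.TensorProduct.includeRight.restrictScalars R) :
    ∃ g : L ⊗[F] (F ⊗[R] A) ≃ₐ[L] L ⊗[S] (S ⊗[R] A),
      ∀ x, g (tensorLift S ι Algebra.TensorProduct.includeRight x) = 1 ⊗ₜ x := by
  refine ⟨(cancelBaseChange R F L A).trans (cancelBaseChange R S L A).symm, fun x => ?_⟩
  rw [AlgEquiv.trans_apply, AlgEquiv.symm_apply_eq]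
  induction x using TensorProduct.induction_on with
  | zero => simp
  | add x y hx hy => rw [map_add, map_add, hx, hy, TensorProduct.tmul_add, map_add]
  | tmul s a =>
    rw [tensorLift_tmul, ← algebraMap_smul L, map_smul, algebraMap_smul, hι,
      cancelBaseChange_tmul]
    simp [cancelBaseChange_tmul, TensorProduct.smul_tmul']

theorem exists_algEquiv_tensorLift_eq {ι : F ⊗[R] A →ₐ[R] L ⊗[F] (F ⊗[R] A)}
    (hι : ι = Algebra.TensorProduct.includeRight.restrictScalars R)
    (φ : F ⊗[R] A ≃ₐ[F] F ⊗[R] A') (e : S ⊗[R] A ≃ₐ[S] S ⊗[R] A') :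
    ∃ h : L ⊗[F] (F ⊗[R] A) ≃ₐ[L] L ⊗[F] (F ⊗[R] A),
      ∀ x, h (tensorLift S ι ((φ.symm.toAlgHom.restrictScalars R).comp
        Algebra.TensorProduct.includeRight) (e x)) =
          tensorLift S ι Algebra.TensorProduct.includeRight x := by
  obtain ⟨g, hg⟩ := exists_algEquiv_tensorLift_eq_one_tmul (S := S) hι
  obtain ⟨g', hg'⟩ :=
    exists_algEquiv_tensorLift_eq_one_tmul (R := R) (S := S) (F := F) (L := L) (A := A') rfl
  let ψ : L ⊗[F] (F ⊗[R] A) ≃ₐ[L] L ⊗[F] (F ⊗[R] A') := Algebra.TensorProduct.congr .refl φ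
  have hψ (y : S ⊗[R] A') : ψ (tensorLift S ι ((φ.symm.toAlgHom.restrictScalars R).comp
      Algebra.TensorProduct.includeRight) y) =
        tensorLift S (Algebra.TensorProduct.includeRight.restrictScalars R)
          Algebra.TensorProduct.includeRight y := by
    induction y using TensorProduct.induction_on with
    | zero => simp
    | add x y hx hy => rw [map_add, map_add, map_add, hx, hy]
    | tmul s a =>
      rw [tensorLift_tmul, tensorLift_tmul, ← algebraMap_smul L, map_smul, algebraMap_smul, hι]
      simp [ψ]
  refine ⟨(ψ.trans g').trans ((Algebra.TensorProduct.congr .refl e.symm).trans g.symm),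
    fun x => ?_⟩
  simp only [AlgEquiv.trans_apply]
  rw [hψ, hg', AlgEquiv.symm_apply_eq, hg]
  simp

theorem exists_semiconjBy_extend [IsAzumaya F (F ⊗[R] A)]
    {ι : F ⊗[R] A →ₐ[R] L ⊗[F] (F ⊗[R] A)}
    (hι : ι = Algebra.TensorProduct.includeRight.restrictScalars R)
    (φ : F ⊗[R] A ≃ₐ[F] F ⊗[R] A') (e : S ⊗[R] A ≃ₐ[S] S ⊗[R] A') :
    ∃ b : (L ⊗[F] (F ⊗[R] A))ˣ, SemiconjBy (Submodule.span S {(b : L ⊗[F] (F ⊗[R] A))})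
      (extend S ι (Submodule.map ((φ.symm.toAlgHom.restrictScalars R).comp
        Algebra.TensorProduct.includeRight : A' →ₐ[R] F ⊗[R] A).toLinearMap ⊤))
      (extend S ι (Submodule.map
        (Algebra.TensorProduct.includeRight : A →ₐ[R] F ⊗[R] A).toLinearMap ⊤)) := by
  have : IsAzumaya L (L ⊗[F] (F ⊗[R] A)) := isAzumaya_baseChange F (F ⊗[R] A) L
  obtain ⟨h, hh⟩ := exists_algEquiv_tensorLift_eq hι φ e
  obtain ⟨b, hb⟩ := exists_unit_forall_mul_eq_mul h
  refine ⟨b, ?_⟩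
  rw [← map_tensorLift_baseChange, ← map_tensorLift_baseChange, Submodule.baseChange_top,
    Submodule.baseChange_top]
  refine le_antisymm (fun z hz => ?_) fun z hz => ?_
  · obtain ⟨_, ⟨y, -, rfl⟩, rfl⟩ := Submodule.mem_span_singleton_mul.1 hz
    obtain ⟨x, rfl⟩ := e.surjective y
    refine Submodule.mem_mul_span_singleton.2 ⟨_, ⟨x, trivial, rfl⟩, ?_⟩
    exact (congrArg (· * (b : L ⊗[F] (F ⊗[R] A))) (hh x)).symm.trans (hb _)
  · obtain ⟨_, ⟨x, -, rfl⟩, rfl⟩ := Submodule.mem_mul_span_singleton.1 hz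
    refine Submodule.mem_span_singleton_mul.2 ⟨_, ⟨e x, trivial, rfl⟩, ?_⟩
    exact (hb _).symm.trans (congrArg (· * (b : L ⊗[F] (F ⊗[R] A))) (hh x))

theorem exists_semiconjBy_extend_of_isScalarTower (T : Type*) [CommRing T] [Algebra S T]
    [Algebra R T] [Algebra T L] [IsScalarTower R T L] [IsScalarTower S T L]
    [IsAzumaya F (F ⊗[R] A)] {ι : F ⊗[R] A →ₐ[R] L ⊗[F] (F ⊗[R] A)}
    (hι : ι = Algebra.TensorProduct.includeRight.restrictScalars R)
    (φ : F ⊗[R] A ≃ₐ[F] F ⊗[R] A') (e : S ⊗[R] A ≃ₐ[S] S ⊗[R] A') :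
    ∃ b : (L ⊗[F] (F ⊗[R] A))ˣ, SemiconjBy (Submodule.span T {(b : L ⊗[F] (F ⊗[R] A))})
      (extend T ι (Submodule.map ((φ.symm.toAlgHom.restrictScalars R).comp
        Algebra.TensorProduct.includeRight : A' →ₐ[R] F ⊗[R] A).toLinearMap ⊤))
      (extend T ι (Submodule.map
        (Algebra.TensorProduct.includeRight : A →ₐ[R] F ⊗[R] A).toLinearMap ⊤)) := by
  obtain ⟨b, hb⟩ := exists_semiconjBy_extend hι φ e
  have hbT := hb.map (extend T (AlgHom.id S (L ⊗[F] (F ⊗[R] A))))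
  rw [extend_span_singleton, extend_id, extend_id, span_extend, span_extend] at hbT
  exact ⟨b, hbT⟩

end GenericConjugacy

section LocalOrders

theorem isLattice_extend_id {R F A B : Type*} (P : Type*) [CommRing R] [CommRing P] [Algebra R P]
    [CommRing F] [Algebra P F] [Ring A] [Algebra R A] [Module.Finite R A] [Ring B] [Algebra R B]
    [Algebra P B] [Algebra F B] [IsScalarTower R P B] [IsScalarTower P F B] {k : A →ₐ[R] B}
    (hk : Submodule.span F (Submodule.map k.toLinearMap ⊤ : Set B) = ⊤) :
    (extend P (AlgHom.id R B) (Submodule.map k.toLinearMap ⊤)).IsLattice F where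
  fg := fg_extend (Module.Finite.fg_top.map _)
  span_eq_top := by rw [extend_id, Submodule.span_span_of_tower, hk]

variable {R P T F L A A' B : Type*} [CommRing R] [CommRing P] [IsDomain P]
  [IsDiscreteValuationRing P] [Algebra R P] [CommRing T] [IsDomain T] [IsDiscreteValuationRing T]
  [Algebra R T] [Algebra P T] [IsScalarTower R P T] [Field F] [Algebra R F] [Algebra P F]
  [IsFractionRing P F] [Field L] [Algebra R L] [Algebra P L] [Algebra T L]
  [Algebra F L] [IsScalarTower R T L] [IsScalarTower P T L]
  [IsScalarTower P F L] [IsScalarTower R F L] [IsFractionRing T L]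
  [Ring A] [Algebra R A] [Module.Finite R A] [Ring A'] [Algebra R A'] [Module.Finite R A']
  [Ring B] [Algebra R B] [Algebra P B] [Algebra F B] [IsScalarTower R P B] [IsScalarTower P F B]
  [IsScalarTower R F B]

theorem exists_semiconjBy_extend_id [IsAzumaya F B] [Algebra.FormallyUnramified R P]
    [Algebra.EssFiniteType R P] [Algebra.FormallyUnramified R T] [Algebra.EssFiniteType R T]
    (hA : ∀ I : Submodule A A, Module.Projective A I) {π : R} (hπ : (Ideal.span {π}).IsMaximal)
    (hπP : Irreducible (algebraMap R P π)) (hπT : Irreducible (algebraMap R T π))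
    {k : A →ₐ[R] B} {k' : A' →ₐ[R] B}
    (hk : Submodule.span F (Submodule.map k.toLinearMap ⊤ : Set B) = ⊤)
    (hk' : Submodule.span F (Submodule.map k'.toLinearMap ⊤ : Set B) = ⊤) {b : (L ⊗[F] B)ˣ}
    (hb : SemiconjBy (Submodule.span T {(b : L ⊗[F] B)})
      (extend T (Algebra.TensorProduct.includeRight.restrictScalars R : B →ₐ[R] L ⊗[F] B)
        (Submodule.map k'.toLinearMap ⊤))
      (extend T (Algebra.TensorProduct.includeRight.restrictScalars R)
        (Submodule.map k.toLinearMap ⊤))) :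
    ∃ c : Bˣ, SemiconjBy (Submodule.span P {(c : B)})
      (extend P (AlgHom.id R B) (Submodule.map k'.toLinearMap ⊤))
      (extend P (AlgHom.id R B) (Submodule.map k.toLinearMap ⊤)) := by
  obtain ⟨C, _, _, _, f, hf⟩ := exists_isRadicalQuotient A hπ
  obtain ⟨C', _, _, _, f', hf'⟩ := exists_isRadicalQuotient A' hπ
  have hπB : IsUnit (algebraMap R B π) := by
    rw [IsScalarTower.algebraMap_apply R P B, IsScalarTower.algebraMap_apply P F B]
    exact (IsUnit.mk0 _ (by simpa using hπP.ne_zero)).map _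
  obtain ⟨K, hK⟩ := (hf.isOrderWithRadical_map k).exists_isInverse hπB fun X hX hAX hπX =>
    one_le_leftQuotient_mul hA k hπB hX hAX hπX
  have := isLattice_extend_id P hk
  have := isLattice_extend_id P hk'
  refine exists_semiconjBy_of_semiconjBy_extend (T := T) (L := L)
    (ι := Algebra.TensorProduct.includeRight.restrictScalars P) hπP
    (IsScalarTower.algebraMap_apply R P T π ▸ hπT) rfl
    (hf.isOrderWithRadical_extend P (AlgHom.id R B) k)
    (hf'.isOrderWithRadical_extend P (AlgHom.id R B) k') hK.extend ?_ ?_ (b := b) ?_ <;>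
    simp only [extend_extend_id, ← IsScalarTower.algebraMap_apply]
  · exact hf.isOrderWithRadical_extend T _ k
  · exact hf'.isOrderWithRadical_extend T _ k'
  · exact hb

end LocalOrders

section LocalizedOrders

theorem isUnit_algebraMap_of_notMem {R T : Type*} [CommRing R] [CommRing T] [IsLocalRing T]
    [Algebra R T] {p : Ideal R} [hp : p.IsMaximal]
    (h : p ≤ (IsLocalRing.maximalIdeal T).comap (algebraMap R T)) {r : R} (hr : r ∉ p) :
    IsUnit (algebraMap R T r) := by
  rwa [hp.eq_of_le (Ideal.comap_ne_top _ Ideal.IsPrime.ne_top') h, Ideal.mem_comap,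
    IsLocalRing.notMem_maximalIdeal] at hr

theorem irreducible_algebraMap_of_span {R : Type*} (P : Type*) [CommRing R] [CommRing P]
    [IsDomain P] [IsDiscreteValuationRing P] [Algebra R P] {p : Ideal R} [p.IsPrime]
    [IsLocalization.AtPrime P p] {π : R} (hp : p = Ideal.span {π}) :
    Irreducible (algebraMap R P π) := by
  rw [IsDiscreteValuationRing.irreducible_iff_uniformizer, ← Set.image_singleton, ← Ideal.map_span,
    ← hp, IsLocalization.AtPrime.map_eq_maximalIdeal]

theorem faithfulSMul_of_irreducible {P T : Type*} [CommRing P] [IsDomain P]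
    [IsDiscreteValuationRing P] [CommRing T] [IsDomain T] [Algebra P T] {π : P}
    (hπ : Irreducible π) (hπT : Irreducible (algebraMap P T π)) : FaithfulSMul P T := by
  rw [faithfulSMul_iff_algebraMap_injective, injective_iff_map_eq_zero]
  by_contra! ⟨x, hx, hx0⟩
  obtain ⟨n, u, rfl⟩ := IsDiscreteValuationRing.eq_unit_mul_pow_irreducible hx0 hπ
  rw [map_mul, map_pow] at hx
  exact mul_ne_zero (u.isUnit.map _).ne_zero (pow_ne_zero n hπT.ne_zero) hx

theorem span_map_includeRight (R F A : Type*) [CommRing R] [CommRing F] [Algebra R F] [Ring A]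
    [Algebra R A] : Submodule.span F (Submodule.map
      (Algebra.TensorProduct.includeRight : A →ₐ[R] F ⊗[R] A).toLinearMap ⊤ : Set (F ⊗[R] A)) = ⊤ :=
  (baseChange_eq_extend F ⊤).symm.trans (Submodule.baseChange_top _)

theorem span_map_comp_includeRight {R F A B : Type*} [CommRing R] [CommRing F] [Algebra R F]
    [Ring A] [Algebra R A] [Ring B] [Algebra R B] [Algebra F B] [IsScalarTower R F B]
    (φ : F ⊗[R] A ≃ₐ[F] B) : Submodule.span F (Submodule.map
      ((φ.toAlgHom.restrictScalars R).comp
        Algebra.TensorProduct.includeRight : A →ₐ[R] B).toLinearMap ⊤ : Set B) = ⊤ := by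
  have h := congrArg (Submodule.map φ.toLinearMap) (span_map_includeRight R F A)
  rw [Submodule.map_span, Submodule.map_top (f := φ.toLinearMap),
    LinearMap.range_eq_top.2 φ.surjective] at h
  rw [← h, AlgHom.comp_toLinearMap, Submodule.map_comp]
  rfl

variable {R F S A A' : Type*} (P : Type*) [CommRing R] [Field F] [Algebra R F]
  [CommRing P] [IsDomain P] [IsDiscreteValuationRing P] [Algebra R P] [Algebra P F]
  [IsScalarTower R P F] [IsFractionRing P F] [Ring A] [Algebra R A] [Module.Finite R A] [Ring A']
  [Algebra R A'] [Module.Finite R A']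

theorem exists_semiconjBy_extend_of_isDiscreteValuationRing (T : Type*) [CommRing S] [Algebra R S]
    [CommRing T] [IsDomain T] [IsDiscreteValuationRing T] [Algebra R T] [Algebra S T]
    [IsScalarTower R S T] [Algebra.FormallyUnramified R T] [Algebra.EssFiniteType R T]
    {p : Ideal R} [p.IsMaximal] [IsLocalization.AtPrime P p] {π : R} (hp : p = Ideal.span {π})
    (hπT : Irreducible (algebraMap R T π)) [IsAzumaya F (F ⊗[R] A)]
    (hA : ∀ I : Submodule A A, Module.Projective A I)
    (φ : F ⊗[R] A ≃ₐ[F] F ⊗[R] A') (e : S ⊗[R] A ≃ₐ[S] S ⊗[R] A') :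
    ∃ c : (F ⊗[R] A)ˣ, SemiconjBy (Submodule.span P {(c : F ⊗[R] A)})
      (extend P (AlgHom.id R (F ⊗[R] A)) (Submodule.map
        ((φ.symm.toAlgHom.restrictScalars R).comp
          Algebra.TensorProduct.includeRight : A' →ₐ[R] F ⊗[R] A).toLinearMap ⊤))
      (extend P (AlgHom.id R (F ⊗[R] A)) (Submodule.map
        (Algebra.TensorProduct.includeRight : A →ₐ[R] F ⊗[R] A).toLinearMap ⊤)) := by
  let L := FractionRing T
  have hπP := irreducible_algebraMap_of_span P hp
  have hunit (y : p.primeCompl) : IsUnit (algebraMap R T y) := by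
    refine isUnit_algebraMap_of_notMem ?_ y.2
    rw [hp, Ideal.span_singleton_le_iff_mem]
    exact hπT.not_isUnit
  let _ : Algebra P T := (IsLocalization.lift hunit).toAlgebra
  have : IsScalarTower R P T := .of_algebraMap_eq fun r => (IsLocalization.lift_eq hunit r).symm
  have hPT : Irreducible (algebraMap P T (algebraMap R P π)) := by
    rwa [← IsScalarTower.algebraMap_apply]
  have : FaithfulSMul P T := faithfulSMul_of_irreducible hπP hPT
  have hPL : Function.Injective (algebraMap P L) := by
    rw [IsScalarTower.algebraMap_eq P T L]
    exact (IsFractionRing.injective T L).comp (FaithfulSMul.algebraMap_injective P T)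
  let _ : Algebra F L := (IsFractionRing.lift hPL).toAlgebra
  have : IsScalarTower P F L :=
    .of_algebraMap_eq fun x => (IsFractionRing.lift_algebraMap hPL x).symm
  have : IsScalarTower R F L := .of_algebraMap_eq fun r => by
    rw [IsScalarTower.algebraMap_apply R P F, ← IsScalarTower.algebraMap_apply P F L,
      IsScalarTower.algebraMap_apply R T L, IsScalarTower.algebraMap_apply R P T,
      ← IsScalarTower.algebraMap_apply P T L]
  obtain ⟨b, hb⟩ := exists_semiconjBy_extend_of_isScalarTower (L := L) T rfl φ e
  have : Algebra.FormallyUnramified R P := .of_isLocalization p.primeCompl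
  have : Algebra.EssFiniteType R P := .of_isLocalization P p.primeCompl
  exact exists_semiconjBy_extend_id hA (hp ▸ ‹p.IsMaximal›) hπP hπT (span_map_includeRight R F A)
    (span_map_comp_includeRight φ.symm) hb

theorem exists_semiconjBy_extend_of_isLocalization [IsNoetherianRing R] [CommRing S] [Algebra R S]
    [Algebra.FormallyUnramified R S] [Algebra.EssFiniteType R S] [Module.FaithfullyFlat R S]
    {p : Ideal R} [p.IsMaximal] [IsLocalization.AtPrime P p] {π : R} (hp : p = Ideal.span {π})
    (hπ : Prime π) (hreg : IsLeftRegular π) [IsAzumaya F (F ⊗[R] A)]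
    (hA : ∀ I : Submodule A A, Module.Projective A I)
    (φ : F ⊗[R] A ≃ₐ[F] F ⊗[R] A') (e : S ⊗[R] A ≃ₐ[S] S ⊗[R] A') :
    ∃ c : (F ⊗[R] A)ˣ, SemiconjBy (Submodule.span P {(c : F ⊗[R] A)})
      (extend P (AlgHom.id R (F ⊗[R] A)) (Submodule.map
        ((φ.symm.toAlgHom.restrictScalars R).comp
          Algebra.TensorProduct.includeRight : A' →ₐ[R] F ⊗[R] A).toLinearMap ⊤))
      (extend P (AlgHom.id R (F ⊗[R] A)) (Submodule.map
        (Algebra.TensorProduct.includeRight : A →ₐ[R] F ⊗[R] A).toLinearMap ⊤)) := by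
  obtain ⟨q, _, _, _, hπT⟩ := exists_isDiscreteValuationRing_localization (S := S) hπ hreg
  let T := Localization.AtPrime q
  have : Algebra.FormallyUnramified S T := .of_isLocalization q.primeCompl
  have : Algebra.FormallyUnramified R T := .comp R S T
  have : Algebra.EssFiniteType S T := .of_isLocalization T q.primeCompl
  have : Algebra.EssFiniteType R T := .comp R S T
  exact exists_semiconjBy_extend_of_isDiscreteValuationRing P T hp hπT hA φ e

end LocalizedOrders

section GlobalConjugacy

theorem nonempty_algEquiv_of_bijective_algebraMap {R F A A' : Type*} [CommRing R] [CommRing F]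
    [Algebra R F] [Ring A] [Algebra R A] [Ring A'] [Algebra R A']
    (h : Function.Bijective (algebraMap R F)) (φ : F ⊗[R] A ≃ₐ[F] F ⊗[R] A') :
    Nonempty (A ≃ₐ[R] A') := by
  let e : R ≃ₐ[R] F := .ofBijective (Algebra.ofId R F) h
  exact ⟨(Algebra.TensorProduct.lid R A).symm.trans <|
    (Algebra.TensorProduct.congr e .refl).trans <| (φ.restrictScalars R).trans <|
    (Algebra.TensorProduct.congr e.symm .refl).trans <| Algebra.TensorProduct.lid R A'⟩

theorem includeRight_injective (R F A : Type*) [CommRing R] [IsDomain R] [IsPrincipalIdealRing R]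
    [CommRing F] [Algebra R F] [IsFractionRing R F] [Ring A] [Algebra R A]
    [NoZeroSMulDivisors R A] :
    Function.Injective (Algebra.TensorProduct.includeRight : A →ₐ[R] F ⊗[R] A) := by
  have : Module.IsTorsionFree R A := inferInstance
  have : Module.Flat R A := inferInstance
  exact Algebra.TensorProduct.includeRight_injective (IsFractionRing.injective R F)

variable {R F S A A' : Type*} [CommRing R] [IsDomain R] [IsPrincipalIdealRing R]
  [Finite (MaximalSpectrum R)] [Field F] [Algebra R F] [IsFractionRing R F] [Ring A] [Algebra R A]
  [Module.Finite R A] [Ring A'] [Algebra R A'] [Module.Finite R A'] [CommRing S] [Algebra R S]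
  [Algebra.FormallyUnramified R S] [Algebra.EssFiniteType R S] [Module.FaithfullyFlat R S]
  [IsAzumaya F (F ⊗[R] A)]

theorem exists_semiconjBy_map_includeRight (hR : ¬ IsField R)
    (hA : ∀ I : Submodule A A, Module.Projective A I)
    (φ : F ⊗[R] A ≃ₐ[F] F ⊗[R] A') (e : S ⊗[R] A ≃ₐ[S] S ⊗[R] A') :
    ∃ c : (F ⊗[R] A)ˣ, SemiconjBy (Submodule.span R {(c : F ⊗[R] A)})
      (Submodule.map ((φ.symm.toAlgHom.restrictScalars R).comp
          Algebra.TensorProduct.includeRight : A' →ₐ[R] F ⊗[R] A).toLinearMap ⊤)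
      (Submodule.map (Algebra.TensorProduct.includeRight : A →ₐ[R] F ⊗[R] A).toLinearMap ⊤) := by
  let P (p : MaximalSpectrum R) : Subalgebra R F :=
    Localization.subalgebra.ofField F p.asIdeal.primeCompl p.asIdeal.primeCompl_le_nonZeroDivisors
  have hbot (p : MaximalSpectrum R) : p.asIdeal ≠ ⊥ :=
    Ring.ne_bot_of_isMaximal_of_not_isField p.2 hR
  have (p : MaximalSpectrum R) : IsDiscreteValuationRing (P p) :=
    IsLocalization.AtPrime.isDiscreteValuationRing_of_dedekind_domain R (hbot p) _
  choose π hπ using fun p : MaximalSpectrum R =>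
    (IsPrincipalIdealRing.principal p.asIdeal).principal
  have hirr (p) : Irreducible (algebraMap R (P p) (π p)) := irreducible_algebraMap_of_span _ (hπ p)
  have hprime (p) : Prime (π p) := by
    have h0 : π p ≠ 0 := fun h => hbot p <| by
      rw [hπ, h, Ideal.submodule_span_eq, Ideal.span_singleton_eq_bot.2 rfl]
    rw [← Ideal.span_singleton_prime h0, ← Ideal.submodule_span_eq, ← hπ]
    infer_instance
  have : Nontrivial (F ⊗[R] A) := (FaithfulSMul.algebraMap_injective F (F ⊗[R] A)).nontrivial
  have : IsArtinianRing (F ⊗[R] A) := .of_finite F _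
  refine exists_semiconjBy_of_forall_extend (fun p => P p) hπ (Module.Finite.fg_top.map _)
    (Submodule.one_le.2 ⟨1, trivial,
      map_one (Algebra.TensorProduct.includeRight : A →ₐ[R] F ⊗[R] A)⟩)
    (by rw [← Submodule.map_mul]; exact Submodule.map_mono le_top) (fun p y => ?_)
    fun p => exists_semiconjBy_extend_of_isLocalization (P p) (hπ p) (hprime p)
      (IsRegular.of_ne_zero (hprime p).ne_zero).left hA φ e
  have := isLattice_extend_id (P p) (span_map_includeRight R F A)
  obtain ⟨n, hn⟩ := exists_pow_smul_mem (F := F)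
    (extend (P p) (.id R (F ⊗[R] A)) (Submodule.map
      (Algebra.TensorProduct.includeRight : A →ₐ[R] F ⊗[R] A).toLinearMap ⊤)) (hirr p) y
  exact ⟨n, by rwa [← map_pow, algebraMap_smul] at hn⟩

end GlobalConjugacy

end HereditaryOrder

open HereditaryOrder in
theorem herediary_order_iso_of_generic_and_etale_iso_general
    (R F : Type*) [CommRing R] [IsDedekindDomain R]
    (hsemilocal : {I : Ideal R | I.IsMaximal}.Finite)
    [Field F] [Algebra R F] [IsFractionRing R F]
    (A A' : Type*) [Ring A] [Algebra R A] [Module.Finite R A] [NoZeroSMulDivisors R A]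
    [Ring A'] [Algebra R A'] [Module.Finite R A'] [NoZeroSMulDivisors R A']
    (hhered : ∀ I : Submodule A A, Module.Projective A I)
    (hcentral : Algebra.IsCentral F (F ⊗[R] A)) (hsimple : IsSimpleRing (F ⊗[R] A))
    (hF : Nonempty ((F ⊗[R] A) ≃ₐ[F] (F ⊗[R] A')))
    (S : Type*) [CommRing S] [Algebra R S] [Algebra.FormallyUnramified R S]
    [Algebra.EssFiniteType R S] [Module.FaithfullyFlat R S]
    (hS : Nonempty ((S ⊗[R] A) ≃ₐ[S] (S ⊗[R] A'))) :
    Nonempty (A ≃ₐ[R] A') := by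
  obtain ⟨φ⟩ := hF
  obtain ⟨e⟩ := hS
  have : IsPrincipalIdealRing R := .of_finite_maximals hsemilocal
  by_cases hR : IsField R
  · exact nonempty_algEquiv_of_bijective_algebraMap
      ⟨IsFractionRing.injective R F, IsFractionRing.surjective_iff_isField.2 hR⟩ φ
  have : Finite {I : Ideal R // I.IsMaximal} := hsemilocal.to_subtype
  have : Finite (MaximalSpectrum R) := .of_equiv _ (MaximalSpectrum.equivSubtype R).symm
  have : IsAzumaya F (F ⊗[R] A) := isAzumaya_of_isCentral_of_isSimpleRing F _
  obtain ⟨c, hc⟩ := exists_semiconjBy_map_includeRight hR hhered φ e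
  exact nonempty_algEquiv_of_semiconjBy (includeRight_injective R F A)
    (φ.symm.injective.comp (includeRight_injective R F A')) hc

/-- Let `R` be a semilocal Dedekind domain (a Dedekind domain with only
finitely many maximal ideals) with fraction field `F`. Let `A` be a hereditary `R`-order
(an `R`-algebra, finitely generated and torsion-free as an `R`-module, all of whose left
ideals are projective) such that `F ⊗[R] A` is a central simple `F`-algebra, and let `A'`
be any `R`-order. If `F ⊗[R] A ≅ F ⊗[R] A'` as `F`-algebras and there is a faithfully flat
étale `R`-algebra `S` with `S ⊗[R] A ≅ S ⊗[R] A'` as `S`-algebras, then `A ≅ A'` as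
`R`-algebras. -/
theorem herediary_order_iso_of_generic_and_etale_iso
    (R : Type u) (F : Type*) [CommRing R] [IsDomain R] [IsDedekindDomain R]
    (hsemilocal : {I : Ideal R | I.IsMaximal}.Finite)
    [Field F] [Algebra R F] [IsFractionRing R F]
    (A A' : Type*) [Ring A] [Algebra R A] [Module.Finite R A] [NoZeroSMulDivisors R A]
    [Ring A'] [Algebra R A'] [Module.Finite R A'] [NoZeroSMulDivisors R A']
    (hhered : ∀ I : Submodule A A, Module.Projective A I)
    (hcentral : Algebra.IsCentral F (F ⊗[R] A))
    (hsimple : IsSimpleRing (F ⊗[R] A))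
    (hfin : FiniteDimensional F (F ⊗[R] A))
    (hF : Nonempty ((F ⊗[R] A) ≃ₐ[F] (F ⊗[R] A')))
    (S : Type u) [CommRing S] [Algebra R S] [Algebra.Etale R S] [Module.FaithfullyFlat R S]
    (hS : Nonempty ((S ⊗[R] A) ≃ₐ[S] (S ⊗[R] A'))) :
    Nonempty (A ≃ₐ[R] A') :=
  herediary_order_iso_of_generic_and_etale_iso_general R F hsemilocal A A' hhered hcentral hsimple
    hF S hS
end

section
/- Let R be a Dedekind domain, let A and A' be R-orders, and let S be a faithfully flat étale R-algebra such that S ⊗_R A and S ⊗_R A' are isomorphic as S-algebras. If A is hereditary, then A' is hereditary. -/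
open scoped TensorProduct

universe u

/-!
For a finitely presented `A`-module `M` and a flat `R`-module `Q`, the canonical map
`Hom_A(M, N) ⊗ Q → Hom_A(M, N ⊗ Q)` is bijective.

*Ascent.* By surjectivity, a finitely presented `A`-module that embeds into `A ⊗ S` embeds into
some `Aⁿ`, so it is projective when `A` is hereditary. A left ideal `J` of `A ⊗ S` need not be
finitely generated over `A`, but if `∑ᵢ sᵢ ⊗ tᵢ` is the separability element of `S` over `R`, then
`m ↦ ∑ᵢ sᵢ m ⊗ tᵢ` exhibits `J` as a direct summand of `J₀ ⊗ S`, where `J₀` is the `A`-span of the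
products of the `sᵢ` with finitely many generators of `J`.

*Descent.* For a left ideal `I = ∑ᵢ A yᵢ` of `A`, a dual basis of the extended ideal restricts to
`A`-linear maps `I → A ⊗ S`, which are elements of `Hom_A(I, A) ⊗ S`. They show that `id_I ⊗ 1` lies
in the image of `Hom_A(I, A)ⁿ ⊗ S → Hom_A(I, I) ⊗ S`, `(fᵢ) ↦ ∑ᵢ fᵢ(·) yᵢ`. By faithful flatness
`id_I` already comes from `Hom_A(I, A)ⁿ`, which is a dual basis of `I`.
-/

/-- A ring is left hereditary if each of its left ideals is projective. -/
def IsLeftHereditary (A : Type*) [Ring A] : Prop :=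
  ∀ I : Submodule A A, Module.Projective A I

section DualBasis

variable {A M ι : Type*} [Ring A] [AddCommGroup M] [Module A M] [Fintype ι]

theorem projective_of_sum_smul_eq (y : ι → M) (f : ι → M →ₗ[A] A)
    (hfy : ∀ m, ∑ i, f i m • y i = m) : Module.Projective A M :=
  .of_split (LinearMap.pi f) (Fintype.linearCombination A y) <|
    LinearMap.ext fun m ↦ by simpa [Fintype.linearCombination_apply] using hfy m

theorem exists_sum_smul_eq_of_projective [Module.Projective A M] (y : ι → M)
    (hy : Submodule.span A (Set.range y) = ⊤) :
    ∃ f : ι → M →ₗ[A] A, ∀ m, ∑ i, f i m • y i = m := by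
  obtain ⟨s, hs⟩ := LinearMap.exists_rightInverse_of_surjective (Fintype.linearCombination A y)
    (by rw [Fintype.range_linearCombination, hy])
  exact ⟨fun i ↦ LinearMap.proj i ∘ₗ s, fun m ↦ by
    simpa [Fintype.linearCombination_apply] using LinearMap.congr_fun hs m⟩

end DualBasis

section Hereditary

variable {A B M N : Type*} [Ring A] [Ring B] [AddCommGroup M] [AddCommGroup N] [Module A M]
  [Module A N]

theorem projective_of_projective_ker_range (g : M →ₗ[A] N) [Module.Projective A g.ker]
    [Module.Projective A g.range] : Module.Projective A M := by
  obtain ⟨s, hs⟩ := g.rangeRestrict.exists_rightInverse_of_surjective g.range_rangeRestrict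
  have g_s (z : g.range) : g (s z) = z := congrArg Subtype.val (LinearMap.congr_fun hs z)
  let r : M →ₗ[A] g.ker := (LinearMap.id - s ∘ₗ g.rangeRestrict).codRestrict g.ker fun m ↦ by
    simp [g_s]
  exact .of_split (r.prod g.rangeRestrict) (g.ker.subtype.coprod s) <|
    LinearMap.ext fun m ↦ by simp [r]

theorem IsLeftHereditary.projective_of_injective (hA : IsLeftHereditary A) {n : ℕ}
    (f : M →ₗ[A] Fin n → A) (hf : Function.Injective f) : Module.Projective A M := by
  induction n generalizing M with
  | zero =>
    have := hf.subsingleton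
    infer_instance
  | succ n ih =>
    let g : M →ₗ[A] A := LinearMap.proj 0 ∘ₗ f
    have : Module.Projective A g.range := hA _
    have : Module.Projective A g.ker := by
      refine ih (LinearMap.funLeft A A Fin.succ ∘ₗ f ∘ₗ g.ker.subtype) fun x y hxy ↦ ?_
      refine Subtype.ext (hf (funext (Fin.cases ?_ fun i ↦ congrFun hxy i)))
      exact (LinearMap.mem_ker.1 x.2).trans (LinearMap.mem_ker.1 y.2).symm
    exact projective_of_projective_ker_range g

theorem IsLeftHereditary.of_ringEquiv (e : A ≃+* B) (hA : IsLeftHereditary A) :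
    IsLeftHereditary B := fun I ↦
  have := RingHomInvPair.of_ringEquiv e
  have := RingHomInvPair.symm (e : A →+* B) (e.symm : B →+* A)
  have := hA (I.comap e.toSemilinearEquiv.toLinearMap)
  .of_equiv (e.toSemilinearEquiv.ofSubmodule' I)

end Hereditary

section HomTensor

open TensorProduct

variable (R A M N Q : Type*) [CommRing R] [Ring A] [Algebra R A] [AddCommGroup M] [Module A M]
  [AddCommGroup N] [Module A N] [Module R N] [IsScalarTower R A N] [AddCommGroup Q] [Module R Q]

/-- The canonical map `Hom_A(M, N) ⊗ Q → Hom_A(M, N ⊗ Q)` sending `f ⊗ q` to `m ↦ f m ⊗ q`. -/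
noncomputable def homTensorToHomTensor : (M →ₗ[A] N) ⊗[R] Q →ₗ[R] M →ₗ[A] N ⊗[R] Q :=
  lift <| LinearMap.mk₂ R
    (fun f q ↦ (AlgebraTensorModule.mk R A N Q).flip q ∘ₗ f)
    (fun _ _ _ ↦ by ext; simp [add_tmul])
    (fun _ _ _ ↦ by ext; simp [smul_tmul'])
    (fun _ _ _ ↦ by ext; simp)
    (fun _ _ _ ↦ by ext; simp)

variable {A M N Q}

theorem rTensor_lTensor_comm [Module R M] [IsScalarTower R A M] (f : M →ₗ[A] N) (g : Q →ₗ[R] Q)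
    (w : M ⊗[R] Q) :
    AlgebraTensorModule.rTensor R Q f (g.lTensor M w) =
      g.lTensor N (AlgebraTensorModule.rTensor R Q f w) := by
  induction w with
  | zero => simp
  | add x y hx hy => simp only [map_add, hx, hy]
  | tmul m q => rfl

@[simp]
theorem homTensorToHomTensor_tmul_apply (f : M →ₗ[A] N) (q : Q) (m : M) :
    homTensorToHomTensor R A M N Q (f ⊗ₜ q) m = f m ⊗ₜ q := rfl

theorem homTensorToHomTensor_rTensor_lcomp {M' : Type*} [AddCommGroup M'] [Module A M']
    (g : M' →ₗ[A] M) (z : (M →ₗ[A] N) ⊗[R] Q) :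
    homTensorToHomTensor R A M' N Q ((LinearMap.lcomp R N g).rTensor Q z) =
      homTensorToHomTensor R A M N Q z ∘ₗ g := by
  induction z with
  | zero => simp
  | add x y hx hy => simp only [map_add, hx, hy, LinearMap.add_comp]
  | tmul f q => rfl

theorem homTensorToHomTensor_rTensor_compRight {N' : Type*} [AddCommGroup N'] [Module A N']
    [Module R N'] [IsScalarTower R A N'] (h : N →ₗ[A] N') (z : (M →ₗ[A] N) ⊗[R] Q) :
    homTensorToHomTensor R A M N' Q ((LinearMap.compRight R h).rTensor Q z) =
      AlgebraTensorModule.rTensor R Q h ∘ₗ homTensorToHomTensor R A M N Q z := by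
  induction z with
  | zero => simp
  | add x y hx hy => simp only [map_add, hx, hy, LinearMap.comp_add]
  | tmul f q => rfl

theorem homTensorToHomTensor_bijective_of_basis {ι : Type*} [Finite ι] (b : Module.Basis ι A M) :
    Function.Bijective (homTensorToHomTensor R A M N Q) := by
  classical
  have := Fintype.ofFinite ι
  let e := (b.constr R (M' := N)).symm.rTensor Q ≪≫ₗ piLeft R Q (fun _ ↦ N) ≪≫ₗ
    b.constr R (M' := N ⊗[R] Q)
  convert e.bijective using 1
  suffices homTensorToHomTensor R A M N Q = e.toLinearMap from congrArg _ this
  ext f q : 3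
  exact b.ext fun i ↦ by simp [e]

theorem homTensorToHomTensor_injective [Module.Finite A M] [Module.Flat R Q] :
    Function.Injective (homTensorToHomTensor R A M N Q) := by
  obtain ⟨n, p, hp⟩ := Module.Finite.exists_fin' A M
  have rTensor_lcomp_injective : Function.Injective ((LinearMap.lcomp R N p).rTensor Q) :=
    Module.Flat.rTensor_preserves_injective_linearMap _ (p.lcomp_injective_of_surjective hp)
  have comp_injective := (homTensorToHomTensor_bijective_of_basis R (N := N) (Q := Q)
    (Pi.basisFun A (Fin n))).1.comp rTensor_lcomp_injective
  refine fun x y hxy ↦ comp_injective ?_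
  simp [homTensorToHomTensor_rTensor_lcomp, hxy]

theorem lcomp_exact_of_exact_of_surjective {M₁ M₂ : Type*} [AddCommGroup M₁] [AddCommGroup M₂]
    [Module A M₁] [Module A M₂] {g : M₁ →ₗ[A] M₂} {p : M₂ →ₗ[A] M} (hgp : Function.Exact g p)
    (hp : Function.Surjective p) :
    Function.Exact (LinearMap.lcomp R N p) (LinearMap.lcomp R N g) := by
  refine fun h ↦ ⟨fun hh ↦ ?_, ?_⟩
  · exact ⟨(LinearMap.range g).liftQ h (LinearMap.range_le_ker_iff.2 hh) ∘ₗ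
      (hgp.linearEquivOfSurjective hp).symm.toLinearMap, by ext x; simp⟩
  · rintro ⟨f, rfl⟩
    ext x
    simp [hgp.apply_apply_eq_zero]

theorem homTensorToHomTensor_surjective [Module.FinitePresentation A M] [Module.Flat R Q] :
    Function.Surjective (homTensorToHomTensor R A M N Q) := by
  intro φ
  obtain ⟨n, m, p, g, hp, hgp⟩ := Module.FinitePresentation.exists_fin' A M
  have lcomp_exact : Function.Exact (LinearMap.lcomp R N p) (LinearMap.lcomp R N g) :=
    lcomp_exact_of_exact_of_surjective R hgp hp
  obtain ⟨z, hz⟩ := (homTensorToHomTensor_bijective_of_basis R (N := N) (Q := Q)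
    (Pi.basisFun A (Fin n))).2 (φ ∘ₗ p)
  have lcomp_z : (LinearMap.lcomp R N g).rTensor Q z = 0 := by
    apply homTensorToHomTensor_injective
    rw [homTensorToHomTensor_rTensor_lcomp, hz, LinearMap.comp_assoc, hgp.linearMap_comp_eq_zero,
      LinearMap.comp_zero, map_zero]
  obtain ⟨w, rfl⟩ := (Module.Flat.rTensor_exact Q lcomp_exact z).1 lcomp_z
  refine ⟨w, (LinearMap.cancel_right hp).1 ?_⟩
  rw [← hz, homTensorToHomTensor_rTensor_lcomp]

end HomTensor

section Embedding

variable {R A P N Q : Type*} [CommRing R] [Ring A] [Algebra R A] [AddCommGroup P] [Module A P]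
  [Module.FinitePresentation A P] [AddCommGroup N] [Module A N] [Module R N] [IsScalarTower R A N]
  [AddCommGroup Q] [Module R Q] [Module.Flat R Q]

theorem exists_injective_pi_of_injective_tensor (φ : P →ₗ[A] N ⊗[R] Q)
    (hφ : Function.Injective φ) :
    ∃ (n : ℕ) (ψ : P →ₗ[A] Fin n → N), Function.Injective ψ := by
  obtain ⟨z, rfl⟩ := homTensorToHomTensor_surjective R φ
  obtain ⟨n, f, q, rfl⟩ := TensorProduct.exists_sum_tmul_eq z
  refine ⟨n, LinearMap.pi f, fun x y hxy ↦ hφ ?_⟩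
  have f_eq (i) : f i x = f i y := congrFun hxy i
  simp [f_eq]

theorem IsLeftHereditary.projective_of_injective_tensor (hA : IsLeftHereditary A)
    (φ : P →ₗ[A] A ⊗[R] Q) (hφ : Function.Injective φ) : Module.Projective A P :=
  have ⟨_, ψ, hψ⟩ := exists_injective_pi_of_injective_tensor φ hφ
  hA.projective_of_injective ψ hψ

end Embedding

section Descent

open TensorProduct

variable {R A S : Type*} [CommRing R] [Ring A] [Algebra R A] [CommRing S] [Algebra R S]

theorem rTensor_subtype_rTensor_toSpanSingleton (I : Submodule A A) (y : I) (b : A ⊗[R] S) :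
    (I.subtype.restrictScalars R).rTensor S
      (AlgebraTensorModule.rTensor R S (LinearMap.toSpanSingleton A I y) b) =
    b * (y : A) ⊗ₜ 1 := by
  induction b with
  | zero => simp
  | add b c hb hc => simp only [map_add, hb, hc, add_mul]
  | tmul a s => simp

variable [Module.FaithfullyFlat R S]

theorem mem_range_of_tmul_one_mem_range_rTensor {V W : Type*} [AddCommGroup V] [AddCommGroup W]
    [Module R V] [Module R W] {f : V →ₗ[R] W} {w : W}
    (hw : w ⊗ₜ[R] (1 : S) ∈ (f.rTensor S).range) : w ∈ f.range := by
  rw [← Submodule.Quotient.mk_eq_zero, ← Submodule.mkQ_apply]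
  apply Module.FaithfullyFlat.tensorProduct_mk_injective (A := R) (B := S)
  apply (TensorProduct.comm R S _).injective
  obtain ⟨v, hv⟩ := hw
  have := congrArg (f.range.mkQ.rTensor S) hv
  rw [← LinearMap.comp_apply, ← LinearMap.rTensor_comp, f.range_mkQ_comp] at this
  simpa using this.symm

theorem projective_of_sum_rTensor_toSpanSingleton {M ι : Type*} [AddCommGroup M] [Module A M]
    [Module R M] [IsScalarTower R A M] [Module.FinitePresentation A M] [Fintype ι] (y : ι → M)
    (φ : ι → M →ₗ[A] A ⊗[R] S)
    (hφ : ∀ m, ∑ i, AlgebraTensorModule.rTensor R S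
      (LinearMap.toSpanSingleton A M (y i)) (φ i m) = m ⊗ₜ 1) :
    Module.Projective A M := by
  classical
  choose z hz using fun i ↦ homTensorToHomTensor_surjective R (φ i)
  let combination : (ι → M →ₗ[A] A) →ₗ[R] M →ₗ[A] M :=
    LinearMap.lsum R _ R fun i ↦ LinearMap.compRight R (LinearMap.toSpanSingleton A M (y i))
  have combination_single (i : ι) : combination ∘ₗ LinearMap.single R _ i =
      LinearMap.compRight R (LinearMap.toSpanSingleton A M (y i)) :=
    LinearMap.ext fun f ↦ LinearMap.lsum_piSingle ..
  suffices LinearMap.id ∈ combination.range by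
    obtain ⟨f, hf⟩ := this
    refine projective_of_sum_smul_eq y f fun m ↦ ?_
    simpa [combination] using LinearMap.congr_fun hf m
  apply mem_range_of_tmul_one_mem_range_rTensor (S := S)
  refine ⟨∑ i, (LinearMap.single R _ i).rTensor S (z i), homTensorToHomTensor_injective R ?_⟩
  ext m
  simp_rw [map_sum, ← LinearMap.rTensor_comp_apply, combination_single,
    homTensorToHomTensor_rTensor_compRight, hz]
  simpa using hφ m

theorem IsLeftHereditary.of_tensorProduct [IsNoetherianRing A]
    (h : IsLeftHereditary (A ⊗[R] S)) : IsLeftHereditary A := by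
  intro I
  have := Module.finitePresentation_of_finite A I
  obtain ⟨n, y, hy⟩ := Module.Finite.exists_fin (R := A) (M := I)
  let tmulOne : I →ₗ[A] A ⊗[R] S :=
    (AlgebraTensorModule.mk R A A S).flip 1 ∘ₗ I.subtype
  let J := Submodule.span (A ⊗[R] S) (Set.range (tmulOne ∘ y))
  have tmulOne_mem (x : I) : tmulOne x ∈ J.restrictScalars A := by
    suffices ⊤ ≤ (J.restrictScalars A).comap tmulOne from this trivial
    rw [← hy, Submodule.span_le]
    rintro _ ⟨i, rfl⟩
    exact Submodule.subset_span ⟨i, rfl⟩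
  have : Module.Projective (A ⊗[R] S) J := h J
  obtain ⟨g, hg⟩ := exists_sum_smul_eq_of_projective (A := A ⊗[R] S) (M := J)
    (fun i ↦ ⟨tmulOne (y i), tmulOne_mem (y i)⟩)
    ((Submodule.span_range_subtype_eq_top_iff ..).2 rfl)
  refine projective_of_sum_rTensor_toSpanSingleton (R := R) (S := S) y (fun i ↦
    (g i).restrictScalars A ∘ₗ tmulOne.codRestrict (J.restrictScalars A) tmulOne_mem) fun m ↦ ?_
  apply Module.Flat.rTensor_preserves_injective_linearMap (I.subtype.restrictScalars R)
    Subtype.val_injective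
  simp_rw [map_sum, rTensor_subtype_rTensor_toSpanSingleton]
  have hgm := congrArg Subtype.val (hg ⟨_, tmulOne_mem m⟩)
  rwa [AddSubmonoidClass.coe_finsetSum] at hgm

end Descent

section Separability

open TensorProduct

variable {R A S M : Type*} [CommRing R] [Ring A] [Algebra R A] [CommRing S] [Algebra R S]
  [AddCommGroup M] [Module R M] [Module S M] [IsScalarTower R S M]

variable (R S M) in
/-- The multiplication map `M ⊗ S → M`, `m ⊗ s ↦ s • m`. -/
noncomputable def actionMap : M ⊗[R] S →ₗ[R] M :=
  lift (Algebra.lsmul R R M).toLinearMap.flip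

@[simp]
theorem actionMap_tmul (m : M) (s : S) : actionMap R S M (m ⊗ₜ s) = s • m := rfl

variable [Module A M] [IsScalarTower R A M] [SMulCommClass S A M]

variable (R A S M) in
/-- The map `m ↦ ∑ᵢ sᵢ • m ⊗ tᵢ` attached to an element `∑ᵢ sᵢ ⊗ tᵢ` of `S ⊗ S`. -/
noncomputable def smulTensor : S ⊗[R] S →ₗ[R] M →ₗ[A] M ⊗[R] S :=
  homTensorToHomTensor R A M M S ∘ₗ (Algebra.lsmul R A M).toLinearMap.rTensor S

@[simp]
theorem smulTensor_tmul_apply (s t : S) (m : M) :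
    smulTensor R A S M (s ⊗ₜ t) m = (s • m) ⊗ₜ t := rfl

theorem smulTensor_tmul_one_mul (s : S) (z : S ⊗[R] S) (m : M) :
    smulTensor R A S M (s ⊗ₜ 1 * z) m = smulTensor R A S M z (s • m) := by
  induction z with
  | zero => simp
  | add x y hx hy => simp only [mul_add, map_add, LinearMap.add_apply, hx, hy]
  | tmul t u => simp [mul_smul, smul_comm s t m]

theorem smulTensor_one_tmul_mul (s : S) (z : S ⊗[R] S) (m : M) :
    smulTensor R A S M (1 ⊗ₜ s * z) m =
      (LinearMap.mulLeft R s).lTensor M (smulTensor R A S M z m) := by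
  induction z with
  | zero => simp
  | add x y hx hy => simp only [mul_add, map_add, LinearMap.add_apply, hx, hy]
  | tmul t u => simp

theorem actionMap_smulTensor (z : S ⊗[R] S) (m : M) :
    actionMap R S M (smulTensor R A S M z m) =
      Algebra.TensorProduct.lmul' R (S := S) z • m := by
  induction z with
  | zero => simp
  | add x y hx hy => simp only [map_add, LinearMap.add_apply, hx, hy, add_smul]
  | tmul s t => simp [mul_smul, smul_comm s t m]

variable [Algebra.FormallyUnramified R S] [Algebra.EssFiniteType R S]

variable (R A S M) in
/-- The `S`-linear section `m ↦ ∑ᵢ sᵢ • m ⊗ tᵢ` of the multiplication map `M ⊗ S → M` attached to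
the separability element `∑ᵢ sᵢ ⊗ tᵢ` of `S` over `R`. Here `S` acts on the factor `S` of
`M ⊗ S`. -/
noncomputable def separabilitySection : M →ₗ[A] M ⊗[R] S :=
  smulTensor R A S M (Algebra.FormallyUnramified.elem R S)

theorem actionMap_separabilitySection (m : M) :
    actionMap R S M (separabilitySection R A S M m) = m := by
  rw [separabilitySection, actionMap_smulTensor, Algebra.FormallyUnramified.lmul_elem, one_smul]

theorem separabilitySection_smul (s : S) (m : M) :
    separabilitySection R A S M (s • m) =
      (LinearMap.mulLeft R s).lTensor M (separabilitySection R A S M m) := by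
  rw [separabilitySection, ← smulTensor_one_tmul_mul, ← smulTensor_tmul_one_mul,
    Algebra.FormallyUnramified.one_tmul_mul_elem]

end Separability

section Ascent

open TensorProduct

attribute [local instance] Algebra.TensorProduct.rightAlgebra

variable {R A S M N : Type*} [CommRing R] [Ring A] [Algebra R A] [CommRing S] [Algebra R S]
  [AddCommGroup M] [Module A M] [Module S M] [Module (A ⊗[R] S) M] [IsScalarTower A (A ⊗[R] S) M]
  [IsScalarTower S (A ⊗[R] S) M] [AddCommGroup N] [Module A N] [Module S N] [Module (A ⊗[R] S) N]
  [IsScalarTower A (A ⊗[R] S) N] [IsScalarTower S (A ⊗[R] S) N]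

theorem lTensor_mulLeft_eq_smul (s : S) (b : A ⊗[R] S) :
    (LinearMap.mulLeft R s).lTensor A b = s • b := by
  rw [Algebra.smul_def, Algebra.TensorProduct.right_algebraMap_apply]
  induction b with
  | zero => simp
  | add b c hb hc => simp only [map_add, mul_add, hb, hc]
  | tmul a t => simp

theorem tmul_smul_eq_smul_smul (a : A) (s : S) (m : M) : (a ⊗ₜ[R] s) • m = a • s • m := by
  rw [← one_smul (A ⊗[R] S) m, ← smul_assoc s, ← smul_assoc a, one_smul, Algebra.smul_def s,
    Algebra.TensorProduct.right_algebraMap_apply, mul_one, smul_tmul', smul_eq_mul, mul_one]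

theorem map_smul_of_map_right_smul (f : M →ₗ[A] N) (hf : ∀ (s : S) m, f (s • m) = s • f m)
    (b : A ⊗[R] S) (m : M) : f (b • m) = b • f m := by
  induction b with
  | zero => simp
  | add b c hb hc => simp only [add_smul, map_add, hb, hc]
  | tmul a s => simp only [tmul_smul_eq_smul_smul, map_smul, hf]

variable [Module R M] [IsScalarTower R A M] [IsScalarTower R S M] [SMulCommClass S A M]

theorem exists_fg_separabilitySection_mem_range [Algebra.FormallyUnramified R S]
    [Algebra.EssFiniteType R S] [Module.Finite (A ⊗[R] S) M] :
    ∃ M₀ : Submodule A M, M₀.FG ∧ ∀ m, separabilitySection R A S M m ∈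
      (AlgebraTensorModule.rTensor R S M₀.subtype).range := by
  obtain ⟨X, hX⟩ := Module.Finite.fg_top (R := A ⊗[R] S) (M := M)
  obtain ⟨n, s, t, hst⟩ := exists_sum_tmul_eq (Algebra.FormallyUnramified.elem R S)
  let Y : Set M := Set.image2 (fun x i ↦ s i • x) X Set.univ
  have Y_finite : Y.Finite := X.finite_toSet.image2 _ Set.finite_univ
  refine ⟨Submodule.span A Y, Submodule.fg_span Y_finite, fun m ↦ ?_⟩
  have hm : m ∈ Submodule.span (A ⊗[R] S) (X : Set M) := hX ▸ trivial
  induction hm using Submodule.span_induction with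
  | mem x hx =>
    rw [separabilitySection, hst, map_sum, LinearMap.sum_apply]
    have smul_mem_Y (i) : s i • x ∈ Y := Set.mem_image2_of_mem hx trivial
    exact Submodule.sum_mem _ fun i _ ↦
      ⟨⟨s i • x, Submodule.subset_span (smul_mem_Y i)⟩ ⊗ₜ t i, rfl⟩
  | zero => simp
  | add x y _ _ hx hy => rw [map_add]; exact Submodule.add_mem _ hx hy
  | smul b x _ hx =>
    induction b with
    | zero => simp
    | add b c hb hc => rw [add_smul, map_add]; exact Submodule.add_mem _ hb hc
    | tmul a s =>
      obtain ⟨w, hw⟩ := hx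
      rw [tmul_smul_eq_smul_smul, map_smul, separabilitySection_smul, ← hw]
      exact Submodule.smul_mem _ _ ⟨(LinearMap.mulLeft R s).lTensor _ w, rTensor_lTensor_comm ..⟩

theorem sum_rTensor_smul_eq_actionMap {ι : Type*} [Fintype ι] {M₀ : Submodule A M}
    {y : ι → M₀} (f : ι → M₀ →ₗ[A] A) (hfy : ∀ x, ∑ i, f i x • y i = x) (w : M₀ ⊗[R] S) :
    ∑ i, AlgebraTensorModule.rTensor R S (f i) w • (y i : M) =
      actionMap R S M (AlgebraTensorModule.rTensor R S M₀.subtype w) := by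
  induction w with
  | zero => simp
  | add v w hv hw => simp only [map_add, add_smul, Finset.sum_add_distrib, hv, hw]
  | tmul x t =>
    have hx : ∑ i, f i x • (y i : M) = x := by simpa using congrArg Subtype.val (hfy x)
    simp only [AlgebraTensorModule.rTensor_tmul, tmul_smul_eq_smul_smul, Submodule.subtype_apply,
      actionMap_tmul, ← hx, Finset.smul_sum, smul_comm t]

theorem projective_of_separabilitySection_mem_range [Algebra.FormallyUnramified R S]
    [Algebra.EssFiniteType R S] [Module.Flat R S] (M₀ : Submodule A M) [Module.Finite A M₀]
    [Module.Projective A M₀] (hM₀ : ∀ m, separabilitySection R A S M m ∈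
      (AlgebraTensorModule.rTensor R S M₀.subtype).range) :
    Module.Projective (A ⊗[R] S) M := by
  obtain ⟨n, y, hy⟩ := Module.Finite.exists_fin (R := A) (M := M₀)
  obtain ⟨f, hf⟩ := exists_sum_smul_eq_of_projective y hy
  let incl := AlgebraTensorModule.rTensor R S M₀.subtype
  have incl_injective : Function.Injective incl :=
    Module.Flat.rTensor_preserves_injective_linearMap (M₀.subtype.restrictScalars R)
      Subtype.val_injective
  let lift : M →ₗ[A] M₀ ⊗[R] S := (LinearEquiv.ofInjective incl incl_injective).symm ∘ₗ
    (separabilitySection R A S M).codRestrict incl.range hM₀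
  have incl_lift (m : M) : incl (lift m) = separabilitySection R A S M m :=
    congrArg Subtype.val ((LinearEquiv.ofInjective incl incl_injective).apply_symm_apply _)
  have lift_smul (s : S) (m : M) : lift (s • m) = (LinearMap.mulLeft R s).lTensor _ (lift m) :=
    incl_injective <| by
      simp only [incl, rTensor_lTensor_comm]
      rw [incl_lift, separabilitySection_smul, incl_lift]
  let F (i : Fin n) : M →ₗ[A] A ⊗[R] S := AlgebraTensorModule.rTensor R S (f i) ∘ₗ lift
  have F_smul (i : Fin n) (s : S) (m : M) : F i (s • m) = s • F i m := by
    simp only [F, LinearMap.comp_apply, lift_smul, rTensor_lTensor_comm, lTensor_mulLeft_eq_smul]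
  refine projective_of_sum_smul_eq (fun i ↦ (y i : M)) (fun i ↦
    { F i with map_smul' := map_smul_of_map_right_smul (F i) (F_smul i) }) fun m ↦ ?_
  refine (sum_rTensor_smul_eq_actionMap f hf (lift m)).trans ?_
  exact (congrArg _ (incl_lift m)).trans (actionMap_separabilitySection m)

theorem IsLeftHereditary.tensorProduct [Algebra.FormallyUnramified R S]
    [Algebra.EssFiniteType R S] [Module.Flat R S] [IsNoetherianRing A] [IsNoetherianRing (A ⊗[R] S)]
    (hA : IsLeftHereditary A) : IsLeftHereditary (A ⊗[R] S) := by
  intro J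
  have : SMulCommClass S A J := ⟨fun s a x ↦ Subtype.ext (smul_comm s a (x : A ⊗[R] S))⟩
  obtain ⟨J₀, J₀_fg, hJ₀⟩ :=
    exists_fg_separabilitySection_mem_range (R := R) (A := A) (S := S) (M := J)
  have : Module.Finite A J₀ := .of_fg J₀_fg
  have := Module.finitePresentation_of_finite A J₀
  have : Module.Projective A J₀ := hA.projective_of_injective_tensor (R := R) (Q := S)
    (J.subtype.restrictScalars A ∘ₗ J₀.subtype)
    (Subtype.val_injective.comp Subtype.val_injective)
  exact projective_of_separabilitySection_mem_range J₀ hJ₀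

end Ascent

theorem hereditary_of_etale_iso_hereditary_general {R A A' S : Type*} [CommRing R]
    [IsNoetherianRing R] [Ring A] [Algebra R A] [Module.Finite R A] [Ring A'] [Algebra R A']
    [Module.Finite R A'] [CommRing S] [Algebra R S] [Algebra.FormallyUnramified R S]
    [Algebra.EssFiniteType R S] [Module.FaithfullyFlat R S] (e : S ⊗[R] A ≃+* S ⊗[R] A')
    (hA : IsLeftHereditary A) : IsLeftHereditary A' := by
  let e' : A ⊗[R] S ≃+* A' ⊗[R] S := (Algebra.TensorProduct.comm R A S).toRingEquiv.trans <|
    e.trans (Algebra.TensorProduct.comm R S A').toRingEquiv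
  have : IsNoetherianRing A := .of_finite R A
  have : IsNoetherianRing A' := .of_finite R A'
  have : IsNoetherianRing S := Algebra.EssFiniteType.isNoetherianRing R S
  have : IsNoetherianRing (S ⊗[R] A) := .of_finite S (S ⊗[R] A)
  have : IsNoetherianRing (A ⊗[R] S) :=
    isNoetherianRing_of_ringEquiv _ (Algebra.TensorProduct.comm R S A).toRingEquiv
  exact .of_tensorProduct (R := R) (S := S) (hA.tensorProduct.of_ringEquiv e')

/-- Let `R` be a Dedekind domain, let `A` and `A'` be `R`-orders
(`R`-algebras, finitely generated and torsion-free as `R`-modules), and let `S` be a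
faithfully flat étale `R`-algebra such that `S ⊗[R] A ≅ S ⊗[R] A'` as `S`-algebras.
If `A` is hereditary (every left ideal is projective), then `A'` is hereditary. -/
theorem hereditary_of_etale_iso_hereditary
    (R : Type u) [CommRing R] [IsDomain R] [IsDedekindDomain R]
    (A A' : Type*) [Ring A] [Algebra R A] [Module.Finite R A] [NoZeroSMulDivisors R A]
    [Ring A'] [Algebra R A'] [Module.Finite R A'] [NoZeroSMulDivisors R A']
    (S : Type u) [CommRing S] [Algebra R S] [Algebra.Etale R S] [Module.FaithfullyFlat R S]
    (hS : Nonempty ((S ⊗[R] A) ≃ₐ[S] (S ⊗[R] A')))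
    (hA : ∀ I : Submodule A A, Module.Projective A I) :
    ∀ I : Submodule A' A', Module.Projective A' I :=
  hS.elim fun e ↦ hereditary_of_etale_iso_hereditary_general e.toRingEquiv hA
end

section
/- Let R be a Dedekind domain whose ideal class group is 2-torsion, i.e., every element of the class group has order dividing 2. Let I and I' be nonzero ideals of R whose classes in the ideal class group are distinct. Then the endomorphism algebras End_R(R ⊕ I) and End_R(R ⊕ I') are not isomorphic as R-algebras. -/
/-!
An isomorphism `φ : End(N × P) ≃ End(N' × P')` carries the projections onto `N` and `P` to
complementary idempotents, with images `J` and `K` say, and it matches the Peirce components. Hence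
`End J ≃ End N ≃ R` and `End K ≃ End P ≃ R`, which forces `J` and `K` to be invertible, and
`Hom(N, P) ≃ Hom(J, K)`, which gives `[P] / [N] = [K] / [J]` in the Picard group. Comparing the
determinants of `J ⊕ K` and `N' × P'` gives `[J] [K] = [N'] [P']`. Together,
`[N] [P] = ([N] / [J]) ^ 2 [N'] [P']`, so the two determinants differ by a square.
-/

open CommRing (Pic)
open scoped TensorProduct nonZeroDivisors

/-- `N` as a retract (direct summand) of `M`: an inclusion together with a retraction onto it. -/
structure LinearRetract (R N M : Type*) [Semiring R] [AddCommMonoid N] [AddCommMonoid M]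
    [Module R N] [Module R M] where
  incl : N →ₗ[R] M
  retr : M →ₗ[R] N
  retr_comp_incl : retr ∘ₗ incl = .id

namespace LinearRetract

section Semiring

variable {R M N P : Type*} [Semiring R] [AddCommMonoid M] [AddCommMonoid N] [AddCommMonoid P]
  [Module R M] [Module R N] [Module R P]

/-- The idempotent endomorphism of `M` projecting onto the retract. -/
def idem (a : LinearRetract R N M) : Module.End R M := a.incl ∘ₗ a.retr

@[simp]
theorem retr_incl (a : LinearRetract R N M) (x : N) : a.retr (a.incl x) = x :=
  LinearMap.congr_fun a.retr_comp_incl x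

theorem idem_apply (a : LinearRetract R N M) (x : M) : a.idem x = a.incl (a.retr x) := rfl

theorem isIdempotentElem_idem (a : LinearRetract R N M) : IsIdempotentElem a.idem :=
  LinearMap.ext fun x => congrArg a.incl (a.retr_incl (a.retr x))

/-- The first factor as a retract of a product. -/
def fst : LinearRetract R N (N × P) := ⟨.inl R N P, .fst R N P, LinearMap.fst_comp_inl ..⟩

/-- The second factor as a retract of a product. -/
def snd : LinearRetract R P (N × P) := ⟨.inr R N P, .snd R N P, LinearMap.snd_comp_inr ..⟩

theorem idem_fst_add_idem_snd :
    (fst : LinearRetract R N (N × P)).idem + (snd : LinearRetract R P (N × P)).idem = 1 := by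
  ext <;> simp [idem_apply, fst, snd]

/-- The range of an idempotent endomorphism as a retract. -/
def ofIsIdempotentElem {p : Module.End R M} (hp : IsIdempotentElem p) :
    LinearRetract R (LinearMap.range p) M where
  incl := (LinearMap.range p).subtype
  retr := p.rangeRestrict
  retr_comp_incl := by
    ext ⟨_, x, rfl⟩
    exact LinearMap.congr_fun hp x

theorem projective (a : LinearRetract R N M) [Module.Projective R M] : Module.Projective R N :=
  .of_split a.incl a.retr a.retr_comp_incl

theorem finite (a : LinearRetract R N M) [Module.Finite R M] : Module.Finite R N :=
  .of_surjective a.retr fun x => ⟨a.incl x, a.retr_incl x⟩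

theorem surjective_coprod_incl (a : LinearRetract R N M) (b : LinearRetract R P M)
    (hab : a.idem + b.idem = 1) : Function.Surjective (a.incl.coprod b.incl) :=
  fun x => ⟨(a.retr x, b.retr x), LinearMap.congr_fun hab x⟩

end Semiring

section CommSemiring

variable {R N P M N' P' M' : Type*} [CommSemiring R]
  [AddCommMonoid N] [AddCommMonoid P] [AddCommMonoid M]
  [AddCommMonoid N'] [AddCommMonoid P'] [AddCommMonoid M']
  [Module R N] [Module R P] [Module R M] [Module R N'] [Module R P'] [Module R M']

/-- Extend a map between retracts of `M` to an endomorphism of `M`, transport it along `φ`, and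
compress the result to a map between retracts of `M'`. -/
def homMap (φ : Module.End R M →ₗ[R] Module.End R M')
    (a : LinearRetract R N M) (b : LinearRetract R P M)
    (a' : LinearRetract R N' M') (b' : LinearRetract R P' M') :
    (N →ₗ[R] P) →ₗ[R] (N' →ₗ[R] P') where
  toFun g := b'.retr ∘ₗ φ (b.incl ∘ₗ g ∘ₗ a.retr) ∘ₗ a'.incl
  map_add' g h := by
    simp only [LinearMap.add_comp, LinearMap.comp_add, map_add]
  map_smul' r g := by
    simp only [LinearMap.smul_comp, LinearMap.comp_smul, map_smul, RingHom.id_apply]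

theorem homMap_symm_homMap (φ : Module.End R M ≃ₐ[R] Module.End R M')
    {a : LinearRetract R N M} {b : LinearRetract R P M}
    {a' : LinearRetract R N' M'} {b' : LinearRetract R P' M'}
    (ha : φ a.idem = a'.idem) (hb : φ b.idem = b'.idem) (g : N →ₗ[R] P) :
    homMap φ.symm.toLinearMap a' b' a b (homMap φ.toLinearMap a b a' b' g) = g := by
  set f : Module.End R M := b.incl ∘ₗ g ∘ₗ a.retr with hf
  have extend_compress :
      b'.incl ∘ₗ homMap φ.toLinearMap a b a' b' g ∘ₗ a'.retr = φ (b.idem * f * a.idem) := by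
    rw [map_mul, map_mul, ha, hb]
    rfl
  ext x
  change b.retr (φ.symm (b'.incl ∘ₗ homMap φ.toLinearMap a b a' b' g ∘ₗ a'.retr) (a.incl x)) = g x
  rw [extend_compress, φ.symm_apply_apply]
  simp [hf, idem_apply]

/-- An isomorphism of endomorphism algebras matching the idempotents of two pairs of retracts
identifies the modules of maps between them (the Peirce components). -/
def homEquiv (φ : Module.End R M ≃ₐ[R] Module.End R M')
    {a : LinearRetract R N M} {b : LinearRetract R P M}
    {a' : LinearRetract R N' M'} {b' : LinearRetract R P' M'}
    (ha : φ a.idem = a'.idem) (hb : φ b.idem = b'.idem) :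
    (N →ₗ[R] P) ≃ₗ[R] (N' →ₗ[R] P') where
  __ := homMap φ.toLinearMap a b a' b'
  invFun := homMap φ.symm.toLinearMap a' b' a b
  left_inv := homMap_symm_homMap φ ha hb
  right_inv := homMap_symm_homMap φ.symm (φ.symm_apply_eq.mpr ha.symm) (φ.symm_apply_eq.mpr hb.symm)

end CommSemiring

end LinearRetract

section Invertible

variable {R J K N P : Type*} [CommSemiring R]
  [AddCommMonoid J] [AddCommMonoid K] [AddCommMonoid N] [AddCommMonoid P]
  [Module R J] [Module R K] [Module R N] [Module R P]

theorem invertible_of_linearEquiv_end [Module.Finite R J] [Module.Projective R J]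
    (e : Module.End R J ≃ₗ[R] R) : Module.Invertible R J :=
  .right (dualTensorHomEquiv R J J ≪≫ₗ e)

theorem nonempty_end_linearEquiv_of_invertible [Module.Invertible R N] :
    Nonempty (Module.End R N ≃ₗ[R] R) :=
  ⟨.symm <| .ofBijective (Algebra.linearMap R (Module.End R N))
    (Module.Invertible.toModuleEnd_bijective R N)⟩

theorem LinearRetract.invertible {M M' : Type*} [AddCommMonoid M] [AddCommMonoid M'] [Module R M]
    [Module R M'] [Module.Finite R M'] [Module.Projective R M'] [Module.Invertible R N]
    {a : LinearRetract R N M} {b : LinearRetract R J M'}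
    (φ : Module.End R M ≃ₐ[R] Module.End R M') (h : φ a.idem = b.idem) :
    Module.Invertible R J := by
  have := b.finite
  have := b.projective
  obtain ⟨e⟩ := nonempty_end_linearEquiv_of_invertible (R := R) (N := N)
  exact invertible_of_linearEquiv_end ((homEquiv φ h h).symm ≪≫ₗ e)

theorem picMk_mul_picMk_of_homEquiv [Module.Invertible R N] [Module.Invertible R P]
    [Module.Invertible R J] [Module.Invertible R K] (e : (N →ₗ[R] P) ≃ₗ[R] (J →ₗ[R] K)) :
    Pic.mk R J * Pic.mk R P = Pic.mk R N * Pic.mk R K := by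
  have hdual : (Pic.mk R N)⁻¹ * Pic.mk R P = (Pic.mk R J)⁻¹ * Pic.mk R K := by
    simp only [← Pic.mk_dual, ← Pic.mk_tensor]
    exact Pic.mk_eq_mk_iff.mpr
      ⟨dualTensorHomEquiv R N P ≪≫ₗ e ≪≫ₗ (dualTensorHomEquiv R J K).symm⟩
  rw [inv_mul_eq_iff_eq_mul.mp hdual, mul_left_comm, mul_inv_cancel_left]

end Invertible

section Determinant

variable {R J K N P : Type*} [CommRing R]
  [AddCommGroup J] [AddCommGroup K] [AddCommGroup N] [AddCommGroup P]
  [Module R J] [Module R K] [Module R N] [Module R P]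

theorem dual_smul_comm [Module.Invertible R J] (f : Module.Dual R J) (x y : J) :
    f x • y = f y • x := by
  simpa using congrArg ((TensorProduct.lid R J).toLinearMap ∘ₗ f.rTensor J)
    (Module.Invertible.tmul_comm (R := R) (m₁ := x) (m₂ := y))

theorem eq_zero_of_isAlt_of_invertible [Module.Invertible R J]
    {B : J →ₗ[R] J →ₗ[R] P} (hB : B.IsAlt) : B = 0 := by
  ext x y
  have dual_mem (f : Module.Dual R J) (z : J) : f z ∈ (Ideal.torsionOf R P (B x y)).radical := by
    refine ⟨2, (Ideal.mem_torsionOf_iff ..).mpr ?_⟩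
    calc f z ^ 2 • B x y = B (f z • x) (f z • y) := by simp [pow_two, mul_smul]
      _ = B (f x • z) (f y • z) := by rw [dual_smul_comm f z x, dual_smul_comm f z y]
      _ = 0 := by simp [hB z]
  have contract_mem (t : Module.Dual R J ⊗[R] J) :
      contractLeft R J t ∈ (Ideal.torsionOf R P (B x y)).radical := by
    induction t with
    | zero => simp
    | tmul f z => simpa using dual_mem f z
    | add s t hs ht => simpa using add_mem hs ht
  obtain ⟨t, ht⟩ := (Module.Invertible.linearEquiv R J).surjective 1
  have one_mem : (1 : R) ∈ Ideal.torsionOf R P (B x y) := by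
    rw [← Ideal.eq_top_iff_one, ← Ideal.radical_eq_top, Ideal.eq_top_iff_one, ← ht]
    exact contract_mem t
  simpa using one_mem

variable (R N P) in
/-- The determinant form on `N × P`, with values in `N ⊗ P`. -/
def detForm : (N × P) →ₗ[R] (N × P) →ₗ[R] N ⊗[R] P :=
  let D := (TensorProduct.mk R N P).compl₁₂ (.fst R N P) (.snd R N P)
  D - D.flip

theorem detForm_apply (x y : N × P) : detForm R N P x y = x.1 ⊗ₜ y.2 - y.1 ⊗ₜ x.2 := rfl

theorem detForm_isAlt : (detForm R N P).IsAlt := fun x => by simp [detForm_apply]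

variable [Module.Invertible R J] [Module.Invertible R K]

theorem detForm_comp_add {f : J →ₗ[R] N × P} {g : K →ₗ[R] N × P} (x x' : J) (y y' : K) :
    detForm R N P (f x + g y) (f x' + g y') =
      detForm R N P (f x) (g y') - detForm R N P (f x') (g y) := by
  have hf : detForm R N P (f x) (f x') = 0 := LinearMap.congr_fun₂
    (eq_zero_of_isAlt_of_invertible (B := (detForm R N P).compl₁₂ f f)
      fun _ => detForm_isAlt _) x x'
  have hg : detForm R N P (g y) (g y') = 0 := LinearMap.congr_fun₂
    (eq_zero_of_isAlt_of_invertible (B := (detForm R N P).compl₁₂ g g)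
      fun _ => detForm_isAlt _) y y'
  simp only [map_add, LinearMap.add_apply, hf, hg, ← detForm_isAlt.neg (g y)]
  abel

theorem surjective_lift_detForm {f : J →ₗ[R] N × P} {g : K →ₗ[R] N × P}
    (hfg : Function.Surjective (f.coprod g)) :
    Function.Surjective (TensorProduct.lift ((detForm R N P).compl₁₂ f g)) := by
  rw [← LinearMap.range_eq_top, eq_top_iff, ← TensorProduct.span_tmul_eq_top, Submodule.span_le]
  rintro _ ⟨n, p, rfl⟩
  obtain ⟨⟨x, y⟩, hxy⟩ := hfg (n, 0)
  obtain ⟨⟨x', y'⟩, hxy'⟩ := hfg (0, p)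
  refine ⟨x ⊗ₜ y' - x' ⊗ₜ y, ?_⟩
  calc _ = detForm R N P (f x) (g y') - detForm R N P (f x') (g y) := by simp
    _ = detForm R N P (f x + g y) (f x' + g y') := (detForm_comp_add ..).symm
    _ = detForm R N P (n, 0) (0, p) := congrArg₂ (detForm R N P · ·) hxy hxy'
    _ = n ⊗ₜ p := by simp [detForm_apply]

theorem picMk_mul_picMk_of_surjective_coprod [Module.Invertible R N] [Module.Invertible R P]
    {f : J →ₗ[R] N × P} {g : K →ₗ[R] N × P} (hfg : Function.Surjective (f.coprod g)) :
    Pic.mk R J * Pic.mk R K = Pic.mk R N * Pic.mk R P := by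
  rw [← Pic.mk_tensor, ← Pic.mk_tensor, Pic.mk_eq_mk_iff]
  exact ⟨.ofBijective _ (Module.Invertible.bijective_of_surjective (surjective_lift_detForm hfg))⟩

end Determinant

theorem mul_eq_div_sq_mul_of_mul_eq_mul {G : Type*} [CommGroup G] {a b c d e : G}
    (h : c * b = a * d) (hcd : c * d = e) : a * b = (a / c) ^ 2 * e := by
  calc a * b = a / c * (c * b) := by rw [← mul_assoc, div_mul_cancel]
    _ = a / c * (a / c * (c * d)) := by rw [h, ← mul_assoc (a / c) c, div_mul_cancel]
    _ = (a / c) ^ 2 * e := by rw [hcd, pow_two, mul_assoc]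

theorem end_not_iso_of_distinct_classes_general
    {R N P N' P' : Type*} [CommRing R] [AddCommGroup N] [AddCommGroup P] [AddCommGroup N']
    [AddCommGroup P'] [Module R N] [Module R P] [Module R N'] [Module R P']
    [Module.Invertible R N] [Module.Invertible R P] [Module.Invertible R N']
    [Module.Invertible R P']
    (hne : ∀ c : Pic R, Pic.mk R N * Pic.mk R P ≠ c ^ 2 * (Pic.mk R N' * Pic.mk R P')) :
    IsEmpty (Module.End R (N × P) ≃ₐ[R] Module.End R (N' × P')) := by
  refine ⟨fun φ => ?_⟩
  let a : LinearRetract R N (N × P) := .fst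
  let b : LinearRetract R P (N × P) := .snd
  let a' := LinearRetract.ofIsIdempotentElem (a.isIdempotentElem_idem.map φ)
  let b' := LinearRetract.ofIsIdempotentElem (b.isIdempotentElem_idem.map φ)
  have ha : φ a.idem = a'.idem := rfl
  have hb : φ b.idem = b'.idem := rfl
  have := LinearRetract.invertible φ ha
  have := LinearRetract.invertible φ hb
  have hhom := picMk_mul_picMk_of_homEquiv (LinearRetract.homEquiv φ ha hb)
  have hab' : a'.idem + b'.idem = 1 := by
    rw [← ha, ← hb, ← map_add, LinearRetract.idem_fst_add_idem_snd, map_one]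
  have hdet := picMk_mul_picMk_of_surjective_coprod (a'.surjective_coprod_incl b' hab')
  exact hne _ (mul_eq_div_sq_mul_of_mul_eq_mul hhom hdet)

section Dedekind

variable {R : Type*} [CommRing R] [IsDedekindDomain R]

/-- A nonzero ideal of a Dedekind domain as an invertible `R`-submodule of the fraction field. -/
noncomputable def unitOfIdeal (I : (Ideal R)⁰) : (Submodule R (FractionRing R))ˣ :=
  FractionalIdeal.unitsMulEquivSubmodule (FractionalIdeal.mk0 (FractionRing R) I)

/-- A nonzero ideal is isomorphic, as an `R`-module, to its image in the fraction field. -/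
noncomputable def unitOfIdealEquiv (I : (Ideal R)⁰) :
    (I : Ideal R) ≃ₗ[R] (unitOfIdeal I : Submodule R (FractionRing R)) :=
  Submodule.equivMapOfInjective (Algebra.linearMap R (FractionRing R))
    (IsFractionRing.injective R (FractionRing R)) I

theorem invertible_of_mem_nonZeroDivisors (I : (Ideal R)⁰) : Module.Invertible R (I : Ideal R) :=
  .congr (unitOfIdealEquiv I).symm

theorem equivPic_mk0 (I : (Ideal R)⁰) [Module.Invertible R (I : Ideal R)] :
    ClassGroup.equivPic R (ClassGroup.mk0 I) = Pic.mk R (I : Ideal R) := by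
  trans Pic.mk R (unitOfIdeal I : Submodule R (FractionRing R))
  · rw [ClassGroup.mk0_eq_quotientMk]
    rfl
  · exact Pic.mk_eq_mk_iff.mpr ⟨(unitOfIdealEquiv I).symm⟩

theorem isEmpty_end_algEquiv_of_mk0_ne_sq_mul (I I' : (Ideal R)⁰)
    (hne : ∀ c : ClassGroup R, ClassGroup.mk0 I ≠ c ^ 2 * ClassGroup.mk0 I') :
    IsEmpty (Module.End R (R × (I : Ideal R)) ≃ₐ[R] Module.End R (R × (I' : Ideal R))) := by
  have := invertible_of_mem_nonZeroDivisors I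
  have := invertible_of_mem_nonZeroDivisors I'
  refine end_not_iso_of_distinct_classes_general fun c hc => ?_
  obtain ⟨c, rfl⟩ := (ClassGroup.equivPic R).surjective c
  refine hne c ((ClassGroup.equivPic R).injective ?_)
  rwa [map_mul, map_pow, equivPic_mk0, equivPic_mk0, ← one_mul (Pic.mk R (I : Ideal R)),
    ← one_mul (Pic.mk R (I' : Ideal R)), ← Pic.mk_self]

end Dedekind

/-- Let `R` be a Dedekind domain whose ideal class group is 2-torsion.
Let `I` and `I'` be nonzero ideals of `R` whose classes in the ideal class group are
distinct.  Then `End_R(R ⊕ I)` and `End_R(R ⊕ I')` are not isomorphic as `R`-algebras. -/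
theorem end_not_iso_of_distinct_classes
    (R : Type*) [CommRing R] [IsDomain R] [IsDedekindDomain R]
    (htor : ∀ c : ClassGroup R, c ^ 2 = 1)
    (I I' : Ideal R) (hI : I ≠ 0) (hI' : I' ≠ 0)
    (hne : ClassGroup.mk0 ⟨I, mem_nonZeroDivisors_of_ne_zero hI⟩
        ≠ ClassGroup.mk0 ⟨I', mem_nonZeroDivisors_of_ne_zero hI'⟩) :
    IsEmpty ((Module.End R (R × ↥I)) ≃ₐ[R] (Module.End R (R × ↥I'))) :=
  isEmpty_end_algEquiv_of_mk0_ne_sq_mul ⟨I, mem_nonZeroDivisors_of_ne_zero hI⟩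
    ⟨I', mem_nonZeroDivisors_of_ne_zero hI'⟩ fun c => by rwa [htor, one_mul]
end
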